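/- arXiv:math/0601285 — 2 statements merged into one kernel-verified Lean document; each statement's English description precedes it below -/
import Mathlib

section
/- Let f : S² → ℝ be a smooth function with ∫_{S²} f dv_{g₀} = 0 and let g_t = (1+tf)²·g₀ be defined for |t| < a. If ∫_{γ(u)} f dl = 0 for every u ∈ S², then for every t with |t| < a, every great circle has g_t-length exactly 2π, and there exists a closed geodesic of g_t of length at most 2π; in particular sys(S², g_t) ≤ 2π for all |t| < a. -/
open scoped Manifold RealInnerProductSpace
open MeasureTheory Real

noncomputable section

/-- The ambient Euclidean space `ℝ³`. -/
abbrev E3 : Type := EuclideanSpace ℝ (Fin 3)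

instance : Fact (Module.finrank ℝ E3 = 2 + 1) := ⟨finrank_euclideanSpace_fin⟩

/-- The unit 2-sphere `S² ⊂ ℝ³`. -/
abbrev Sph : Type := Metric.sphere (0 : E3) 1

/-- A function on the sphere is smooth (as a map of smooth manifolds). -/
def SmoothSph (f : Sph → ℝ) : Prop := ContMDiff (𝓡 2) 𝓘(ℝ, ℝ) (⊤ : ℕ∞) f

/-- The round metric tensor `g₀` on `S²` (restriction of the ambient inner product). -/
def g0 : Sph → E3 → E3 → ℝ := fun _ u v => ⟪u, v⟫

/-- The conformal metric tensor `Φ · g₀` (length element `√Φ` times that of `g₀`). -/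
def confMetric (Φ : Sph → ℝ) : Sph → E3 → E3 → ℝ := fun x u v => Φ x * ⟪u, v⟫

/-- Velocity of a curve on the sphere, as a vector of the ambient `ℝ³`. -/
def cvel (c : ℝ → Sph) (t : ℝ) : E3 := deriv (fun s => (c s : E3)) t

/-- Speed of a curve at time `t` with respect to a metric tensor `g`. -/
def gspeed (g : Sph → E3 → E3 → ℝ) (c : ℝ → Sph) (t : ℝ) : ℝ :=
  Real.sqrt (g (c t) (cvel c t) (cvel c t))

/-- Length of the curve `c` over `[a, b]` with respect to `g`. -/
def glength (g : Sph → E3 → E3 → ℝ) (c : ℝ → Sph) (a b : ℝ) : ℝ :=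
  ∫ t in a..b, gspeed g c t

/-- A `C¹` curve on the sphere. -/
def IsC1Curve (c : ℝ → Sph) : Prop := ContDiff ℝ 1 (fun t => (c t : E3))

/-- The Riemannian distance associated with the metric tensor `g`: the infimum of
lengths of `C¹` curves joining the two points. -/
def gdist (g : Sph → E3 → E3 → ℝ) (x y : Sph) : ℝ :=
  sInf {L | ∃ c : ℝ → Sph, IsC1Curve c ∧ c 0 = x ∧ c 1 = y ∧ L = glength g c 0 1}

/-- A (complete, unit-speed) geodesic of `g`: a `C¹` curve with unit speed which is
locally distance-minimizing. -/
def IsGeodesic (g : Sph → E3 → E3 → ℝ) (c : ℝ → Sph) : Prop :=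
  IsC1Curve c ∧ (∀ t, gspeed g c t = 1) ∧
    ∀ t : ℝ, ∃ ε > 0, ∀ s₁ s₂ : ℝ, t - ε ≤ s₁ → s₁ ≤ s₂ → s₂ ≤ t + ε →
      gdist g (c s₁) (c s₂) = s₂ - s₁

/-- A closed geodesic of length `L` (not reduced to a point): a unit-speed geodesic,
periodic with period `L > 0`. -/
def IsClosedGeodesic (g : Sph → E3 → E3 → ℝ) (c : ℝ → Sph) (L : ℝ) : Prop :=
  0 < L ∧ Function.Periodic c L ∧ IsGeodesic g c

/-- The systole: the smallest length of a closed geodesic not reduced to a point. -/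
def systole (g : Sph → E3 → E3 → ℝ) : ℝ :=
  sInf {L | ∃ c : ℝ → Sph, IsClosedGeodesic g c L}

/-- Orthogonal projection of an ambient vector onto the tangent plane at `x ∈ S²`. -/
def tproj (x : Sph) (v : E3) : E3 := v - ⟪(x : E3), v⟫ • (x : E3)

/-- Auxiliary extension of `g` to all of `ℝ³`, equal to `g` on the tangent plane and to the
ambient inner product in the normal direction; its determinant computes the area density. -/
def ghat (g : Sph → E3 → E3 → ℝ) (x : Sph) (u v : E3) : ℝ :=
  g x (tproj x u) (tproj x v) + ⟪(x : E3), u⟫ * ⟪(x : E3), v⟫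

/-- The Riemannian area density of `g` with respect to the round metric:
`√det` of `g` on the tangent plane. -/
def areaDensity (g : Sph → E3 → E3 → ℝ) (x : Sph) : ℝ :=
  Real.sqrt (Matrix.det (Matrix.of fun i j : Fin 3 =>
    ghat g x (EuclideanSpace.single i 1) (EuclideanSpace.single j 1)))

/-- The Riemannian area of `(S², g)`, computed against the round area measure
(the 2-dimensional Hausdorff measure of the sphere). -/
def garea (g : Sph → E3 → E3 → ℝ) : ℝ :=
  ∫ x, areaDensity g x ∂(μH[2] : Measure Sph)

/-- The systolic area `𝔖(S², g) = Area(S², g) / sys(S², g)²`. -/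
def systolicArea (g : Sph → E3 → E3 → ℝ) : ℝ := garea g / (systole g) ^ 2

/-- `g` is a smooth Riemannian metric on `S²` (a smooth field of symmetric bilinear forms,
positive definite on tangent planes). -/
structure IsRiemannMetricS2 (g : Sph → E3 → E3 → ℝ) : Prop where
  symm : ∀ x u v, g x u v = g x v u
  add_left : ∀ x u v w, g x (u + v) w = g x u w + g x v w
  smul_left : ∀ (x : Sph) (r : ℝ) u v, g x (r • u) v = r * g x u v
  posdef : ∀ (x : Sph) (v : E3), ⟪(x : E3), v⟫ = 0 → v ≠ 0 → 0 < g x v v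
  smooth : ∀ u v : E3, ContMDiff (𝓡 2) 𝓘(ℝ, ℝ) (⊤ : ℕ∞) (fun x => g x u v)

/-- The circle `γ(u, s)`: intersection of `S²` with the plane orthogonal to `u` at distance `s`
from the origin (`s = 0` gives the great circle `γ(u)`). -/
def circleAt (u : Sph) (s : ℝ) : Set Sph := {x | ⟪(u : E3), (x : E3)⟫ = s}

/-- The great circle `γ(u)` orthogonal to `u`. -/
def greatCircle (u : Sph) : Set Sph := circleAt u 0

/-- The integral `∫_{γ(u)} h dl` of `h` along the great circle `γ(u)` with respect to
`g₀`-arc length (1-dimensional Hausdorff measure). -/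
def lineInt (h : Sph → ℝ) (u : Sph) : ℝ :=
  ∫ x in greatCircle u, h x ∂(μH[1] : Measure Sph)

/-- Length of the circle `γ(u, s)` with respect to the conformal metric `Φ · g₀`. -/
def circleLen (Φ : Sph → ℝ) (u : Sph) (s : ℝ) : ℝ :=
  ∫ x in circleAt u s, Real.sqrt (Φ x) ∂(μH[1] : Measure Sph)

/-- The antipodal map of `S²`. -/
def antip (x : Sph) : Sph :=
  ⟨-(x : E3), by
    rw [mem_sphere_zero_iff_norm, norm_neg, ← mem_sphere_zero_iff_norm]; exact x.2⟩

/-- A fundamental domain for the antipodal action on `S²` (an open hemisphere together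
with half of its boundary great circle): `ℝP²` is obtained by gluing. -/
def hemiDomain : Set Sph :=
  {x | 0 < (x : E3) 2 ∨ ((x : E3) 2 = 0 ∧ (0 < (x : E3) 1 ∨ ((x : E3) 1 = 0 ∧ 0 < (x : E3) 0)))}

/-- The area of `(ℝP², g̃)`, where `g̃` is induced by an antipodally invariant metric `g` on `S²`:
the area of a fundamental domain of the antipodal action. -/
def areaRP2 (g : Sph → E3 → E3 → ℝ) : ℝ :=
  ∫ x in hemiDomain, areaDensity g x ∂(μH[2] : Measure Sph)

/-- The systole of `(ℝP², g̃)`: the smallest length of a noncontractible closed curve of `ℝP²`,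
i.e. the infimum of `g`-lengths of curves of `S²` joining a point to its antipode
(such curves are exactly the lifts of noncontractible loops). -/
def sysRP2 (g : Sph → E3 → E3 → ℝ) : ℝ :=
  sInf {L | ∃ c : ℝ → Sph, IsC1Curve c ∧ c 1 = antip (c 0) ∧ L = glength g c 0 1}

/-- The systolic area of `(ℝP², g̃)`. -/
def systolicAreaRP2 (g : Sph → E3 → E3 → ℝ) : ℝ := areaRP2 g / (sysRP2 g) ^ 2

section
/-! ### Section T: a topological invariant of paths of polygons -/

lemma exists_sqrt_lift {A : Type*} [TopologicalSpace A] [SimplyConnectedSpace A]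
    [LocallyPathConnectedSpace A] (Z : A → ℂ) (hZ : Continuous Z) (h0 : ∀ a, Z a ≠ 0) :
    ∃ Y : A → ℂ, Continuous Y ∧ ∀ a, Y a ^ 2 = Z a := by
  have cov := isCoveringMap_npow (𝕜 := ℂ) 2 (by norm_num)
  obtain ⟨a0⟩ : Nonempty A := inferInstance
  obtain ⟨y0, hy0⟩ := IsAlgClosed.exists_pow_nat_eq (Z a0) (n := 2) (by norm_num)
  have hy0' : y0 ≠ 0 := by
    rintro rfl
    apply h0 a0
    rw [← hy0]; simp
  let f : C(A, {x : ℂ // x ≠ 0}) := ⟨fun a => ⟨Z a, h0 a⟩, by fun_prop⟩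
  obtain ⟨F, ⟨-, hF⟩, -⟩ := cov.existsUnique_continuousMap_lifts f a0 ⟨y0, hy0'⟩ (by
    apply Subtype.ext; simp [f, hy0])
  refine ⟨fun a => (F a).1, by fun_prop, fun a => ?_⟩
  have := congrFun hF a
  exact congrArg Subtype.val this

lemma sign_const {A : Type*} [TopologicalSpace A] [PreconnectedSpace A] (g : A → ℝ)
    (hg : Continuous g) (h0 : ∀ a, g a ≠ 0) (a b : A) (ha : g a < 0) : g b < 0 := by
  by_contra hb
  push Not at hb
  obtain ⟨c, hc⟩ := mem_range_of_exists_le_of_exists_ge hg ⟨a, ha.le⟩ ⟨b, hb⟩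
  exact h0 c hc

/-- Two continuous square roots of the same function give the same product of values. -/
lemma sqrt_prod_eq (Y Y' : ℝ → ℂ) (hY : Continuous Y) (hY' : Continuous Y')
    (h : ∀ r, Y r ^ 2 = Y' r ^ 2) (h0 : ∀ r, Y' r ≠ 0) (a b : ℝ) : Y a * Y b = Y' a * Y' b := by
  rcases isPreconnected_univ.eq_or_eq_neg_of_sq_eq hY.continuousOn hY'.continuousOn
    (fun r _ => h r) (fun {r} _ => h0 r) with h1 | h1
  · rw [h1 (Set.mem_univ a), h1 (Set.mem_univ b)]
  · rw [h1 (Set.mem_univ a), h1 (Set.mem_univ b)]; simp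

open scoped Quaternion

/-- Vectors as purely imaginary quaternions. -/
def emb (v : E3) : ℍ[ℝ] := ⟨0, v 0, v 1, v 2⟩

@[simp] lemma emb_re (v : E3) : (emb v).re = 0 := rfl
@[simp] lemma emb_imI (v : E3) : (emb v).imI = v 0 := rfl
@[simp] lemma emb_imJ (v : E3) : (emb v).imJ = v 1 := rfl
@[simp] lemma emb_imK (v : E3) : (emb v).imK = v 2 := rfl

/-- The (unnormalized) quaternion moving `a` to `b`. -/
def qq (a b : E3) : ℍ[ℝ] := 1 - emb b * emb a

def Qn (x : ℕ → E3) : ℕ → ℍ[ℝ]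
  | 0 => 1
  | n + 1 => qq (x n) (x (n + 1)) * Qn x n

lemma inner_E3 (a b : E3) : ⟪a, b⟫ = a 0 * b 0 + a 1 * b 1 + a 2 * b 2 := by
  simp [PiLp.inner_apply, Fin.sum_univ_three, mul_comm]

lemma unit_sq {a : E3} (h : ‖a‖ = 1) : a 0 ^ 2 + a 1 ^ 2 + a 2 ^ 2 = 1 := by
  have := real_inner_self_eq_norm_sq a
  rw [inner_E3, h] at this
  linarith

lemma emb_sq {a : E3} (h : ‖a‖ = 1) : emb a * emb a = -1 := by
  have := unit_sq h
  ext <;> simp <;> first | linarith | ring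

lemma qq_comm {a b : E3} (ha : ‖a‖ = 1) (hb : ‖b‖ = 1) : qq a b * emb a = emb b * qq a b := by
  unfold qq
  rw [sub_mul, mul_sub, mul_assoc, emb_sq ha, ← mul_assoc, emb_sq hb]
  simp [add_comm]

lemma qq_self {a : E3} (ha : ‖a‖ = 1) : qq a a = 2 := by
  unfold qq; rw [emb_sq ha]; norm_num

lemma star_qq (a b : E3) : star (qq a b) = qq b a := by
  unfold qq
  have h : ∀ v, star (emb v) = - emb v := by intro v; ext <;> simp
  rw [star_sub, star_mul, h, h]; simp

lemma qq_ne_zero {a b : E3} (ha : ‖a‖ = 1) (hb : ‖b‖ = 1) (hab : b ≠ -a) : qq a b ≠ 0 := by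
  intro h
  apply hab
  have h1 : emb b * emb a = 1 := (sub_eq_zero.mp h).symm
  have h2 : emb b = - emb a := by
    have : emb b * (emb a * emb a) = emb a := by rw [← mul_assoc, h1, one_mul]
    rw [emb_sq ha] at this
    simp at this
    rw [← this]; simp
  have e0 := congrArg QuaternionAlgebra.imI h2
  have e1 := congrArg QuaternionAlgebra.imJ h2
  have e2 := congrArg QuaternionAlgebra.imK h2
  simp at e0 e1 e2
  ext i; fin_cases i <;> simp [e0, e1, e2]

lemma Qn_comm (x : ℕ → E3) (hx : ∀ n, ‖x n‖ = 1) (n : ℕ) :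
    Qn x n * emb (x 0) = emb (x n) * Qn x n := by
  induction n with
  | zero => simp [Qn]
  | succ n ih => rw [Qn, mul_assoc, ih, ← mul_assoc, qq_comm (hx n) (hx _), mul_assoc]

lemma Qn_ne_zero (x : ℕ → E3) (hx : ∀ n, ‖x n‖ = 1) (hc : ∀ n, x (n + 1) ≠ - x n) (n : ℕ) :
    Qn x n ≠ 0 := by
  induction n with
  | zero => simp [Qn]
  | succ n ih => exact mul_ne_zero (qq_ne_zero (hx n) (hx _) (hc n)) ih

lemma Qn_succ' (x : ℕ → E3) (n : ℕ) :
    Qn x (n + 1) = Qn (fun k => x (k + 1)) n * qq (x 0) (x 1) := by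
  induction n with
  | zero => simp [Qn]
  | succ n ih => rw [Qn, ih, Qn, mul_assoc]

lemma Qn_star (n : ℕ) : ∀ (x y : ℕ → E3), (∀ k ≤ n, y k = x (n - k)) →
    Qn y n = star (Qn x n) := by
  induction n with
  | zero => intro x y _; simp [Qn]
  | succ n ih =>
    intro x y h
    rw [Qn_succ' y, Qn, star_mul, star_qq]
    have h0 := h 0 (by omega)
    have h1 := h 1 (by omega)
    simp at h0 h1
    rw [h0, h1]
    congr 1
    apply ih
    intro k hk
    rw [h (k + 1) (by omega)]
    congr 1; omega

lemma Qn_continuous {A : Type*} [TopologicalSpace A] (x : A → ℕ → E3)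
    (hx : ∀ n, Continuous fun a => x a n) (n : ℕ) : Continuous fun a => Qn (x a) n := by
  have hemb : Continuous emb := by
    have h : Continuous fun v : E3 => (!₂[0, v 0, v 1, v 2] : EuclideanSpace ℝ (Fin 4)) := by
      apply (PiLp.continuous_toLp 2 _).comp
      refine continuous_pi fun i => ?_
      fin_cases i <;> simp <;> fun_prop
    exact Quaternion.linearIsometryEquivTuple.symm.continuous.comp h
  induction n with
  | zero => simpa [Qn] using continuous_const
  | succ n ih =>
    simp only [Qn, qq]
    exact (continuous_const.sub ((hemb.comp (hx _)).mul (hemb.comp (hx _)))).mul ih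

variable {N : ℕ}

/-- Sequence of vertices of a polygon. -/
def nseq (x : ZMod N → E3) : ℕ → E3 := fun n => x (n : ZMod N)

def UnitPoly (x : ZMod N → E3) : Prop := ∀ i, ‖x i‖ = 1

def NonAnti (x : ZMod N → E3) : Prop := ∀ i, x (i + 1) ≠ - x i

def revP (x : ZMod N → E3) : ZMod N → E3 := fun i => x (-i)

/-- The complex number `α + iβ` when the holonomy quaternion is `α + β x₀`. -/
def Zp (x : ZMod N → E3) : ℂ :=
  ⟨(Qn (nseq x) N).re, (Qn (nseq x) N).imI * x 0 0 + (Qn (nseq x) N).imJ * x 0 1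
    + (Qn (nseq x) N).imK * x 0 2⟩

lemma Zp_continuous : Continuous (Zp : (ZMod N → E3) → ℂ) := by
  have h : Continuous fun x : ZMod N → E3 => Qn (nseq x) N :=
    Qn_continuous _ (fun n => by unfold nseq; fun_prop) N
  have h1 := Quaternion.continuous_re.comp h
  have h2 := Quaternion.continuous_imI.comp h
  have h3 := Quaternion.continuous_imJ.comp h
  have h4 := Quaternion.continuous_imK.comp h
  simp only [Function.comp_def] at h1 h2 h3 h4
  have : (Zp : (ZMod N → E3) → ℂ) = fun x => ((Qn (nseq x) N).re : ℂ) + (((Qn (nseq x) N).imI * x 0 0 + (Qn (nseq x) N).imJ * x 0 1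
    + (Qn (nseq x) N).imK * x 0 2 : ℝ) : ℂ) * Complex.I := by
    funext x
    rw [← Complex.mk_eq_add_mul_I]; rfl
  rw [this]
  fun_prop

lemma Zp_ne_zero {x : ZMod N → E3} (hu : UnitPoly x) (hc : NonAnti x) : Zp x ≠ 0 := by
  intro h
  set Q := Qn (nseq x) N with hQ
  have hne : Q ≠ 0 := Qn_ne_zero _ (fun n => hu _) (fun n => by
    have := hc (n : ZMod N); simpa [nseq] using this) N
  have hcom : Q * emb (x 0) = emb (x 0) * Q := by
    have := Qn_comm (nseq x) (fun n => hu _) N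
    simpa [nseq] using this
  have hre := congrArg Complex.re h
  have him := congrArg Complex.im h
  simp only [Zp, Complex.zero_re, Complex.zero_im, ← hQ] at hre him
  have e0 := congrArg QuaternionAlgebra.imI hcom
  have e1 := congrArg QuaternionAlgebra.imJ hcom
  have e2 := congrArg QuaternionAlgebra.imK hcom
  simp at e0 e1 e2
  have hx := unit_sq (hu 0)
  apply hne
  have s : (Q.imI ^ 2 + Q.imJ ^ 2 + Q.imK ^ 2) = 0 := by
    have : (Q.imI ^ 2 + Q.imJ ^ 2 + Q.imK ^ 2) * (x 0 0 ^ 2 + x 0 1 ^ 2 + x 0 2 ^ 2)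
      = (Q.imI * x 0 0 + Q.imJ * x 0 1 + Q.imK * x 0 2) ^ 2
       + (Q.imI * x 0 1 - Q.imJ * x 0 0) ^ 2 + (Q.imJ * x 0 2 - Q.imK * x 0 1) ^ 2
       + (Q.imK * x 0 0 - Q.imI * x 0 2) ^ 2 := by ring
    rw [hx, him, mul_one, show Q.imI * x 0 1 - Q.imJ * x 0 0 = 0 by linarith,
      show Q.imJ * x 0 2 - Q.imK * x 0 1 = 0 by linarith,
      show Q.imK * x 0 0 - Q.imI * x 0 2 = 0 by linarith] at this
    simpa using this
  have a1 : Q.imI = 0 := by nlinarith [sq_nonneg Q.imI, sq_nonneg Q.imJ, sq_nonneg Q.imK]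
  have a2 : Q.imJ = 0 := by nlinarith [sq_nonneg Q.imI, sq_nonneg Q.imJ, sq_nonneg Q.imK]
  have a3 : Q.imK = 0 := by nlinarith [sq_nonneg Q.imI, sq_nonneg Q.imJ, sq_nonneg Q.imK]
  ext <;> simp [hre, a1, a2, a3]

lemma Zp_rev (x : ZMod N → E3) : Zp (revP x) = (starRingEnd ℂ) (Zp x) := by
  have h : Qn (nseq (revP x)) N = star (Qn (nseq x) N) := by
    apply Qn_star
    intro k hk
    simp only [nseq, revP]
    congr 1
    rw [Nat.cast_sub hk]; simp
  unfold Zp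
  rw [h]
  apply Complex.ext <;> simp [revP]
  ring

lemma Qn_const (a : E3) (ha : ‖a‖ = 1) (n : ℕ) : Qn (fun _ => a) n = ((2 : ℝ) ^ n : ℝ) := by
  induction n with
  | zero => simp [Qn]
  | succ n ih => rw [Qn, ih, qq_self ha, pow_succ']; push_cast; rfl

lemma Zp_const (a : E3) (ha : ‖a‖ = 1) : Zp (fun _ : ZMod N => a) = ((2 : ℝ) ^ N : ℝ) := by
  have h : Qn (nseq (fun _ : ZMod N => a)) N = ((2 : ℝ) ^ N : ℝ) := Qn_const a ha N
  unfold Zp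
  rw [h]
  apply Complex.ext <;> simp only [Quaternion.re_coe, Quaternion.imI_coe, Quaternion.imJ_coe,
    Quaternion.imK_coe, Complex.ofReal_re, Complex.ofReal_im] <;> ring

/-- Parity of a path of polygons. -/
def Par (p : ℝ → ZMod N → E3) : Prop :=
  ∃ Y : ℝ → ℂ, Continuous Y ∧ (∀ r, Y r ^ 2 = Zp (p r)) ∧ (Y 0 * Y π).re < 0

lemma Par_homotopy (H : ℝ × ℝ → ZMod N → E3) (hH : Continuous H) (hu : ∀ z, UnitPoly (H z))
    (hc : ∀ z, NonAnti (H z)) (hr : ∀ s, H (π, s) = revP (H (0, s)))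
    (h0 : Par fun r => H (r, 0)) : Par fun r => H (r, 1) := by
  obtain ⟨Y, hY, hY2⟩ := exists_sqrt_lift (fun z => Zp (H z)) (Zp_continuous.comp hH)
    (fun z => Zp_ne_zero (hu z) (hc z))
  have hne : ∀ z, Y z ≠ 0 := fun z hz => by
    have := hY2 z
    rw [hz] at this
    exact Zp_ne_zero (hu z) (hc z) (by rw [← this]; simp)
  refine ⟨fun r => Y (r, 1), by fun_prop, fun r => hY2 _, ?_⟩
  have key : ∀ s : ℝ, (Y (0, s) * Y (π, s)).re ≠ 0 := by
    intro s hs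
    have h1 : (Y (0, s) * Y (π, s)) ^ 2 = ((Complex.normSq (Zp (H (0, s))) : ℝ) : ℂ) := by
      rw [mul_pow, hY2, hY2, hr, Zp_rev, Complex.mul_conj]
    have h2 := congrArg Complex.re h1
    simp only [pow_two, Complex.mul_re (Y (0, s) * Y (π, s)), hs, Complex.ofReal_re] at h2
    have h3 : 0 < Complex.normSq (Zp (H (0, s))) :=
      Complex.normSq_pos.mpr (Zp_ne_zero (hu _) (hc _))
    nlinarith [mul_self_nonneg (Y (0, s) * Y (π, s)).im]
  have hcont : Continuous fun s : ℝ => (Y (0, s) * Y (π, s)).re :=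
    Complex.continuous_re.comp (by fun_prop)
  refine sign_const (fun s : ℝ => (Y (0, s) * Y (π, s)).re) hcont key 0 1 ?_
  obtain ⟨Y', hY', hY2', hneg⟩ := h0
  have := sqrt_prod_eq Y' (fun r => Y (r, 0)) hY' (by fun_prop)
    (fun r => by rw [hY2', hY2]) (fun r => hne _) 0 π
  show (Y (0, 0) * Y (π, 0)).re < 0
  rw [← this]; exact hneg

lemma not_Par_const (p : ℝ → E3) (hp : ∀ r, ‖p r‖ = 1) :
    ¬ Par (fun r => fun _ : ZMod N => p r) := by
  rintro ⟨Y, hY, hY2, hneg⟩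
  have h2 : ∀ r, Y r ^ 2 = ((Real.sqrt (2 ^ N) : ℝ) : ℂ) ^ 2 := fun r => by
    rw [hY2, Zp_const _ (hp r), ← Complex.ofReal_pow, Real.sq_sqrt (by positivity)]
  have hne : ((Real.sqrt (2 ^ N) : ℝ) : ℂ) ≠ 0 := by
    rw [Complex.ofReal_ne_zero]; positivity
  have := sqrt_prod_eq Y (fun _ => ((Real.sqrt (2 ^ N) : ℝ) : ℂ)) hY continuous_const h2
    (fun _ => hne) 0 π
  rw [this, ← Complex.ofReal_mul, Complex.ofReal_re] at hneg
  have : 0 ≤ Real.sqrt (2 ^ N) * Real.sqrt (2 ^ N) := by positivity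
  linarith

end

section
/-! ### Section A: the discrete energy and its steepest descent -/

/-- A `C^{1,1}` function `F` with gradient `G`, and quantitative bounds. -/
structure GoodF (F : E3 → ℝ) (G : E3 → E3) (m K : ℝ) : Prop where
  m_pos : 0 < m
  K_ge : 1 ≤ K
  lower : ∀ x, ‖x‖ = 1 → m ≤ F x
  upper : ∀ x, ‖x‖ = 1 → F x ≤ K
  G_le : ∀ x, ‖G x‖ ≤ K
  G_lip : ∀ x y, ‖G x - G y‖ ≤ K * ‖x - y‖
  taylor : ∀ x y, |F y - F x - ⟪G x, y - x⟫| ≤ K * ‖y - x‖ ^ 2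
  deriv : ∀ x, HasFDerivAt F (innerSL ℝ (G x)) x

variable {F : E3 → ℝ} {G : E3 → E3} {m K : ℝ}

lemma GoodF.F_cont (h : GoodF F G m K) : Continuous F :=
  continuous_iff_continuousAt.mpr fun x => (h.deriv x).continuousAt

lemma GoodF.G_cont (h : GoodF F G m K) : Continuous G := by
  have : LipschitzWith (Real.toNNReal K) G := by
    apply LipschitzWith.of_dist_le_mul
    intro x y
    rw [dist_eq_norm, dist_eq_norm, Real.coe_toNNReal _ (by linarith [h.K_ge])]
    exact h.G_lip x y
  exact this.continuous

lemma edge_arith {K α β d I g1 g2 R1 R2 s fa fb : ℝ} (hK : 1 ≤ K) (hα0 : 0 ≤ α) (hβ0 : 0 ≤ β)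
    (hα2 : α ≤ 2) (hβ2 : β ≤ 2) (hd0 : 0 ≤ d) (hdle : d ≤ α + β) (hs4 : s ≤ 4) (hs00 : 0 ≤ s)
    (hIle : |I| ≤ 2 * d) (hg1le : |g1| ≤ K * α) (hg2le : |g2| ≤ K * β)
    (t1 : |R1| ≤ K * α ^ 2) (t2 : |R2| ≤ K * β ^ 2) (hFa : fa ≤ K) (hFb : fb ≤ K) :
    (fa + fb) * d ^ 2 + (R1 + R2) * s + (g1 + g2 + R1 + R2) * (2 * I + d ^ 2)
      ≤ 60 * K * (α ^ 2 + β ^ 2) := by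
  have b1 : (fa + fb) * d ^ 2 ≤ 2 * K * (2 * (α ^ 2 + β ^ 2)) := by
    have : d ^ 2 ≤ 2 * (α ^ 2 + β ^ 2) := by nlinarith [sq_nonneg (α - β)]
    calc (fa + fb) * d ^ 2 ≤ (2 * K) * d ^ 2 := by gcongr; linarith
      _ ≤ _ := by gcongr
  have b2 : (R1 + R2) * s ≤ 4 * (K * α ^ 2 + K * β ^ 2) := by
    calc (R1 + R2) * s ≤ (K * α ^ 2 + K * β ^ 2) * s := by
          gcongr
          · exact (le_abs_self _).trans t1
          · exact (le_abs_self _).trans t2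
      _ ≤ (K * α ^ 2 + K * β ^ 2) * 4 := by gcongr
      _ = _ := by ring
  have c1 : |g1 + g2 + R1 + R2| ≤ 3 * K * (α + β) := by
    have a1 := abs_add_le (g1 + g2 + R1) R2
    have a2 := abs_add_le (g1 + g2) R1
    have a3 := abs_add_le g1 g2
    have e1 : α ^ 2 ≤ 2 * α := by nlinarith
    have e2 : β ^ 2 ≤ 2 * β := by nlinarith
    have e3 : K * α ^ 2 ≤ K * (2 * α) := by gcongr
    have e4 : K * β ^ 2 ≤ K * (2 * β) := by gcongr
    linarith
  have c2 : |2 * I + d ^ 2| ≤ 8 * (α + β) := by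
    have a1 := abs_add_le (2 * I) (d ^ 2)
    rw [abs_mul, abs_of_nonneg (sq_nonneg d), abs_of_nonneg (by norm_num : (0:ℝ) ≤ 2)] at a1
    have : d ^ 2 ≤ 4 * d := by nlinarith
    linarith
  have b3 : (g1 + g2 + R1 + R2) * (2 * I + d ^ 2) ≤ (3 * K * (α + β)) * (8 * (α + β)) := by
    calc (g1 + g2 + R1 + R2) * (2 * I + d ^ 2) ≤ |g1 + g2 + R1 + R2| * |2 * I + d ^ 2| := by
          rw [← abs_mul]; exact le_abs_self _
      _ ≤ _ := mul_le_mul c1 c2 (abs_nonneg _) (by positivity)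
  have b4 : (3 * K * (α + β)) * (8 * (α + β)) ≤ 48 * K * (α ^ 2 + β ^ 2) := by
    have := mul_nonneg (by linarith : (0 : ℝ) ≤ K) (sq_nonneg (α - β))
    linarith [this]
  have := mul_nonneg (by linarith : (0 : ℝ) ≤ K) (sq_nonneg α)
  have := mul_nonneg (by linarith : (0 : ℝ) ≤ K) (sq_nonneg β)
  linarith

lemma edge_taylor (h : GoodF F G m K) (a b a' b' : E3) (ha : ‖a‖ = 1) (hb : ‖b‖ = 1)
    (ha' : ‖a'‖ = 1) (hb' : ‖b'‖ = 1) :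
    (F a' + F b') * ‖b' - a'‖ ^ 2 ≤ (F a + F b) * ‖b - a‖ ^ 2
      + (⟪G a, a' - a⟫ + ⟪G b, b' - b⟫) * ‖b - a‖ ^ 2
      + 2 * (F a + F b) * ⟪b - a, (b' - b) - (a' - a)⟫
      + 60 * K * (‖a' - a‖ ^ 2 + ‖b' - b‖ ^ 2) := by
  set α := ‖a' - a‖ with hα
  set β := ‖b' - b‖ with hβ
  have hα0 : 0 ≤ α := norm_nonneg _
  have hβ0 : 0 ≤ β := norm_nonneg _
  have hα2 : α ≤ 2 := by
    calc α ≤ ‖a'‖ + ‖a‖ := norm_sub_le _ _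
      _ = 2 := by rw [ha, ha']; norm_num
  have hβ2 : β ≤ 2 := by
    calc β ≤ ‖b'‖ + ‖b‖ := norm_sub_le _ _
      _ = 2 := by rw [hb, hb']; norm_num
  have hK := h.K_ge
  set d := ‖(b' - b) - (a' - a)‖ with hd
  have hd0 : 0 ≤ d := norm_nonneg _
  have hdle : d ≤ α + β := by
    calc d ≤ ‖b' - b‖ + ‖a' - a‖ := norm_sub_le _ _
      _ = α + β := by rw [add_comm]
  have hs : ‖b - a‖ ≤ 2 := by
    calc ‖b - a‖ ≤ ‖b‖ + ‖a‖ := norm_sub_le _ _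
      _ = 2 := by rw [ha, hb]; norm_num
  have hs0 := norm_nonneg (b - a)
  set I := ⟪b - a, (b' - b) - (a' - a)⟫ with hI
  have hIle : |I| ≤ 2 * d := by
    calc |I| ≤ ‖b - a‖ * d := abs_real_inner_le_norm _ _
      _ ≤ 2 * d := by gcongr
  have hs' : ‖b' - a'‖ ^ 2 = ‖b - a‖ ^ 2 + 2 * I + d ^ 2 := by
    rw [hI, hd, ← norm_add_sq_real]
    congr 2; abel
  set g1 := ⟪G a, a' - a⟫ with hg1
  set g2 := ⟪G b, b' - b⟫ with hg2
  have hg1le : |g1| ≤ K * α := by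
    calc |g1| ≤ ‖G a‖ * α := abs_real_inner_le_norm _ _
      _ ≤ K * α := by gcongr; exact h.G_le a
  have hg2le : |g2| ≤ K * β := by
    calc |g2| ≤ ‖G b‖ * β := abs_real_inner_le_norm _ _
      _ ≤ K * β := by gcongr; exact h.G_le b
  have t1 := h.taylor a a'
  have t2 := h.taylor b b'
  rw [← hg1, ← hα] at t1
  rw [← hg2, ← hβ] at t2
  obtain ⟨R1, hR1⟩ : ∃ R, R = F a' - F a - g1 := ⟨_, rfl⟩
  obtain ⟨R2, hR2⟩ : ∃ R, R = F b' - F b - g2 := ⟨_, rfl⟩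
  rw [← hR1] at t1
  rw [← hR2] at t2
  set s := ‖b - a‖ ^ 2 with hsdef
  have hs4 : s ≤ 4 := by nlinarith
  have hs00 : 0 ≤ s := by positivity
  have e : (F a' + F b') * (s + 2 * I + d ^ 2) - ((F a + F b) * s
      + (g1 + g2) * s + 2 * (F a + F b) * I)
      = (F a + F b) * d ^ 2 + (R1 + R2) * s + (g1 + g2 + R1 + R2) * (2 * I + d ^ 2) := by
    rw [hR1, hR2]; ring
  have hFa := h.upper a ha
  have hFb := h.upper b hb
  have := edge_arith hK hα0 hβ0 hα2 hβ2 hd0 hdle hs4 hs00 hIle hg1le hg2le t1 t2 hFa hFb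
  rw [hs']
  linarith

variable {N : ℕ}

/-- The discrete energy of a polygon. -/
def SE [NeZero N] (F : E3 → ℝ) (x : ZMod N → E3) : ℝ :=
  ∑ i, (F (x i) + F (x (i + 1))) * ‖x (i + 1) - x i‖ ^ 2

/-- The ambient gradient of the discrete energy. -/
def DE (F : E3 → ℝ) (G : E3 → E3) (x : ZMod N → E3) (i : ZMod N) : E3 :=
  (‖x (i + 1) - x i‖ ^ 2 + ‖x i - x (i - 1)‖ ^ 2) • G (x i)
    + (2 * (F (x i) + F (x (i + 1)))) • (x i - x (i + 1))
    + (2 * (F (x (i - 1)) + F (x i))) • (x i - x (i - 1))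

/-- The gradient on the product of spheres. -/
def XE (F : E3 → ℝ) (G : E3 → E3) (x : ZMod N → E3) (i : ZMod N) : E3 :=
  DE F G x i - ⟪x i, DE F G x i⟫ • x i

/-- A step of steepest descent. -/
def stepP (F : E3 → ℝ) (G : E3 → E3) (τ : ℝ) (x : ZMod N → E3) (i : ZMod N) : E3 :=
  (1 / Real.sqrt (1 + τ ^ 2 * ‖XE F G x i‖ ^ 2)) • (x i - τ • XE F G x i)

lemma sum_shift [NeZero N] (g : ZMod N → ℝ) : ∑ i, g (i + 1) = ∑ i, g i :=
  Equiv.sum_comp (Equiv.addRight (1 : ZMod N)) g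

lemma SE_taylor [NeZero N] (h : GoodF F G m K) (x y : ZMod N → E3) (hx : UnitPoly x)
    (hy : UnitPoly y) :
    SE F y ≤ SE F x + ∑ i, ⟪DE F G x i, y i - x i⟫ + 120 * K * ∑ i, ‖y i - x i‖ ^ 2 := by
  have h1 : SE F y ≤ ∑ i, ((F (x i) + F (x (i + 1))) * ‖x (i + 1) - x i‖ ^ 2
      + (⟪G (x i), y i - x i⟫ + ⟪G (x (i + 1)), y (i + 1) - x (i + 1)⟫) * ‖x (i + 1) - x i‖ ^ 2
      + 2 * (F (x i) + F (x (i + 1))) *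
        ⟪x (i + 1) - x i, (y (i + 1) - x (i + 1)) - (y i - x i)⟫
      + 60 * K * (‖y i - x i‖ ^ 2 + ‖y (i + 1) - x (i + 1)‖ ^ 2)) :=
    Finset.sum_le_sum fun i _ => edge_taylor h _ _ _ _ (hx _) (hx _) (hy _) (hy _)
  refine h1.trans (le_of_eq ?_)
  have s1 := sum_shift (fun i : ZMod N => ‖y i - x i‖ ^ 2)
  have s2 := sum_shift (fun i : ZMod N => ⟪G (x i), y i - x i⟫ * ‖x i - x (i - 1)‖ ^ 2)
  have s3 := sum_shift (fun i : ZMod N => 2 * (F (x (i - 1)) + F (x i)) *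
    ⟪x i - x (i - 1), y i - x i⟫)
  simp only [add_sub_cancel_right] at s1 s2 s3
  have eD : ∀ i, ⟪DE F G x i, y i - x i⟫ = ⟪G (x i), y i - x i⟫ * ‖x (i + 1) - x i‖ ^ 2
      + ⟪G (x i), y i - x i⟫ * ‖x i - x (i - 1)‖ ^ 2
      - 2 * (F (x i) + F (x (i + 1))) * ⟪x (i + 1) - x i, y i - x i⟫
      + 2 * (F (x (i - 1)) + F (x i)) * ⟪x i - x (i - 1), y i - x i⟫ := by
    intro i
    unfold DE
    rw [inner_add_left, inner_add_left, real_inner_smul_left, real_inner_smul_left,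
      real_inner_smul_left, ← neg_sub (x (i + 1)) (x i), inner_neg_left]
    ring
  have eS : ∀ i, (F (x i) + F (x (i + 1))) * ‖x (i + 1) - x i‖ ^ 2
      + (⟪G (x i), y i - x i⟫ + ⟪G (x (i + 1)), y (i + 1) - x (i + 1)⟫) * ‖x (i + 1) - x i‖ ^ 2
      + 2 * (F (x i) + F (x (i + 1))) *
        ⟪x (i + 1) - x i, (y (i + 1) - x (i + 1)) - (y i - x i)⟫
      + 60 * K * (‖y i - x i‖ ^ 2 + ‖y (i + 1) - x (i + 1)‖ ^ 2)
      = (F (x i) + F (x (i + 1))) * ‖x (i + 1) - x i‖ ^ 2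
      + ⟪G (x i), y i - x i⟫ * ‖x (i + 1) - x i‖ ^ 2
      + ⟪G (x (i + 1)), y (i + 1) - x (i + 1)⟫ * ‖x (i + 1) - x i‖ ^ 2
      + 2 * (F (x i) + F (x (i + 1))) * ⟪x (i + 1) - x i, y (i + 1) - x (i + 1)⟫
      - 2 * (F (x i) + F (x (i + 1))) * ⟪x (i + 1) - x i, y i - x i⟫
      + 60 * K * ‖y i - x i‖ ^ 2 + 60 * K * ‖y (i + 1) - x (i + 1)‖ ^ 2 := by
    intro i
    rw [inner_sub_right (x (i + 1) - x i) (y (i + 1) - x (i + 1)) (y i - x i)]; ring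
  rw [Finset.sum_congr rfl (fun i _ => eS i), Finset.sum_congr rfl (fun i _ => eD i)]
  simp only [Finset.sum_add_distrib, Finset.sum_sub_distrib, ← Finset.mul_sum] at *
  rw [s1, s2, s3]
  unfold SE
  ring

lemma unit_sub_le {a b : E3} (ha : ‖a‖ = 1) (hb : ‖b‖ = 1) : ‖a - b‖ ≤ 2 := by
  calc ‖a - b‖ ≤ ‖a‖ + ‖b‖ := norm_sub_le _ _
    _ = 2 := by rw [ha, hb]; norm_num

lemma DE_le (h : GoodF F G m K) (x : ZMod N → E3) (hx : UnitPoly x) (i : ZMod N) :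
    ‖DE F G x i‖ ≤ 24 * K := by
  have hK := h.K_ge
  have u1 := unit_sub_le (hx (i + 1)) (hx i)
  have u2 := unit_sub_le (hx i) (hx (i - 1))
  have u3 := unit_sub_le (hx i) (hx (i + 1))
  have n1 := norm_nonneg (x (i + 1) - x i)
  have n2 := norm_nonneg (x i - x (i - 1))
  have f1 := h.lower _ (hx i)
  have f2 := h.lower _ (hx (i + 1))
  have f3 := h.lower _ (hx (i - 1))
  have g1 := h.upper _ (hx i)
  have g2 := h.upper _ (hx (i + 1))
  have g3 := h.upper _ (hx (i - 1))
  have hm := h.m_pos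
  unfold DE
  have t1 : ‖(‖x (i + 1) - x i‖ ^ 2 + ‖x i - x (i - 1)‖ ^ 2) • G (x i)‖ ≤ 8 * K := by
    rw [norm_smul, Real.norm_of_nonneg (by positivity)]
    have := h.G_le (x i)
    calc _ ≤ (2 ^ 2 + 2 ^ 2) * K := by gcongr
      _ = 8 * K := by ring
  have t2 : ‖(2 * (F (x i) + F (x (i + 1)))) • (x i - x (i + 1))‖ ≤ 8 * K := by
    rw [norm_smul, Real.norm_of_nonneg (by linarith)]
    calc _ ≤ (2 * (K + K)) * 2 := by gcongr
      _ = 8 * K := by ring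
  have t3 : ‖(2 * (F (x (i - 1)) + F (x i))) • (x i - x (i - 1))‖ ≤ 8 * K := by
    rw [norm_smul, Real.norm_of_nonneg (by linarith)]
    calc _ ≤ (2 * (K + K)) * 2 := by gcongr
      _ = 8 * K := by ring
  calc _ ≤ _ := norm_add₃_le
    _ ≤ _ := by linarith

lemma XE_orth (x : ZMod N → E3) (hx : UnitPoly x) (i : ZMod N) : ⟪x i, XE F G x i⟫ = 0 := by
  unfold XE
  rw [inner_sub_right, real_inner_smul_right, real_inner_self_eq_norm_sq, hx i]; ring

lemma DE_XE (x : ZMod N → E3) (hx : UnitPoly x) (i : ZMod N) :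
    ⟪DE F G x i, XE F G x i⟫ = ‖XE F G x i‖ ^ 2 := by
  have h1 := XE_orth (F := F) (G := G) x hx i
  have h2 : DE F G x i = XE F G x i + ⟪x i, DE F G x i⟫ • x i := by unfold XE; abel
  conv_lhs => rw [h2]
  rw [inner_add_left, real_inner_smul_left, h1, real_inner_self_eq_norm_sq]; ring

lemma XE_le (h : GoodF F G m K) (x : ZMod N → E3) (hx : UnitPoly x) (i : ZMod N) :
    ‖XE F G x i‖ ≤ 24 * K := by
  have h1 := DE_XE (F := F) (G := G) x hx i
  have h2 := real_inner_le_norm (DE F G x i) (XE F G x i)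
  have h3 := DE_le h x hx i
  by_contra hc
  push Not at hc
  have : 0 < ‖XE F G x i‖ := by linarith [h.K_ge]
  nlinarith

lemma step_unit (τ : ℝ) (x : ZMod N → E3) (hx : UnitPoly x) : UnitPoly (stepP F G τ x) := by
  intro i
  unfold stepP
  have h0 : 0 < 1 + τ ^ 2 * ‖XE F G x i‖ ^ 2 := by positivity
  have h1 : ‖x i - τ • XE F G x i‖ = Real.sqrt (1 + τ ^ 2 * ‖XE F G x i‖ ^ 2) := by
    rw [eq_comm, Real.sqrt_eq_iff_mul_self_eq h0.le (norm_nonneg _), ← pow_two,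
      norm_sub_sq_real, hx i, real_inner_smul_right, XE_orth x hx i, norm_smul, mul_pow,
      Real.norm_eq_abs, sq_abs]
    ring
  rw [norm_smul, h1, Real.norm_of_nonneg (by positivity)]
  have := Real.sqrt_pos.mpr h0
  field_simp

lemma step_desc [NeZero N] (h : GoodF F G m K) (τ : ℝ) (h0 : 0 ≤ τ) (h1 : τ * (1000 * K) ≤ 1)
    (x : ZMod N → E3) (hx : UnitPoly x) :
    SE F (stepP F G τ x) ≤ SE F x - τ / 2 * ∑ i, ‖XE F G x i‖ ^ 2 := by
  have hy := step_unit (F := F) (G := G) τ x hx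
  have hT := SE_taylor h x _ hx hy
  have hK := h.K_ge
  refine hT.trans ?_
  rw [Finset.mul_sum, Finset.mul_sum, add_assoc, ← Finset.sum_add_distrib, sub_eq_add_neg,
    ← Finset.sum_neg_distrib]
  gcongr with i _
  set ξ := XE F G x i with hξ
  set ρ := Real.sqrt (1 + τ ^ 2 * ‖ξ‖ ^ 2) with hρ
  have hpos : 0 < 1 + τ ^ 2 * ‖ξ‖ ^ 2 := by positivity
  have hρ2 : ρ ^ 2 = 1 + τ ^ 2 * ‖ξ‖ ^ 2 := Real.sq_sqrt hpos.le
  have hρ1 : 1 ≤ ρ := by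
    rw [hρ]; apply Real.one_le_sqrt.mpr; nlinarith [mul_nonneg (sq_nonneg τ) (sq_nonneg ‖ξ‖)]
  set q := 1 / ρ with hq
  have hqρ : q * ρ = 1 := by rw [hq]; field_simp
  have hq1 : q ≤ 1 := by rw [hq]; rw [div_le_one (by linarith)]; exact hρ1
  have hq0 : 0 < q := by positivity
  -- 1 - q ≤ τ²|ξ|²/2
  have hq2 : 1 - q ≤ τ ^ 2 * ‖ξ‖ ^ 2 / 2 := by
    have : ρ ≤ 1 + τ ^ 2 * ‖ξ‖ ^ 2 / 2 := by nlinarith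
    have h3 : 1 - q ≤ ρ - 1 := by nlinarith [sq_nonneg (ρ - 1)]
    linarith
  have hyi : stepP F G τ x i = q • (x i - τ • ξ) := rfl
  have hdiff : stepP F G τ x i - x i = (q - 1) • x i - (q * τ) • ξ := by
    rw [hyi, smul_sub, smul_smul, sub_smul, one_smul]; abel
  have hin : ⟪DE F G x i, stepP F G τ x i - x i⟫
      = (q - 1) * ⟪DE F G x i, x i⟫ - q * τ * ‖ξ‖ ^ 2 := by
    rw [hdiff, inner_sub_right, real_inner_smul_right, real_inner_smul_right, DE_XE x hx i]
  have hnorm : ‖stepP F G τ x i - x i‖ ^ 2 = 2 - 2 * q := by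
    rw [norm_sub_sq_real, hy i, hx i, hyi, real_inner_smul_left, inner_sub_left,
      real_inner_smul_left, real_inner_comm, real_inner_comm (x i) ξ, XE_orth x hx i,
      real_inner_self_eq_norm_sq, hx i]
    ring
  have hDx : |⟪DE F G x i, x i⟫| ≤ 24 * K := by
    refine (abs_real_inner_le_norm _ _).trans ?_
    rw [hx i, mul_one]; exact DE_le h x hx i
  have hb : (q - 1) * ⟪DE F G x i, x i⟫ ≤ (τ ^ 2 * ‖ξ‖ ^ 2 / 2) * (24 * K) := by
    calc (q - 1) * ⟪DE F G x i, x i⟫ ≤ |(q - 1) * ⟪DE F G x i, x i⟫| := le_abs_self _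
      _ = (1 - q) * |⟪DE F G x i, x i⟫| := by
        rw [abs_mul, abs_of_nonpos (by linarith)]; ring
      _ ≤ _ := by gcongr
  rw [hin, hnorm]
  have hξle := XE_le h x hx i
  rw [← hξ] at hξle
  have hτξ : τ * ‖ξ‖ ≤ 24 / 1000 := by nlinarith [norm_nonneg ξ]
  have hτξ0 : 0 ≤ τ * ‖ξ‖ := by positivity
  have hsq : τ ^ 2 * ‖ξ‖ ^ 2 ≤ 1 / 1000 := by
    rw [← mul_pow]; nlinarith
  set A := τ * ‖ξ‖ ^ 2 with hA
  have hA0 : 0 ≤ A := by positivity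
  have e1 : τ ^ 2 * ‖ξ‖ ^ 2 = τ * A := by rw [hA]; ring
  have e2 : q * τ * ‖ξ‖ ^ 2 = q * A := by rw [hA]; ring
  have e3 : τ / 2 * ‖ξ‖ ^ 2 = A / 2 := by rw [hA]; ring
  rw [e1] at hq2 hb hsq
  rw [e2, e3]
  have hqA : (1 - 1 / 2000) * A ≤ q * A := by gcongr; linarith
  have hτK : τ * K ≤ 1 / 1000 := by linarith
  have hτKA : τ * K * A ≤ 1 / 1000 * A := by gcongr
  nlinarith

lemma step_rev (τ : ℝ) (x : ZMod N → E3) : stepP F G τ (revP x) = revP (stepP F G τ x) := by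
  have hD : ∀ i, DE F G (revP x) i = DE F G x (-i) := by
    intro i
    unfold DE revP
    rw [show -(i + 1) = -i - 1 by ring, show -(i - 1) = -i + 1 by ring,
      ← norm_sub_rev (x (-i)) (x (-i - 1)), ← norm_sub_rev (x (-i + 1)) (x (-i)),
      add_comm (F (x (-i))) (F (x (-i - 1))), add_comm (F (x (-i + 1))) (F (x (-i))),
      add_comm (‖x (-i) - x (-i - 1)‖ ^ 2)]
    abel
  have hX : ∀ i, XE F G (revP x) i = XE F G x (-i) := by
    intro i; unfold XE; rw [hD]; rfl
  funext i
  simp only [stepP, revP] at *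
  rw [hX]

lemma XE_cont (h : GoodF F G m K) (i : ZMod N) :
    Continuous fun x : ZMod N → E3 => XE F G x i := by
  have hF := h.F_cont
  have hG := h.G_cont
  unfold XE DE
  fun_prop

lemma SE_cont [NeZero N] (h : GoodF F G m K) : Continuous fun x : ZMod N → E3 => SE F x := by
  have hF := h.F_cont
  unfold SE
  fun_prop

lemma step_cont (h : GoodF F G m K) :
    Continuous fun z : ℝ × (ZMod N → E3) => stepP F G z.1 z.2 := by
  refine continuous_pi fun i => ?_
  have hX : Continuous fun z : ℝ × (ZMod N → E3) => XE F G z.2 i :=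
    (XE_cont h i).comp continuous_snd
  unfold stepP
  have h1 : Continuous fun z : ℝ × (ZMod N → E3) =>
      Real.sqrt (1 + z.1 ^ 2 * ‖XE F G z.2 i‖ ^ 2) := by fun_prop
  have h2 : Continuous fun z : ℝ × (ZMod N → E3) => z.2 i - z.1 • XE F G z.2 i := by fun_prop
  refine Continuous.smul (Continuous.div continuous_const h1 ?_) h2
  intro z
  have : 0 < 1 + z.1 ^ 2 * ‖XE F G z.2 i‖ ^ 2 := by positivity
  exact (Real.sqrt_pos.mpr this).ne'

end

section
/-! ### Section C: the minimax principle -/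

variable {F : E3 → ℝ} {G : E3 → E3} {m K : ℝ} {N : ℕ}

lemma SE_lower [NeZero N] (h : GoodF F G m K) (x : ZMod N → E3) (hx : UnitPoly x) :
    2 * m * ∑ i, ‖x (i + 1) - x i‖ ^ 2 ≤ SE F x := by
  unfold SE
  rw [Finset.mul_sum]
  gcongr with i _
  linarith [h.lower _ (hx i), h.lower _ (hx (i + 1))]

lemma nonAnti_of_SE [NeZero N] (h : GoodF F G m K) (x : ZMod N → E3) (hx : UnitPoly x)
    (hlt : SE F x < 8 * m) : NonAnti x := by
  intro i hi
  have h1 := SE_lower h x hx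
  have h2 : ‖x (i + 1) - x i‖ ^ 2 ≤ ∑ i, ‖x (i + 1) - x i‖ ^ 2 :=
    Finset.single_le_sum (f := fun i => ‖x (i + 1) - x i‖ ^ 2) (fun _ _ => by positivity)
      (Finset.mem_univ i)
  have h3 : ‖x (i + 1) - x i‖ = 2 := by
    rw [hi, show - x i - x i = (-2 : ℝ) • x i by module, norm_smul, hx i]; norm_num
  rw [h3] at h2
  have := h.m_pos
  nlinarith

lemma dist_le_sum [NeZero N] (x : ZMod N → E3) (i : ZMod N) :
    ‖x i - x 0‖ ≤ ∑ i, ‖x (i + 1) - x i‖ := by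
  have key : ∀ k : ℕ, ‖x (k : ZMod N) - x 0‖
      ≤ ∑ j ∈ Finset.range k, ‖x ((j : ZMod N) + 1) - x (j : ZMod N)‖ := by
    intro k
    induction k with
    | zero => simp
    | succ k ih =>
      rw [Finset.sum_range_succ]
      push_cast
      calc _ = ‖(x (k : ZMod N) - x 0) + (x ((k : ZMod N) + 1) - x (k : ZMod N))‖ := by
            congr 1; abel
        _ ≤ _ := norm_add_le _ _
        _ ≤ _ := by linarith
  have h1 := key i.val
  rw [ZMod.natCast_val, ZMod.cast_id'] at h1
  refine h1.trans ?_
  have inj : Set.InjOn (fun j : ℕ => (j : ZMod N)) (Finset.range i.val) := by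
    intro a ha b hb hab
    have hlt := ZMod.val_lt i
    simp only [Finset.coe_range, Set.mem_Iio] at ha hb
    have := (ZMod.natCast_eq_natCast_iff' a b N).mp hab
    rwa [Nat.mod_eq_of_lt (by omega), Nat.mod_eq_of_lt (by omega)] at this
  rw [← Finset.sum_image (f := fun j : ZMod N => ‖x (j + 1) - x j‖) inj]
  exact Finset.sum_le_univ_sum_of_nonneg (fun _ => norm_nonneg _)

lemma small_diam [NeZero N] (h : GoodF F G m K) (x : ZMod N → E3) (hx : UnitPoly x)
    (hlt : SE F x < 2 * m / N) (i : ZMod N) : ‖x i - x 0‖ ≤ 1 := by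
  have h1 := SE_lower h x hx
  have hm := h.m_pos
  have hN : (0 : ℝ) < N := by exact_mod_cast Nat.pos_of_ne_zero (NeZero.ne N)
  have h2 : ∑ i, ‖x (i + 1) - x i‖ ^ 2 < 1 / N := by
    have : 2 * m * ∑ i, ‖x (i + 1) - x i‖ ^ 2 < 2 * m * (1 / N) := by
      calc _ ≤ _ := h1
        _ < _ := hlt
        _ = _ := by ring
    exact lt_of_mul_lt_mul_left this (by positivity)
  have h3 := sq_sum_le_card_mul_sum_sq (s := Finset.univ) (f := fun i : ZMod N => ‖x (i + 1) - x i‖)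
  rw [Finset.card_univ, ZMod.card] at h3
  have h4 : (∑ i, ‖x (i + 1) - x i‖) ^ 2 ≤ 1 := by
    calc _ ≤ _ := h3
      _ ≤ (N : ℝ) * (1 / N) := by gcongr
      _ = 1 := by field_simp
  have h5 := dist_le_sum x i
  have h6 : ∑ i, ‖x (i + 1) - x i‖ ≤ 1 := by
    have h0 : 0 ≤ ∑ i, ‖x (i + 1) - x i‖ := Finset.sum_nonneg fun _ _ => norm_nonneg _
    nlinarith
  linarith

/-- clamp to `[0,1]` -/
def cl (s : ℝ) : ℝ := max 0 (min s 1)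

lemma cl_cont : Continuous cl := by unfold cl; fun_prop
lemma cl_nonneg (s : ℝ) : 0 ≤ cl s := le_max_left _ _
lemma cl_le (s : ℝ) : cl s ≤ 1 := max_le zero_le_one (min_le_right _ _)
lemma cl_zero : cl 0 = 0 := by simp [cl]
lemma cl_one : cl 1 = 1 := by simp [cl]

lemma not_Par_small (p : ℝ → ZMod N → E3) (hp : Continuous p) (hu : ∀ r, UnitPoly (p r))
    (hr : p π = revP (p 0)) (hs : ∀ r i, ‖p r i - p r 0‖ ≤ 1) : ¬ Par p := by
  intro hP
  let W : ℝ × ℝ → ZMod N → E3 := fun z i => (1 - cl z.2) • p z.1 i + cl z.2 • p z.1 0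
  have hin : ∀ r i, 1 / 2 ≤ ⟪p r i, p r 0⟫ := by
    intro r i
    have h1 := norm_sub_sq_real (p r i) (p r 0)
    rw [hu r i, hu r 0] at h1
    have := hs r i
    have := norm_nonneg (p r i - p r 0)
    nlinarith
  have hW : ∀ z i, 1 / 2 ≤ ⟪W z i, p z.1 0⟫ := by
    intro z i
    have := hin z.1 i
    have a := cl_nonneg z.2
    have b := cl_le z.2
    simp only [W]
    rw [inner_add_left, real_inner_smul_left, real_inner_smul_left, real_inner_self_eq_norm_sq,
      hu z.1 0]
    nlinarith
  have hW0 : ∀ z i, 0 < ‖W z i‖ := by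
    intro z i
    rw [norm_pos_iff]
    intro h0
    have := hW z i
    rw [h0, inner_zero_left] at this
    norm_num at this
  have hpi : ∀ i, Continuous fun r => p r i := fun i => (continuous_apply i).comp hp
  have hWc : ∀ i, Continuous fun z => W z i := by
    intro i
    have := hpi i
    have := hpi 0
    have := cl_cont
    simp only [W]
    fun_prop
  let H : ℝ × ℝ → ZMod N → E3 := fun z i => (‖W z i‖)⁻¹ • W z i
  have h := Par_homotopy H (continuous_pi fun i =>
      ((hWc i).norm.inv₀ fun z => (hW0 z i).ne').smul (hWc i)) ?_ ?_ ?_ ?_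
  · have e : (fun r => H (r, 1)) = fun r => fun _ : ZMod N => p r 0 := by
      funext r i
      simp only [H, W, cl_one]
      simp [hu r 0]
    rw [e] at h
    exact not_Par_const (fun r => p r 0) (fun r => hu r 0) h
  · intro z i
    simp only [H]
    rw [norm_smul, norm_inv, norm_norm, inv_mul_cancel₀ (hW0 z i).ne']
  · intro z i hi
    simp only [H] at hi
    have h1 := hW z i
    have h2 := hW z (i + 1)
    have h3 := congrArg (fun v => ⟪v, p z.1 0⟫) hi
    simp only [inner_neg_left, real_inner_smul_left] at h3
    have a1 := inv_pos.mpr (hW0 z i)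
    have a2 := inv_pos.mpr (hW0 z (i + 1))
    have b1 : 0 < ‖W z i‖⁻¹ * ⟪W z i, p z.1 0⟫ := mul_pos a1 (by linarith)
    have b2 : 0 < ‖W z (i+1)‖⁻¹ * ⟪W z (i+1), p z.1 0⟫ := mul_pos a2 (by linarith)
    linarith
  · intro s
    funext i
    simp only [H, W, hr, revP, neg_zero]
  · have e : (fun r => H (r, 0)) = p := by
      funext r i
      simp only [H, W, cl_zero]
      simp [hu r i]
    rw [e]; exact hP

lemma unitPoly_compact [NeZero N] : IsCompact {x : ZMod N → E3 | UnitPoly x} := by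
  have : {x : ZMod N → E3 | UnitPoly x} = Set.pi Set.univ fun _ => Metric.sphere (0 : E3) 1 := by
    ext x; simp [UnitPoly]
  rw [this]
  exact isCompact_univ_pi fun _ => isCompact_sphere _ _

theorem minimax_crit [NeZero N] (h : GoodF F G m K) (C : ℝ) (hC : C < 8 * m)
    (p : ℝ → ZMod N → E3) (hp : Continuous p) (hu : ∀ r, UnitPoly (p r))
    (hr : p π = revP (p 0)) (hSE : ∀ r, SE F (p r) ≤ C) (hP : Par p) :
    ∃ x : ZMod N → E3, UnitPoly x ∧ (∀ i, XE F G x i = 0) ∧ 2 * m / N ≤ SE F x ∧ SE F x ≤ C := by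
  by_contra hno
  push Not at hno
  have hK := h.K_ge
  let S : Set (ZMod N → E3) := {x | UnitPoly x} ∩ {x | 2 * m / N ≤ SE F x ∧ SE F x ≤ C}
  have hS : IsCompact S := by
    refine unitPoly_compact.inter_right ?_
    exact (isClosed_le continuous_const (SE_cont h)).inter
      (isClosed_le (SE_cont h) continuous_const)
  have hgc : Continuous fun x : ZMod N → E3 => ∑ i, ‖XE F G x i‖ ^ 2 :=
    continuous_finsetSum _ fun i _ => ((XE_cont h i).norm.pow 2)
  obtain ⟨η, hη, hηS⟩ : ∃ η > 0, ∀ x ∈ S, η ≤ ∑ i, ‖XE F G x i‖ ^ 2 := by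
    by_cases hne : S.Nonempty
    · obtain ⟨x, hxS, hx⟩ := hS.exists_isMinOn hne hgc.continuousOn
      refine ⟨∑ i, ‖XE F G x i‖ ^ 2, ?_, fun y hy => hx hy⟩
      by_contra hle
      have h0 : ∑ i, ‖XE F G x i‖ ^ 2 = 0 :=
        le_antisymm (not_lt.mp hle) (Finset.sum_nonneg fun _ _ => by positivity)
      rw [Finset.sum_eq_zero_iff_of_nonneg (fun _ _ => by positivity)] at h0
      have := hno x hxS.1 (fun i => by simpa using h0 i (Finset.mem_univ i)) hxS.2.1
      linarith [hxS.2.2]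
    · exact ⟨1, one_pos, fun x hx => absurd ⟨x, hx⟩ hne⟩
  set τ := 1 / (1000 * K) with hτ
  have hτ0 : 0 < τ := by positivity
  have hτK : τ * (1000 * K) = 1 := by rw [hτ]; field_simp
  let P : ℕ → ℝ → ZMod N → E3 := fun k r => (stepP F G τ)^[k] (p r)
  have hP1 : ∀ k r, P (k + 1) r = stepP F G τ (P k r) := fun k r => by
    simp only [P, Function.iterate_succ', Function.comp]
  have hstepc : ∀ σ, Continuous fun x : ZMod N → E3 => stepP F G σ x := fun σ =>
    (step_cont h).comp (Continuous.prodMk continuous_const continuous_id)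
  have hPc : ∀ k, Continuous (P k) := by
    intro k
    induction k with
    | zero => exact hp
    | succ k ih =>
      have : P (k + 1) = fun r => stepP F G τ (P k r) := funext (hP1 k)
      rw [this]; exact (hstepc τ).comp ih
  have hPu : ∀ k r, UnitPoly (P k r) := by
    intro k r
    induction k with
    | zero => exact hu r
    | succ k ih => rw [hP1]; exact step_unit τ _ ih
  have hPr : ∀ k, P k π = revP (P k 0) := by
    intro k
    induction k with
    | zero => exact hr
    | succ k ih => rw [hP1, hP1, ih, step_rev]
  have hdec : ∀ σ, 0 ≤ σ → σ ≤ τ → ∀ x : ZMod N → E3, UnitPoly x →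
      SE F (stepP F G σ x) ≤ SE F x := by
    intro σ h0 h1 x hx
    have := step_desc h σ h0 (by rw [← hτK]; gcongr) x hx
    have : 0 ≤ σ / 2 * ∑ i, ‖XE F G x i‖ ^ 2 :=
      mul_nonneg (by linarith) (Finset.sum_nonneg fun _ _ => by positivity)
    linarith
  have hPC : ∀ k r, SE F (P k r) ≤ C := by
    intro k r
    induction k with
    | zero => exact hSE r
    | succ k ih => rw [hP1]; exact (hdec τ hτ0.le le_rfl _ (hPu k r)).trans ih
  have hPP : ∀ k, Par (P k) := by
    intro k
    induction k with
    | zero => exact hP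
    | succ k ih =>
      have hcc := cl_cont
      have hPk := hPc k
      let H : ℝ × ℝ → ZMod N → E3 := fun z => stepP F G (τ * cl z.2) (P k z.1)
      have hle : ∀ s, τ * cl s ≤ τ := fun s => by nlinarith [cl_le s]
      have h0 : ∀ s, 0 ≤ τ * cl s := fun s => mul_nonneg hτ0.le (cl_nonneg s)
      have := Par_homotopy H ((step_cont h).comp (Continuous.prodMk (by fun_prop) (by fun_prop)))
        (fun z => step_unit _ _ (hPu k _))
        (fun z => nonAnti_of_SE h _ (step_unit _ _ (hPu k _))
          (lt_of_le_of_lt ((hdec _ (h0 _) (hle _) _ (hPu k _)).trans (hPC k _)) hC))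
        (fun s => by simp only [H]; rw [hPr, step_rev]) (by
          have : (fun r => H (r, 0)) = P k := by
            funext r i
            simp [H, cl_zero, stepP]
          rw [this]; exact ih)
      have e : (fun r => H (r, 1)) = P (k + 1) := by
        funext r
        simp only [H, cl_one, mul_one, hP1]
      rwa [e] at this
  have hdesc : ∀ (k : ℕ) r, SE F (P k r) < 2 * m / N ∨ SE F (P k r) ≤ C - k * (τ / 2 * η) := by
    intro k r
    induction k with
    | zero => right; simpa [P] using hSE r
    | succ k ih =>
      by_cases hlt : SE F (P k r) < 2 * m / N
      · left; rw [hP1]; exact lt_of_le_of_lt (hdec τ hτ0.le le_rfl _ (hPu k r)) hlt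
      · right
        have ih' := ih.resolve_left hlt
        have h1 := hηS (P k r) ⟨hPu k r, not_lt.mp hlt, hPC k r⟩
        have h2 := step_desc h τ hτ0.le hτK.le _ (hPu k r)
        rw [hP1]
        have h3 : τ / 2 * η ≤ τ / 2 * ∑ i, ‖XE F G (P k r) i‖ ^ 2 := by gcongr
        push_cast
        linarith
  obtain ⟨k, hk⟩ := exists_nat_gt (C / (τ / 2 * η))
  have hpos : 0 < τ / 2 * η := by positivity
  rw [div_lt_iff₀ hpos] at hk
  have hN : (0 : ℝ) < N := by exact_mod_cast Nat.pos_of_ne_zero (NeZero.ne N)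
  have hsm : ∀ r, SE F (P k r) < 2 * m / N := by
    intro r
    rcases hdesc k r with h1 | h1
    · exact h1
    · have : 0 < 2 * m / N := by have := h.m_pos; positivity
      linarith
  exact not_Par_small (P k) (hPc k) (hPu k) (hPr k) (fun r i => small_diam h _ (hPu k r) (hsm r) i)
    (hPP k)

end

section
/-! ### Section D: estimates for critical polygons -/

variable {F : E3 → ℝ} {G : E3 → E3} {m K : ℝ} {N : ℕ}

/-- Discrete momentum. -/
def pE (F : E3 → ℝ) (x : ZMod N → E3) (i : ZMod N) : E3 :=
  (F (x i) + F (x (i + 1))) • (x (i + 1) - x i)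

lemma inner_unit_left {a b : E3} (ha : ‖a‖ = 1) (hb : ‖b‖ = 1) :
    ⟪a, b - a⟫ = - (‖b - a‖ ^ 2 / 2) := by
  have := norm_sub_sq_real b a
  rw [ha, hb, real_inner_comm] at this
  rw [inner_sub_right, real_inner_self_eq_norm_sq, ha]
  linarith

lemma crit_eq (x : ZMod N → E3) (hx : UnitPoly x) (i : ZMod N) (hc : XE F G x i = 0) :
    pE F x i - pE F x (i - 1) = (1 / 2 : ℝ) •
      ((‖x (i + 1) - x i‖ ^ 2 + ‖x i - x (i - 1)‖ ^ 2) • G (x i)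
        - ((‖x (i + 1) - x i‖ ^ 2 + ‖x i - x (i - 1)‖ ^ 2) * ⟪x i, G (x i)⟫
          + (F (x i) + F (x (i + 1))) * ‖x (i + 1) - x i‖ ^ 2
          + (F (x (i - 1)) + F (x i)) * ‖x i - x (i - 1)‖ ^ 2) • x i) := by
  have h1 : ⟪x i, DE F G x i⟫ = (‖x (i + 1) - x i‖ ^ 2 + ‖x i - x (i - 1)‖ ^ 2) * ⟪x i, G (x i)⟫
          + (F (x i) + F (x (i + 1))) * ‖x (i + 1) - x i‖ ^ 2
          + (F (x (i - 1)) + F (x i)) * ‖x i - x (i - 1)‖ ^ 2 := by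
    have a1 := inner_unit_left (hx i) (hx (i + 1))
    have a2 := inner_unit_left (hx i) (hx (i - 1))
    unfold DE
    rw [inner_add_right, inner_add_right, real_inner_smul_right, real_inner_smul_right,
      real_inner_smul_right, ← neg_sub (x (i + 1)) (x i), ← neg_sub (x (i - 1)) (x i),
      inner_neg_right, inner_neg_right, a1, a2, norm_neg]
    ring
  have h2 : DE F G x i = ⟪x i, DE F G x i⟫ • x i := sub_eq_zero.mp hc
  rw [← h1, ← h2]
  unfold DE pE
  rw [sub_add_cancel]
  module

lemma crit_diff_le (h : GoodF F G m K) (x : ZMod N → E3) (hx : UnitPoly x) (i : ZMod N)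
    (hc : XE F G x i = 0) :
    ‖pE F x i - pE F x (i - 1)‖ ≤ 2 * K * (‖x (i + 1) - x i‖ ^ 2 + ‖x i - x (i - 1)‖ ^ 2) := by
  rw [crit_eq x hx i hc]
  have hK := h.K_ge
  set a := ‖x (i + 1) - x i‖ ^ 2
  set b := ‖x i - x (i - 1)‖ ^ 2
  have ha : 0 ≤ a := by positivity
  have hb : 0 ≤ b := by positivity
  have hG := h.G_le (x i)
  have f1 := h.lower _ (hx i)
  have f2 := h.lower _ (hx (i + 1))
  have f3 := h.lower _ (hx (i - 1))
  have g1 := h.upper _ (hx i)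
  have g2 := h.upper _ (hx (i + 1))
  have g3 := h.upper _ (hx (i - 1))
  have hm := h.m_pos
  have hin : |⟪x i, G (x i)⟫| ≤ K := by
    refine (abs_real_inner_le_norm _ _).trans ?_
    rw [hx i, one_mul]; exact hG
  have hin2 := (le_abs_self _).trans hin
  have hin3 := (neg_le_abs _).trans hin
  have e1 : ‖(a + b) • G (x i)‖ ≤ (a + b) * K := by
    rw [norm_smul, Real.norm_of_nonneg (by positivity)]; gcongr
  have e2 : ‖((a + b) * ⟪x i, G (x i)⟫ + (F (x i) + F (x (i + 1))) * a
      + (F (x (i - 1)) + F (x i)) * b) • x i‖ ≤ (a + b) * (3 * K) := by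
    rw [norm_smul, hx i, mul_one, Real.norm_eq_abs, abs_le]
    constructor <;> nlinarith
  rw [norm_smul]
  have := norm_sub_le ((a + b) • G (x i)) (((a + b) * ⟪x i, G (x i)⟫ + (F (x i) + F (x (i + 1))) * a
      + (F (x (i - 1)) + F (x i)) * b) • x i)
  rw [show ‖(1 / 2 : ℝ)‖ = 1 / 2 by norm_num]
  linarith

lemma crit_bounds (h : GoodF F G m K) (D : ℝ) (hD0 : 0 ≤ D) : ∃ L : ℝ, 0 ≤ L ∧
    ∀ (N : ℕ) [NeZero N] (x : ZMod N → E3), UnitPoly x → (∀ i, XE F G x i = 0) →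
      N * SE F x ≤ D → ∀ i, ‖pE F x i‖ ≤ L / N ∧ ‖x (i + 1) - x i‖ ≤ L / N ∧
        ‖pE F x (i + 1) - pE F x i‖ ≤ L / N ^ 2 := by
  have hm := h.m_pos
  have hK := h.K_ge
  -- constants
  set B := D / (2 * m) with hB
  have hB0 : 0 ≤ B := by positivity
  set C1 := 2 * K * Real.sqrt B + 2 * (4 * K * B) with hC1
  have hC10 : 0 ≤ C1 := by positivity
  set C2 := C1 / (2 * m) with hC2
  have hC20 : 0 ≤ C2 := by positivity
  refine ⟨C1 + C2 + 4 * K * C2 ^ 2, by positivity, ?_⟩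
  intro N _ x hx hc hSE
  have hN : (0 : ℝ) < N := by exact_mod_cast Nat.pos_of_ne_zero (NeZero.ne N)
  have hsum : ∑ i, ‖x (i + 1) - x i‖ ^ 2 ≤ B / N := by
    have h1 := SE_lower h x hx
    rw [hB, div_div, le_div_iff₀ (by positivity)]
    nlinarith
  obtain ⟨j, -, hj⟩ := Finset.exists_le_of_sum_le (s := Finset.univ)
    (f := fun i : ZMod N => ‖x (i + 1) - x i‖ ^ 2) (g := fun _ => B / N ^ 2)
    Finset.univ_nonempty (by
      rw [Finset.sum_const, Finset.card_univ, ZMod.card, nsmul_eq_mul]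
      refine hsum.trans (le_of_eq ?_)
      field_simp)
  have hF2 : ∀ i, 0 ≤ F (x i) + F (x (i + 1)) ∧ F (x i) + F (x (i + 1)) ≤ 2 * K
      ∧ 2 * m ≤ F (x i) + F (x (i + 1)) := fun i => by
    have := h.lower _ (hx i)
    have := h.lower _ (hx (i + 1))
    have := h.upper _ (hx i)
    have := h.upper _ (hx (i + 1))
    refine ⟨by linarith, by linarith, by linarith⟩
  have hpn : ∀ i, ‖pE F x i‖ = (F (x i) + F (x (i + 1))) * ‖x (i + 1) - x i‖ := fun i => by
    rw [pE, norm_smul, Real.norm_of_nonneg (hF2 i).1]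
  have hj2 : ‖x (j + 1) - x j‖ ≤ Real.sqrt B / N := by
    rw [← Real.sqrt_sq hN.le, ← Real.sqrt_div hB0]
    exact Real.le_sqrt_of_sq_le hj
  have hpj : ‖pE F x j‖ ≤ 2 * K * (Real.sqrt B / N) := by
    rw [hpn]
    have := hF2 j
    gcongr
    exact this.2.1
  have hTV : ∑ i, ‖pE F x (i + 1) - pE F x i‖ ≤ 4 * K * (B / N) := by
    have e1 : ∀ i ∈ Finset.univ, ‖pE F x (i + 1) - pE F x i‖
        ≤ 2 * K * ‖x (i + 1 + 1) - x (i + 1)‖ ^ 2 + 2 * K * ‖x (i + 1) - x i‖ ^ 2 := fun i _ => by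
      have := crit_diff_le h x hx (i + 1) (hc _)
      rw [add_sub_cancel_right] at this
      linarith
    refine (Finset.sum_le_sum e1).trans ?_
    rw [Finset.sum_add_distrib, ← Finset.mul_sum, ← Finset.mul_sum,
      sum_shift (fun i : ZMod N => ‖x (i + 1) - x i‖ ^ 2)]
    nlinarith
  have hp : ∀ i, ‖pE F x i‖ ≤ C1 / N := by
    intro i
    have h1 := dist_le_sum (pE F x) i
    have h2 := dist_le_sum (pE F x) j
    have h3 : ‖pE F x i‖ ≤ ‖pE F x j‖ + ‖pE F x i - pE F x 0‖ + ‖pE F x j - pE F x 0‖ := by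
      calc ‖pE F x i‖ = ‖pE F x j + (pE F x i - pE F x 0) - (pE F x j - pE F x 0)‖ := by
            congr 1; abel
        _ ≤ _ := norm_sub_le _ _
        _ ≤ _ := by gcongr; exact norm_add_le _ _
    have e : C1 / N = 2 * K * (Real.sqrt B / N) + 2 * (4 * K * (B / N)) := by rw [hC1]; ring
    rw [e]
    linarith
  have hd : ∀ i, ‖x (i + 1) - x i‖ ≤ C2 / N := by
    intro i
    have h1 := hp i
    rw [hpn] at h1
    have h2 : 2 * m * ‖x (i + 1) - x i‖ ≤ C1 / N :=
      (mul_le_mul_of_nonneg_right (hF2 i).2.2 (norm_nonneg _)).trans h1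
    rw [hC2, div_div, le_div_iff₀ (by positivity)]
    rw [le_div_iff₀ hN] at h2
    nlinarith
  intro i
  refine ⟨(hp i).trans ?_, (hd i).trans ?_, ?_⟩
  · gcongr; nlinarith [mul_nonneg (by linarith : 0 ≤ K) (sq_nonneg C2)]
  · gcongr; nlinarith [mul_nonneg (by linarith : 0 ≤ K) (sq_nonneg C2)]
  · have := crit_diff_le h x hx (i + 1) (hc _)
    rw [add_sub_cancel_right] at this
    have d1 := hd i
    have d2 := hd (i + 1)
    calc _ ≤ _ := this
      _ ≤ 2 * K * ((C2 / N) ^ 2 + (C2 / N) ^ 2) := by gcongr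
      _ = (4 * K * C2 ^ 2) / N ^ 2 := by ring
      _ ≤ _ := by gcongr; linarith

end

section
/-! ### Section D2: limits of discrete curves along an ultrafilter -/

section lim
open Filter Topology

/-- The filter of pairs `(N, k)` with `N → ∞` along the hyperfilter and `k / N → t`. -/
def LF (t : ℝ) : Filter (ℕ × ℤ) :=
  (((hyperfilter ℕ : Ultrafilter ℕ) : Filter ℕ) ×ˢ (⊤ : Filter ℤ)) ⊓
    comap (fun q : ℕ × ℤ => (q.2 : ℝ) / q.1) (𝓝 t)

lemma hyper_le : ((hyperfilter ℕ : Ultrafilter ℕ) : Filter ℕ) ≤ atTop :=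
  Nat.hyperfilter_le_atTop

lemma tendsto_LF {A : Type*} {l : Filter A} {g : A → ℕ × ℤ} {t : ℝ} :
    Tendsto g l (LF t) ↔ Tendsto (fun a => (g a).1) l ((hyperfilter ℕ : Ultrafilter ℕ) : Filter ℕ)
      ∧ Tendsto (fun a => ((g a).2 : ℝ) / (g a).1) l (𝓝 t) := by
  unfold LF
  rw [tendsto_inf, tendsto_comap_iff, tendsto_prod_iff']
  simp [Function.comp_def]

lemma LF_fst (t : ℝ) : Tendsto (fun q : ℕ × ℤ => q.1) (LF t)
    ((hyperfilter ℕ : Ultrafilter ℕ) : Filter ℕ) := (tendsto_LF.mp tendsto_id).1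

lemma LF_quot (t : ℝ) : Tendsto (fun q : ℕ × ℤ => (q.2 : ℝ) / q.1) (LF t) (𝓝 t) :=
  (tendsto_LF.mp tendsto_id).2

lemma LF_inv (t : ℝ) : Tendsto (fun q : ℕ × ℤ => (1 : ℝ) / q.1) (LF t) (𝓝 0) :=
  (tendsto_one_div_atTop_nhds_zero_nat (𝕜 := ℝ)).comp ((LF_fst t).mono_right hyper_le)

lemma LF_pos (t : ℝ) : ∀ᶠ q : ℕ × ℤ in LF t, 0 < q.1 :=
  ((LF_fst t).mono_right hyper_le).eventually (eventually_gt_atTop 0)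

lemma LF_shift (t : ℝ) (d : ℤ) : Tendsto (fun q : ℕ × ℤ => (q.1, q.2 + d)) (LF t) (LF t) := by
  rw [tendsto_LF]
  refine ⟨LF_fst t, ?_⟩
  have := (LF_quot t).add ((LF_inv t).const_mul (d : ℝ))
  rw [mul_zero, add_zero] at this
  refine this.congr fun q => ?_
  push_cast; ring

lemma LF_period (t : ℝ) : Tendsto (fun q : ℕ × ℤ => (q.1, q.2 + q.1)) (LF t) (LF (t + 1)) := by
  rw [tendsto_LF]
  refine ⟨LF_fst t, ?_⟩
  refine ((LF_quot t).add_const 1).congr' ?_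
  filter_upwards [LF_pos t] with q hq
  have : (q.1 : ℝ) ≠ 0 := by positivity
  push_cast; field_simp

lemma floor_LF (t : ℝ) : Tendsto (fun N : ℕ => (N, ⌊(N : ℝ) * t⌋))
    ((hyperfilter ℕ : Ultrafilter ℕ) : Filter ℕ) (LF t) := by
  rw [tendsto_LF]
  refine ⟨tendsto_id, ?_⟩
  have h0 := (tendsto_one_div_atTop_nhds_zero_nat (𝕜 := ℝ)).mono_left hyper_le
  have hl : Tendsto (fun N : ℕ => t - 1 / (N : ℝ)) ((hyperfilter ℕ : Ultrafilter ℕ) : Filter ℕ)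
      (𝓝 t) := by simpa using h0.const_sub t
  have hpos : ∀ᶠ N : ℕ in ((hyperfilter ℕ : Ultrafilter ℕ) : Filter ℕ), 0 < N :=
    hyper_le (eventually_gt_atTop 0)
  refine tendsto_of_tendsto_of_tendsto_of_le_of_le' hl tendsto_const_nhds ?_ ?_
  · filter_upwards [hpos] with N hN
    have hN : (0 : ℝ) < N := by exact_mod_cast hN
    rw [le_div_iff₀ hN, sub_mul, div_mul_cancel₀ _ hN.ne']
    have := Int.sub_one_lt_floor ((N : ℝ) * t)
    linarith
  · filter_upwards [hpos] with N hN
    have hN : (0 : ℝ) < N := by exact_mod_cast hN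
    rw [div_le_iff₀ hN]
    have := Int.floor_le ((N : ℝ) * t)
    linarith

instance LF_neBot (t : ℝ) : (LF t).NeBot := (floor_LF t).neBot

lemma lim_exists (b : ℕ → ℤ → E3) (B L : ℝ)
    (hB : ∀ᶠ N in ((hyperfilter ℕ : Ultrafilter ℕ) : Filter ℕ), ∀ k, ‖b N k‖ ≤ B)
    (hL : ∀ᶠ N in ((hyperfilter ℕ : Ultrafilter ℕ) : Filter ℕ), ∀ k, ‖b N (k + 1) - b N k‖ ≤ L / N) :
    ∃ β : ℝ → E3, ∀ t, Tendsto (fun q : ℕ × ℤ => b q.1 q.2) (LF t) (𝓝 (β t)) := by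
  have hL' : ∀ᶠ N in ((hyperfilter ℕ : Ultrafilter ℕ) : Filter ℕ), ∀ k j : ℤ,
      ‖b N k - b N j‖ ≤ L * (|(k : ℝ) - j| / N) := by
    filter_upwards [hL] with N hN
    have key : ∀ (j : ℤ) (n : ℕ), ‖b N (j + n) - b N j‖ ≤ n * (L / N) := by
      intro j n
      induction n with
      | zero => simp
      | succ n ih =>
        have h1 := hN (j + n)
        calc ‖b N (j + (n + 1 : ℕ)) - b N j‖
            = ‖(b N (j + n + 1) - b N (j + n)) + (b N (j + n) - b N j)‖ := by
              push_cast; rw [add_assoc]; congr 1; abel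
          _ ≤ _ := norm_add_le _ _
          _ ≤ _ := by push_cast; linarith
    intro k j
    rcases le_total j k with hjk | hjk
    · obtain ⟨n, rfl⟩ := Int.le.dest hjk
      have := key j n
      push_cast
      rw [add_sub_cancel_left, abs_of_nonneg (by positivity)]
      refine this.trans (le_of_eq ?_); ring
    · obtain ⟨n, rfl⟩ := Int.le.dest hjk
      have := key k n
      rw [norm_sub_rev]
      push_cast
      rw [show (k : ℝ) - (k + n) = -n by ring, abs_neg, abs_of_nonneg (by positivity)]
      refine this.trans (le_of_eq ?_); ring
  have hex : ∀ t : ℝ, ∃ y : E3, Tendsto (fun N : ℕ => b N ⌊(N : ℝ) * t⌋)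
      ((hyperfilter ℕ : Ultrafilter ℕ) : Filter ℕ) (𝓝 y) := by
    intro t
    have hc : IsCompact (Metric.closedBall (0 : E3) B) := isCompact_closedBall _ _
    obtain ⟨y, -, hy⟩ := hc.ultrafilter_le_nhds
      ((hyperfilter ℕ).map (fun N : ℕ => b N ⌊(N : ℝ) * t⌋)) (by
        rw [le_principal_iff]
        change ∀ᶠ N in ((hyperfilter ℕ : Ultrafilter ℕ) : Filter ℕ), _
        filter_upwards [hB] with N hN
        simpa using hN _)
    exact ⟨y, hy⟩
  choose β hβ using hex
  refine ⟨β, fun t => ?_⟩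
  have h1 : Tendsto (fun q : ℕ × ℤ => b q.1 ⌊(q.1 : ℝ) * t⌋) (LF t) (𝓝 (β t)) :=
    (hβ t).comp (LF_fst t)
  have h2 : Tendsto (fun q : ℕ × ℤ => b q.1 q.2 - b q.1 ⌊(q.1 : ℝ) * t⌋) (LF t) (𝓝 0) := by
    have hq := (LF_quot t).sub ((tendsto_LF.mp (floor_LF t)).2.comp (LF_fst t))
    have hq' := (hq.abs).const_mul L
    rw [sub_self, abs_zero, mul_zero] at hq'
    refine squeeze_zero_norm' ?_ hq'
    filter_upwards [(LF_fst t).eventually hL', LF_pos t] with q hq hpos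
    refine (hq _ _).trans (le_of_eq ?_)
    have : (0 : ℝ) < q.1 := by exact_mod_cast hpos
    simp only [Function.comp]
    rw [← sub_div, abs_div, abs_of_pos this]
  have := h2.add h1
  simpa using this

lemma lim_deriv (a : ℕ → ℤ → E3) (α : ℝ → E3) (B : E3) (t : ℝ)
    (ha : ∀ t, Tendsto (fun q : ℕ × ℤ => a q.1 q.2) (LF t) (𝓝 (α t)))
    (hB : Tendsto (fun q : ℕ × ℤ => (q.1 : ℝ) • (a q.1 (q.2 + 1) - a q.1 q.2)) (LF t) (𝓝 B)) :
    HasDerivAt α B t := by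
  rw [hasDerivAt_iff_isLittleO, Asymptotics.isLittleO_iff]
  intro ε hε
  have h1 : ∀ᶠ q : ℕ × ℤ in LF t, ‖(q.1 : ℝ) • (a q.1 (q.2 + 1) - a q.1 q.2) - B‖ ≤ ε := by
    have := (Metric.tendsto_nhds.mp hB) ε hε
    filter_upwards [this] with q hq
    rw [dist_eq_norm] at hq; exact hq.le
  -- unpack the filter
  obtain ⟨S, hS, δ, hδ, hSδ⟩ : ∃ S ∈ ((hyperfilter ℕ : Ultrafilter ℕ) : Filter ℕ), ∃ δ > 0,
      ∀ N ∈ S, ∀ k : ℤ, |(k : ℝ) / N - t| < δ →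
        ‖(N : ℝ) • (a N (k + 1) - a N k) - B‖ ≤ ε := by
    unfold LF at h1
    rw [eventually_inf] at h1
    obtain ⟨s, hs, w, hw, hsw⟩ := h1
    rw [prod_top, mem_comap] at hs
    obtain ⟨S, hS, hSs⟩ := hs
    rw [mem_comap] at hw
    obtain ⟨W, hW, hWw⟩ := hw
    obtain ⟨δ, hδ, hδW⟩ := Metric.mem_nhds_iff.mp hW
    refine ⟨S, hS, δ, hδ, fun N hN k hk => hsw (N, k) ⟨hSs hN, hWw (hδW ?_)⟩⟩
    rw [Metric.mem_ball, Real.dist_eq]; exact hk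
  -- telescoping
  have tele : ∀ N ∈ S, 0 < N → ∀ (k : ℤ) (n : ℕ), |(k : ℝ) / N - t| < δ →
      |((k + n : ℤ) : ℝ) / N - t| < δ →
      ‖a N (k + n) - a N k - ((n : ℝ) / N) • B‖ ≤ ε * ((n : ℝ) / N) := by
    intro N hN hN0 k n hk hkn
    have hNr : (0 : ℝ) < N := by exact_mod_cast hN0
    have hk' := abs_lt.mp hk
    have hkn' := abs_lt.mp hkn
    have : ∀ j : ℕ, j ≤ n → ‖a N (k + j) - a N k - ((j : ℝ) / N) • B‖ ≤ ε * ((j : ℝ) / N) := by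
      intro j
      induction j with
      | zero => intro _; simp
      | succ j ih =>
        intro hj
        have ih := ih (by omega)
        have hj' : (j : ℝ) ≤ n := by exact_mod_cast (by omega : j ≤ n)
        have hin : |((k + j : ℤ) : ℝ) / N - t| < δ := by
          rw [abs_lt]
          push_cast at hkn' ⊢
          constructor
          · have : (k : ℝ) / N ≤ (k + j) / N := by gcongr; simp
            linarith
          · have : ((k : ℝ) + j) / N ≤ (k + n) / N := by gcongr
            linarith
        have h2 := hSδ N hN _ hin
        have e : a N (k + (j + 1 : ℕ)) - a N k - (((j + 1 : ℕ) : ℝ) / N) • B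
            = (a N (k + j) - a N k - ((j : ℝ) / N) • B)
              + (1 / (N : ℝ)) • ((N : ℝ) • (a N (k + j + 1) - a N (k + j)) - B) := by
          rw [smul_sub, smul_smul, one_div_mul_cancel hNr.ne']
          push_cast
          rw [add_assoc]
          module
        rw [e]
        refine (norm_add_le _ _).trans ?_
        rw [norm_smul, Real.norm_of_nonneg (by positivity)]
        have : 1 / (N : ℝ) * ‖(N : ℝ) • (a N (k + j + 1) - a N (k + j)) - B‖ ≤ 1 / N * ε := by
          gcongr
        push_cast
        calc _ ≤ ε * ((j : ℝ) / N) + 1 / N * ε := add_le_add ih this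
          _ = _ := by ring
    exact this n le_rfl
  have hpos : ∀ᶠ N : ℕ in ((hyperfilter ℕ : Ultrafilter ℕ) : Filter ℕ), 0 < N :=
    hyper_le (eventually_gt_atTop 0)
  have hball : ∀ᶠ s in 𝓝 t, |s - t| < δ := by
    have := Metric.ball_mem_nhds t hδ
    filter_upwards [this] with s hs
    rwa [Metric.mem_ball, Real.dist_eq] at hs
  -- ordered version
  have main : ∀ s1 s2 : ℝ, s1 ≤ s2 → |s1 - t| < δ → |s2 - t| < δ →
      ‖α s2 - α s1 - (s2 - s1) • B‖ ≤ ε * (s2 - s1) := by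
    intro s1 s2 h12 hs1 hs2
    have q1 := (tendsto_LF.mp (floor_LF s1)).2
    have q2 := (tendsto_LF.mp (floor_LF s2)).2
    have a1 := (ha s1).comp (floor_LF s1)
    have a2 := (ha s2).comp (floor_LF s2)
    have lhs := ((a2.sub a1).sub ((q2.sub q1).smul_const B)).norm
    have rhs := (q2.sub q1).const_mul ε
    refine le_of_tendsto_of_tendsto lhs rhs ?_
    have w1 := ((q1.sub_const t).abs).eventually (gt_mem_nhds hs1)
    have w2 := ((q2.sub_const t).abs).eventually (gt_mem_nhds hs2)
    filter_upwards [w1, w2, hS, hpos] with N hw1 hw2 hNS hN0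
    have hle : ⌊(N : ℝ) * s1⌋ ≤ ⌊(N : ℝ) * s2⌋ := Int.floor_mono (by gcongr)
    obtain ⟨n, hn⟩ := Int.le.dest hle
    simp only [Function.comp] at *
    rw [← hn] at hw2 ⊢
    have := tele N hNS hN0 _ n hw1 hw2
    have e : ((⌊(N : ℝ) * s1⌋ + (n : ℤ) : ℤ) : ℝ) / N - (⌊(N : ℝ) * s1⌋ : ℝ) / N = (n : ℝ) / N := by
      push_cast; ring
    rw [e]; exact this
  filter_upwards [hball] with s hs
  have ht : |t - t| < δ := by simpa using hδ
  rcases le_total t s with h | h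
  · have := main t s h ht hs
    rw [Real.norm_of_nonneg (by linarith : 0 ≤ s - t)]
    exact this
  · have := main s t h hs ht
    rw [Real.norm_of_nonpos (by linarith : s - t ≤ 0)]
    rw [← norm_neg]
    calc _ = ‖α t - α s - (t - s) • B‖ := by congr 1; module
      _ ≤ _ := this
      _ = _ := by ring

end lim

end

section
/-! ### Section D3: the limit closed geodesic -/

section lim
open Filter Topology

variable {F : E3 → ℝ} {G : E3 → E3} {m K : ℝ}

/-- Geodesic equation (in ambient, energy form). -/
structure GeodEq (F : E3 → ℝ) (G : E3 → E3) (c v : ℝ → E3) (e : ℝ) : Prop where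
  unit : ∀ t, ‖c t‖ = 1
  vel : ∀ t, HasDerivAt c (v t) t
  ode : ∀ t, HasDerivAt (fun s => F (c s) • v s)
    ((‖v t‖ ^ 2 / 2) • (G (c t) - ⟪c t, G (c t)⟫ • c t) - (F (c t) * ‖v t‖ ^ 2) • c t) t
  energy : ∀ t, F (c t) * ‖v t‖ ^ 2 = e

lemma orth_of_unit {c v : ℝ → E3} (hu : ∀ t, ‖c t‖ = 1) (hv : ∀ t, HasDerivAt c (v t) t) (t : ℝ) :
    ⟪c t, v t⟫ = 0 := by
  have h1 := (hv t).norm_sq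
  have h2 : (fun s => ‖c s‖ ^ 2) = fun _ => (1 : ℝ) := by funext s; rw [hu]; norm_num
  rw [h2] at h1
  have := h1.unique (hasDerivAt_const t 1)
  linarith

lemma energy_const (h : GoodF F G m K) {c v : ℝ → E3} (hu : ∀ t, ‖c t‖ = 1)
    (hv : ∀ t, HasDerivAt c (v t) t)
    (ho : ∀ t, HasDerivAt (fun s => F (c s) • v s)
      ((‖v t‖ ^ 2 / 2) • (G (c t) - ⟪c t, G (c t)⟫ • c t) - (F (c t) * ‖v t‖ ^ 2) • c t) t) :
    ∀ t s, F (c t) * ‖v t‖ ^ 2 = F (c s) * ‖v s‖ ^ 2 := by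
  have hFpos : ∀ t, 0 < F (c t) := fun t => h.m_pos.trans_le (h.lower _ (hu t))
  have hFc : ∀ t, HasDerivAt (fun s => F (c s)) ⟪G (c t), v t⟫ t := fun t => by
    exact (h.deriv (c t)).comp_hasDerivAt t (hv t)
  have heq : ∀ t, F (c t) * ‖v t‖ ^ 2 = ‖F (c t) • v t‖ ^ 2 / F (c t) := fun t => by
    have := hFpos t
    rw [norm_smul, Real.norm_of_nonneg this.le]
    field_simp
  have hd : ∀ t, HasDerivAt (fun s => ‖F (c s) • v s‖ ^ 2 / F (c s)) 0 t := fun t => by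
    have h1 := (ho t).norm_sq.div (hFc t) (hFpos t).ne'
    refine h1.congr_deriv ?_
    have o := orth_of_unit hu hv t
    have o' : ⟪v t, c t⟫ = 0 := by rw [real_inner_comm]; exact o
    have := (hFpos t).ne'
    rw [inner_sub_right, real_inner_smul_right, real_inner_smul_right, inner_sub_right,
      real_inner_smul_right, real_inner_smul_left, real_inner_smul_left, o', norm_smul,
      Real.norm_of_nonneg (hFpos t).le, real_inner_comm (G (c t)) (v t)]
    field_simp
    ring
  intro t s
  rw [heq, heq]
  have hdiff : Differentiable ℝ (fun s => ‖F (c s) • v s‖ ^ 2 / F (c s)) :=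
    fun t => (hd t).differentiableAt
  exact is_const_of_deriv_eq_zero hdiff (fun t => (hd t).deriv) t s

theorem limit_curve (h : GoodF F G m K) (D : ℕ → ℝ) (D0 : ℝ) (hD : Tendsto D atTop (𝓝 D0))
    (hcrit : ∀ᶠ N : ℕ in atTop, ∃ (_ : NeZero N) (x : ZMod N → E3), UnitPoly x ∧
      (∀ i, XE F G x i = 0) ∧ 2 * m ≤ N * SE F x ∧ N * SE F x ≤ D N) :
    ∃ (c v : ℝ → E3) (e : ℝ), GeodEq F G c v e ∧ m ≤ e ∧ 2 * e ≤ D0 ∧ ∀ t, c (t + 1) = c t := by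
  have hm := h.m_pos
  let U : Filter ℕ := ((hyperfilter ℕ : Ultrafilter ℕ) : Filter ℕ)
  have hex : ∀ N : ℕ, ∃ x : ZMod N → E3, (∃ (_ : NeZero N) (x : ZMod N → E3), UnitPoly x ∧
      (∀ i, XE F G x i = 0) ∧ 2 * m ≤ N * SE F x ∧ N * SE F x ≤ D N) →
      ∃ (_ : NeZero N), UnitPoly x ∧
      (∀ i, XE F G x i = 0) ∧ 2 * m ≤ N * SE F x ∧ N * SE F x ≤ D N := by
    intro N
    by_cases hN : ∃ (_ : NeZero N) (x : ZMod N → E3), UnitPoly x ∧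
      (∀ i, XE F G x i = 0) ∧ 2 * m ≤ N * SE F x ∧ N * SE F x ≤ D N
    · obtain ⟨hz, x, hx⟩ := hN
      exact ⟨x, fun _ => ⟨hz, hx⟩⟩
    · exact ⟨fun _ => 0, fun h => absurd h hN⟩
  choose X hX using hex
  have hgood : ∀ᶠ N in U, ∃ (_ : NeZero N), UnitPoly (X N) ∧
      (∀ i, XE F G (X N) i = 0) ∧ 2 * m ≤ N * SE F (X N) ∧ N * SE F (X N) ≤ D N :=
    hyper_le (hcrit.mono fun N hN => hX N hN)
  have hD1 : ∀ᶠ N in U, D N ≤ |D0| + 1 := by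
    refine hyper_le ?_
    have : D0 < |D0| + 1 := by linarith [le_abs_self D0]
    exact (hD.eventually (gt_mem_nhds this)).mono fun _ h => le_of_lt h
  obtain ⟨L, hL0, hL⟩ := crit_bounds h (|D0| + 1) (by positivity)
  have hpos : ∀ᶠ N : ℕ in U, 0 < N := hyper_le (eventually_gt_atTop 0)
  have hbd : ∀ᶠ N in U, ∀ i, ‖pE F (X N) i‖ ≤ L / N ∧ ‖X N (i + 1) - X N i‖ ≤ L / N ∧
        ‖pE F (X N) (i + 1) - pE F (X N) i‖ ≤ L / N ^ 2 := by
    filter_upwards [hgood, hD1] with N hN hDN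
    obtain ⟨hz, h1, h2, h3, h4⟩ := hN
    exact hL N (X N) h1 h2 (h4.trans hDN)
  let x : ℕ → ℤ → E3 := fun N k => X N (k : ZMod N)
  let P : ℕ → ℤ → E3 := fun N k => (N : ℝ) • pE F (X N) (k : ZMod N)
  have hxu : ∀ᶠ N in U, ∀ k, ‖x N k‖ = 1 := by
    filter_upwards [hgood] with N hN k
    obtain ⟨hz, h1, h2, h3, h4⟩ := hN
    exact h1 _
  obtain ⟨c, hc⟩ := lim_exists x 1 L (hxu.mono fun N hN k => (hN k).le) (by
    filter_upwards [hbd] with N hN k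
    have := (hN k).2.1
    simpa [x] using this)
  obtain ⟨w, hw⟩ := lim_exists P L L (by
      filter_upwards [hbd, hpos] with N hN hN0 k
      have := (hN k).1
      have hNr : (0 : ℝ) < N := by exact_mod_cast hN0
      simp only [P]
      rw [norm_smul, Real.norm_of_nonneg hNr.le]
      rw [le_div_iff₀ hNr] at this
      linarith) (by
      filter_upwards [hbd, hpos] with N hN hN0 k
      have := (hN k).2.2
      have hNr : (0 : ℝ) < N := by exact_mod_cast hN0
      simp only [P]
      push_cast
      rw [← smul_sub, norm_smul, Real.norm_of_nonneg hNr.le]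
      calc (N : ℝ) * _ ≤ N * (L / N ^ 2) := by gcongr
        _ = L / N := by field_simp)
  have hcu : ∀ t, ‖c t‖ = 1 := fun t => by
    have h1 := (hc t).norm
    have h2 : ∀ᶠ q : ℕ × ℤ in LF t, ‖x q.1 q.2‖ = 1 :=
      ((LF_fst t).eventually hxu).mono fun q hq => hq _
    exact tendsto_nhds_unique (h1.congr' h2) tendsto_const_nhds
  have hFpos : ∀ t, 0 < F (c t) := fun t => h.m_pos.trans_le (h.lower _ (hcu t))
  have hc1 : ∀ t, Tendsto (fun q : ℕ × ℤ => x q.1 (q.2 + 1)) (LF t) (𝓝 (c t)) := fun t =>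
    (hc t).comp (LF_shift t 1)
  have hFt : ∀ t, Tendsto (fun q : ℕ × ℤ => F (x q.1 q.2)) (LF t) (𝓝 (F (c t))) := fun t =>
    (h.F_cont.tendsto _).comp (hc t)
  have hFt1 : ∀ t, Tendsto (fun q : ℕ × ℤ => F (x q.1 (q.2 + 1))) (LF t) (𝓝 (F (c t))) := fun t =>
    (h.F_cont.tendsto _).comp (hc1 t)
  let v : ℝ → E3 := fun t => (F (c t) + F (c t))⁻¹ • w t
  have hvd : ∀ t, Tendsto (fun q : ℕ × ℤ => (q.1 : ℝ) • (x q.1 (q.2 + 1) - x q.1 q.2)) (LF t)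
      (𝓝 (v t)) := fun t => by
    have h1 := (((hFt t).add (hFt1 t)).inv₀ (by have := hFpos t; positivity)).smul (hw t)
    refine h1.congr' ?_
    have hu2 : ∀ᶠ q : ℕ × ℤ in LF t, ∀ k, ‖x q.1 k‖ = 1 := (LF_fst t).eventually hxu
    filter_upwards [hu2] with q hq
    have f1 := h.lower _ (hq q.2)
    have f2 := h.lower _ (hq (q.2 + 1))
    simp only [P, pE, x] at *
    push_cast at *
    rw [smul_comm (q.1 : ℝ), smul_smul, inv_mul_cancel₀ (by linarith), one_smul]
  have hvel : ∀ t, HasDerivAt c (v t) t := fun t => lim_deriv x c (v t) t hc (hvd t)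
  have hwv : ∀ t, w t = (2 * F (c t)) • v t := fun t => by
    simp only [v]
    have := hFpos t
    rw [smul_smul, ← two_mul, mul_inv_cancel₀ (by positivity), one_smul]
  clear_value v
  have hwd : ∀ t, HasDerivAt w ((1 / 2 : ℝ) • ((‖v t‖ ^ 2 + ‖v t‖ ^ 2) • G (c t)
      - ((‖v t‖ ^ 2 + ‖v t‖ ^ 2) * ⟪c t, G (c t)⟫ + (F (c t) + F (c t)) * ‖v t‖ ^ 2
        + (F (c t) + F (c t)) * ‖v t‖ ^ 2) • c t)) t := fun t => by
    refine lim_deriv P w _ t hw ?_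
    have n0 := ((hvd t).norm).pow 2
    have n1 := (((hvd t).comp (LF_shift t 1)).norm).pow 2
    have f0 := hFt t
    have f1 := hFt1 t
    have f2 := (hFt1 t).comp (LF_shift t 1)
    have g1 := (h.G_cont.tendsto _).comp (hc1 t)
    have i1 := (hc1 t).inner (𝕜 := ℝ) g1
    have lim := (((n1.add n0).smul g1).sub (((((n1.add n0).mul i1).add ((f1.add f2).mul n1)).add
      ((f0.add f1).mul n0)).smul (hc1 t))).const_smul (1 / 2 : ℝ)
    refine lim.congr' ?_
    filter_upwards [(LF_fst t).eventually hgood] with q hq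
    obtain ⟨hz, h1, h2, h3, h4⟩ := hq
    have := crit_eq (X q.1) h1 ((q.2 : ZMod q.1) + 1) (h2 _)
    rw [add_sub_cancel_right] at this
    simp only [P, x, Function.comp]
    push_cast
    rw [← smul_sub, this]
    simp only [norm_smul, mul_pow, Real.norm_natCast]
    module
  have hode : ∀ t, HasDerivAt (fun s => F (c s) • v s)
      ((‖v t‖ ^ 2 / 2) • (G (c t) - ⟪c t, G (c t)⟫ • c t) - (F (c t) * ‖v t‖ ^ 2) • c t) t := by
    intro t
    have h1 := (hwd t).const_smul (1 / 2 : ℝ)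
    have e1 : (fun s => F (c s) • v s) = (1 / 2 : ℝ) • w := by
      funext s
      simp only [Pi.smul_apply]
      rw [hwv s]; module
    rw [e1]
    refine h1.congr_deriv ?_
    module
  have hen := energy_const h hcu hvel hode
  have hedge : ∀ t, Tendsto (fun q : ℕ × ℤ => (F (x q.1 q.2) + F (x q.1 (q.2 + 1))) *
      ‖(q.1 : ℝ) • (x q.1 (q.2 + 1) - x q.1 q.2)‖ ^ 2) (LF t) (𝓝 (2 * (F (c 0) * ‖v 0‖ ^ 2))) := by
    intro t
    have := ((hFt t).add (hFt1 t)).mul ((hvd t).norm.pow 2)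
    convert this using 2
    rw [hen 0 t]; ring
  -- extraction of a limit for a sequence of vertices
  have hsub : ∀ I : ∀ N : ℕ, ZMod N, Tendsto (fun N : ℕ =>
      (F (X N (I N)) + F (X N (I N + 1))) * ‖(N : ℝ) • (X N (I N + 1) - X N (I N))‖ ^ 2) U
      (𝓝 (2 * (F (c 0) * ‖v 0‖ ^ 2))) := by
    intro I
    let k : ℕ → ℤ := fun N => ((I N).val : ℤ)
    obtain ⟨t, -, ht⟩ := (isCompact_Icc (a := (0 : ℝ)) (b := 1)).ultrafilter_le_nhds
      ((hyperfilter ℕ).map (fun N : ℕ => (k N : ℝ) / N)) (by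
        rw [le_principal_iff]
        change ∀ᶠ N in U, _
        filter_upwards [hpos] with N hN
        have : NeZero N := ⟨hN.ne'⟩
        have hNr : (0 : ℝ) < N := by exact_mod_cast hN
        have hlt : ((I N).val : ℝ) ≤ N := by exact_mod_cast (ZMod.val_lt (I N)).le
        change (k N : ℝ) / N ∈ Set.Icc (0 : ℝ) 1
        simp only [k, Int.cast_natCast]
        exact ⟨by positivity, by rw [div_le_one hNr]; exact hlt⟩)
    have hk : Tendsto (fun N => (N, k N)) U (LF t) := tendsto_LF.mpr ⟨tendsto_id, ht⟩
    refine ((hedge t).comp hk).congr' ?_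
    filter_upwards [hpos] with N hN
    have : NeZero N := ⟨hN.ne'⟩
    simp only [Function.comp, x, k]
    push_cast
    rw [ZMod.natCast_val, ZMod.cast_id']
    rfl
  have hI : ∀ N : ℕ, ∃ i j : ZMod N, ∀ _ : NeZero N,
      N * SE F (X N) ≤ (F (X N i) + F (X N (i + 1))) * ‖(N : ℝ) • (X N (i + 1) - X N i)‖ ^ 2 ∧
      (F (X N j) + F (X N (j + 1))) * ‖(N : ℝ) • (X N (j + 1) - X N j)‖ ^ 2 ≤ N * SE F (X N) := by
    intro N
    by_cases hz : N = 0
    · exact ⟨0, 0, fun h => absurd hz h.ne⟩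
    have : NeZero N := ⟨hz⟩
    have hNr : (0 : ℝ) < N := by exact_mod_cast Nat.pos_of_ne_zero hz
    have hsum : ∑ i, (F (X N i) + F (X N (i + 1))) * ‖(N : ℝ) • (X N (i + 1) - X N i)‖ ^ 2
        = ∑ _i : ZMod N, N * SE F (X N) := by
      rw [Finset.sum_const, Finset.card_univ, ZMod.card, nsmul_eq_mul, SE, Finset.mul_sum,
        Finset.mul_sum]
      refine Finset.sum_congr rfl fun i _ => ?_
      rw [norm_smul, Real.norm_natCast]; ring
    obtain ⟨i, -, hi⟩ := Finset.exists_le_of_sum_le Finset.univ_nonempty hsum.ge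
    obtain ⟨j, -, hj⟩ := Finset.exists_le_of_sum_le Finset.univ_nonempty hsum.le
    exact ⟨i, j, fun _ => ⟨hi, hj⟩⟩
  choose I J hIJ using hI
  refine ⟨c, v, F (c 0) * ‖v 0‖ ^ 2, ⟨hcu, hvel, hode, fun t => hen t 0⟩, ?_, ?_, ?_⟩
  · have : 2 * m ≤ 2 * (F (c 0) * ‖v 0‖ ^ 2) := by
      refine ge_of_tendsto (hsub I) ?_
      filter_upwards [hgood] with N hN
      obtain ⟨hz, h1, h2, h3, h4⟩ := hN
      exact h3.trans (hIJ N hz).1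
    linarith
  · refine le_of_tendsto_of_tendsto (hsub J) (hD.mono_left hyper_le) ?_
    filter_upwards [hgood] with N hN
    obtain ⟨hz, h1, h2, h3, h4⟩ := hN
    exact (hIJ N hz).2.trans h4
  · intro t
    refine tendsto_nhds_unique ((hc (t + 1)).comp (LF_period t)) ?_
    refine (hc t).congr fun q => ?_
    simp [x]

end lim

end

section
/-! ### Section E: the family of great circles -/

/-- The family of great circles through the poles. -/
def gam (r θ : ℝ) : E3 := !₂[sin θ * cos r, sin θ * sin r, cos θ]

@[simp] lemma gam_0 (r θ : ℝ) : gam r θ 0 = sin θ * cos r := rfl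
@[simp] lemma gam_1 (r θ : ℝ) : gam r θ 1 = sin θ * sin r := rfl
@[simp] lemma gam_2 (r θ : ℝ) : gam r θ 2 = cos θ := rfl

lemma gam_comp {A : Type*} [TopologicalSpace A] {f g : A → ℝ} (hf : Continuous f)
    (hg : Continuous g) : Continuous fun a => gam (f a) (g a) := by
  unfold gam
  have h1 : Continuous fun a => ![sin (g a) * cos (f a), sin (g a) * sin (f a), cos (g a)] := by
    refine continuous_pi fun i => ?_
    fin_cases i
    · exact (continuous_sin.comp hg).mul (continuous_cos.comp hf)
    · exact (continuous_sin.comp hg).mul (continuous_sin.comp hf)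
    · exact continuous_cos.comp hg
  exact (PiLp.continuous_toLp 2 _).comp h1

lemma gam_cont : Continuous fun z : ℝ × ℝ => gam z.1 z.2 :=
  gam_comp continuous_fst continuous_snd

lemma inner_gam (r θ θ' : ℝ) : ⟪gam r θ, gam r θ'⟫ = cos (θ' - θ) := by
  rw [inner_E3, cos_sub]
  simp only [gam_0, gam_1, gam_2]
  have := sin_sq_add_cos_sq r
  linear_combination sin θ * sin θ' * this

lemma gam_unit (r θ : ℝ) : ‖gam r θ‖ = 1 := by
  have := inner_gam r θ θ
  rw [real_inner_self_eq_norm_sq, sub_self, cos_zero] at this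
  nlinarith [norm_nonneg (gam r θ)]

lemma gam_lip (r θ θ' : ℝ) : ‖gam r θ' - gam r θ‖ ≤ |θ' - θ| := by
  apply abs_le_of_sq_le_sq' _ (abs_nonneg _) |>.2
  rw [norm_sub_sq_real, gam_unit, gam_unit, inner_gam, sq_abs]
  have := one_sub_sq_div_two_le_cos (x := θ - θ')
  nlinarith

lemma gam_pi (θ : ℝ) : gam π θ = gam 0 (-θ) := by
  ext i; fin_cases i <;> simp [gam]

lemma gam_period (r θ : ℝ) : gam r (θ + 2 * π) = gam r θ := by
  ext i; fin_cases i <;> simp [gam]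

/-- Data for the initial family. -/
structure PhiData (φ : E3 → ℝ) (m0 Lφ : ℝ) : Prop where
  m0_pos : 0 < m0
  L_nonneg : 0 ≤ Lφ
  low : ∀ x, ‖x‖ = 1 → m0 ≤ φ x
  lip : ∀ x y, |φ x - φ y| ≤ Lφ * ‖x - y‖
  int : ∀ r, ∫ θ in (0 : ℝ)..(2 * π), φ (gam r θ) = 2 * π

variable {φ : E3 → ℝ} {m0 Lφ : ℝ}

lemma PhiData.cont (h : PhiData φ m0 Lφ) : Continuous φ := by
  have : LipschitzWith (Real.toNNReal Lφ) φ := by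
    apply LipschitzWith.of_dist_le_mul
    intro x y
    rw [Real.dist_eq, dist_eq_norm, Real.coe_toNNReal _ h.L_nonneg]
    exact h.lip x y
  exact this.continuous

/-- Arc length. -/
def sig (φ : E3 → ℝ) (r θ : ℝ) : ℝ := ∫ u in (0 : ℝ)..θ, φ (gam r u)

lemma PhiData.cont1 (h : PhiData φ m0 Lφ) (r : ℝ) : Continuous fun θ => φ (gam r θ) := by
  have h1 : Continuous fun θ => gam r θ := gam_comp continuous_const continuous_id
  exact h.cont.comp h1

lemma PhiData.ii (h : PhiData φ m0 Lφ) (r a b : ℝ) :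
    IntervalIntegrable (fun θ => φ (gam r θ)) volume a b := (h.cont1 r).intervalIntegrable _ _

lemma sig_sub (h : PhiData φ m0 Lφ) (r a b : ℝ) :
    sig φ r b - sig φ r a = ∫ u in a..b, φ (gam r u) :=
  intervalIntegral.integral_interval_sub_left (h.ii r _ _) (h.ii r _ _)

lemma sig_mono (h : PhiData φ m0 Lφ) (r : ℝ) {a b : ℝ} (hab : a ≤ b) :
    m0 * (b - a) ≤ sig φ r b - sig φ r a := by
  rw [sig_sub h]
  have : ∫ _u in a..b, m0 ≤ ∫ u in a..b, φ (gam r u) :=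
    intervalIntegral.integral_mono_on hab (by simp) (h.ii r _ _)
      (fun u _ => h.low _ (gam_unit r u))
  rw [intervalIntegral.integral_const, smul_eq_mul] at this
  linarith

lemma sig_abs (h : PhiData φ m0 Lφ) (r a b : ℝ) :
    m0 * |b - a| ≤ |sig φ r b - sig φ r a| := by
  rcases le_total a b with hab | hab
  · rw [abs_of_nonneg (by linarith : 0 ≤ b - a)]
    exact (sig_mono h r hab).trans (le_abs_self _)
  · rw [abs_of_nonpos (by linarith : b - a ≤ 0), abs_sub_comm]
    have := (sig_mono h r hab).trans (le_abs_self _)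
    linarith

lemma sig_cont (h : PhiData φ m0 Lφ) (r : ℝ) : Continuous (sig φ r) := by
  unfold sig
  exact intervalIntegral.continuous_primitive (fun a b => h.ii r a b) 0

lemma sig_cont_r (h : PhiData φ m0 Lφ) (θ : ℝ) : Continuous fun r => sig φ r θ := by
  unfold sig
  have h1 : Continuous (Function.uncurry fun r u => φ (gam r u)) := h.cont.comp gam_cont
  exact intervalIntegral.continuous_parametric_intervalIntegral_of_continuous' h1 0 θ

lemma sig_zero (r : ℝ) : sig φ r 0 = 0 := by simp [sig]

lemma sig_surj (h : PhiData φ m0 Lφ) (r : ℝ) : Function.Surjective (sig φ r) := by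
  have hm := h.m0_pos
  apply (sig_cont h r).surjective
  · refine Filter.tendsto_atTop_mono' _ ?_ (Filter.tendsto_id.const_mul_atTop hm)
    filter_upwards [Filter.eventually_ge_atTop 0] with x hx
    have := sig_mono h r hx
    rw [sig_zero] at this
    simp only [id]; linarith
  · refine Filter.tendsto_atBot_mono' _ ?_ (Filter.tendsto_id.const_mul_atBot hm)
    filter_upwards [Filter.eventually_le_atBot 0] with x hx
    have := sig_mono h r hx
    rw [sig_zero] at this
    simp only [id]; linarith

lemma sig_inj (h : PhiData φ m0 Lφ) (r a b : ℝ) (hab : sig φ r a = sig φ r b) : a = b := by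
  have := sig_abs h r b a
  rw [hab, sub_self, abs_zero] at this
  have h2 : |a - b| ≤ 0 := by
    by_contra hc
    push Not at hc
    nlinarith [mul_pos h.m0_pos hc]
  have := abs_eq_zero.mp (le_antisymm h2 (abs_nonneg _))
  linarith

lemma sig_period (h : PhiData φ m0 Lφ) (r θ : ℝ) : sig φ r (θ + 2 * π) = sig φ r θ + 2 * π := by
  have h1 := sig_sub h r θ (θ + 2 * π)
  have hp : Function.Periodic (fun u => φ (gam r u)) (2 * π) := fun u => by
    simp only [gam_period]
  rw [hp.intervalIntegral_add_eq θ 0, zero_add, h.int] at h1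
  linarith

lemma sig_pi (θ : ℝ) : sig φ π θ = - sig φ 0 (-θ) := by
  unfold sig
  simp only [gam_pi]
  rw [intervalIntegral.integral_comp_neg (fun u => φ (gam 0 u)), neg_zero,
    intervalIntegral.integral_symm]

/-- Inverse of arc length. -/
def TT (h : PhiData φ m0 Lφ) (r s : ℝ) : ℝ := Classical.choose (sig_surj h r s)

lemma sig_TT (h : PhiData φ m0 Lφ) (r s : ℝ) : sig φ r (TT h r s) = s :=
  Classical.choose_spec (sig_surj h r s)

lemma TT_cont (h : PhiData φ m0 Lφ) (s : ℝ) : Continuous fun r => TT h r s := by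
  rw [continuous_iff_continuousAt]
  intro r0
  rw [ContinuousAt, tendsto_iff_dist_tendsto_zero]
  have h1 := ((sig_cont_r h (TT h r0 s)).tendsto r0).const_sub s
  rw [sig_TT, sub_self] at h1
  have h2 := (h1.abs).const_mul (1 / m0)
  rw [abs_zero, mul_zero] at h2
  refine squeeze_zero (fun _ => dist_nonneg) (fun r => ?_) h2
  have := sig_abs h r (TT h r0 s) (TT h r s)
  rw [sig_TT] at this
  rw [Real.dist_eq, one_div, ← div_eq_inv_mul, le_div_iff₀ h.m0_pos]
  linarith

lemma TT_period (h : PhiData φ m0 Lφ) (r s : ℝ) : TT h r (s + 2 * π) = TT h r s + 2 * π := by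
  apply sig_inj h r
  rw [sig_TT, sig_period h, sig_TT]

lemma TT_pi (h : PhiData φ m0 Lφ) (s : ℝ) : TT h π s = - TT h 0 (-s) := by
  apply sig_inj h π
  rw [sig_TT, sig_pi, neg_neg, sig_TT, neg_neg]

/-- Vertices of the polygons. -/
def xv (h : PhiData φ m0 Lφ) (N : ℕ) (r : ℝ) (k : ℤ) : E3 := gam r (TT h r (2 * π * k / N))

/-- The polygon family. -/
def pv (h : PhiData φ m0 Lφ) (N : ℕ) (r : ℝ) (i : ZMod N) : E3 := xv h N r (i.val : ℤ)

lemma xv_period (h : PhiData φ m0 Lφ) (N : ℕ) [NeZero N] (r : ℝ) :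
    Function.Periodic (xv h N r) (N : ℤ) := by
  intro k
  have hN : (N : ℝ) ≠ 0 := by exact_mod_cast NeZero.ne N
  unfold xv
  rw [← gam_period r (TT h r (2 * π * k / N)), ← TT_period]
  congr 2
  push_cast; field_simp

lemma pv_cast (h : PhiData φ m0 Lφ) (N : ℕ) [NeZero N] (r : ℝ) (k : ℤ) :
    pv h N r (k : ZMod N) = xv h N r k := by
  unfold pv
  rw [ZMod.val_intCast]
  have := (xv_period h N r).sub_int_mul_eq (x := k) (k / N)
  rw [← this]
  congr 1
  have := Int.emod_add_mul_ediv k N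
  simp only [Int.cast_id]
  linarith

lemma pv_cast_surj (N : ℕ) [NeZero N] (i : ZMod N) : ∃ k : ℤ, (k : ZMod N) = i := ⟨i.val, by simp⟩

lemma pv_cont (h : PhiData φ m0 Lφ) (N : ℕ) : Continuous (pv h N) := by
  refine continuous_pi fun i => ?_
  exact gam_comp continuous_id (TT_cont h (2 * π * ((i.val : ℤ) : ℝ) / N))

lemma pv_unit (h : PhiData φ m0 Lφ) (N : ℕ) (r : ℝ) : UnitPoly (pv h N r) := fun _ => gam_unit _ _

lemma pv_rev (h : PhiData φ m0 Lφ) (N : ℕ) [NeZero N] : pv h N π = revP (pv h N 0) := by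
  funext i
  obtain ⟨k, rfl⟩ := pv_cast_surj N i
  unfold revP
  rw [← Int.cast_neg, pv_cast, pv_cast]
  unfold xv
  rw [gam_pi, TT_pi, neg_neg]
  congr 2
  push_cast; ring

end

section
open scoped Quaternion

/-! ### Section E2: energy bound and parity of the initial family -/

variable {φ : E3 → ℝ} {m0 Lφ : ℝ}

lemma TT_step (h : PhiData φ m0 Lφ) (r s δ : ℝ) (hδ : 0 ≤ δ) :
    0 ≤ TT h r (s + δ) - TT h r s ∧ m0 * (TT h r (s + δ) - TT h r s) ≤ δ := by
  have hm := h.m0_pos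
  have h0 : TT h r s ≤ TT h r (s + δ) := by
    by_contra hc
    push Not at hc
    have := sig_mono h r hc.le
    rw [sig_TT, sig_TT] at this
    nlinarith
  have := sig_mono h r h0
  rw [sig_TT, sig_TT] at this
  exact ⟨by linarith, by linarith⟩

lemma edge_bound (h : PhiData φ m0 Lφ) (r s δ u0 : ℝ) (hδ : 0 ≤ δ)
    (hu : u0 ∈ Set.Icc (TT h r s) (TT h r (s + δ))) :
    φ (gam r u0) * (TT h r (s + δ) - TT h r s) ≤ δ + Lφ / m0 ^ 2 * δ ^ 2 := by
  have hm := h.m0_pos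
  have hL := h.L_nonneg
  obtain ⟨hd0, hd⟩ := TT_step h r s δ hδ
  set a := TT h r s with ha
  set b := TT h r (s + δ) with hb
  have hsig := sig_sub h r a b
  rw [hb, ha, sig_TT, sig_TT, ← ha, ← hb, add_sub_cancel_left] at hsig
  have hmono : ∫ _u in a..b, (φ (gam r u0) - Lφ * (b - a)) ≤ ∫ u in a..b, φ (gam r u) := by
    refine intervalIntegral.integral_mono_on (by linarith) (by simp) (h.ii r _ _) (fun u hu' => ?_)
    have h1 := h.lip (gam r u0) (gam r u)
    have h2 := gam_lip r u u0
    have h3 : |u0 - u| ≤ b - a := by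
      rw [abs_le]; constructor <;> linarith [hu.1, hu.2, hu'.1, hu'.2]
    have h4 : Lφ * ‖gam r u0 - gam r u‖ ≤ Lφ * (b - a) := by gcongr; linarith
    linarith [le_abs_self (φ (gam r u0) - φ (gam r u))]
  rw [intervalIntegral.integral_const, smul_eq_mul, ← hsig] at hmono
  have hdd : Lφ * (b - a) ^ 2 ≤ Lφ / m0 ^ 2 * δ ^ 2 := by
    have : (b - a) ≤ δ / m0 := by rw [le_div_iff₀ hm]; linarith
    calc Lφ * (b - a) ^ 2 ≤ Lφ * (δ / m0) ^ 2 := by gcongr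
      _ = _ := by field_simp
  nlinarith

/-- The energy bound. -/
def DD (m0 Lφ : ℝ) (N : ℕ) : ℝ := 2 * (2 * π + Lφ / m0 ^ 2 * (2 * π) ^ 2 / N) ^ 2

lemma DD_tendsto (m0 Lφ : ℝ) : Filter.Tendsto (DD m0 Lφ) Filter.atTop (nhds (8 * π ^ 2)) := by
  have h1 := tendsto_const_div_atTop_nhds_zero_nat (Lφ / m0 ^ 2 * (2 * π) ^ 2)
  have h2 := ((h1.const_add (2 * π)).pow 2).const_mul 2
  have e : 8 * π ^ 2 = 2 * (2 * π + 0) ^ 2 := by ring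
  rw [e]
  exact h2

lemma SE_pv (h : PhiData φ m0 Lφ) {F : E3 → ℝ} (hF : ∀ x, ‖x‖ = 1 → F x = φ x ^ 2) (N : ℕ)
    [NeZero N] (r : ℝ) : N * SE F (pv h N r) ≤ DD m0 Lφ N := by
  have hm := h.m0_pos
  have hN : (0 : ℝ) < N := by exact_mod_cast Nat.pos_of_ne_zero (NeZero.ne N)
  set δ := 2 * π / N with hδ
  have hδ0 : 0 ≤ δ := by positivity
  have key : ∀ i ∈ (Finset.univ : Finset (ZMod N)), (F (pv h N r i) + F (pv h N r (i + 1)))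
      * ‖pv h N r (i + 1) - pv h N r i‖ ^ 2 ≤ 2 * (δ + Lφ / m0 ^ 2 * δ ^ 2) ^ 2 := by
    intro i _
    obtain ⟨k, rfl⟩ := pv_cast_surj N i
    rw [show (k : ZMod N) + 1 = ((k + 1 : ℤ) : ZMod N) by push_cast; rfl, pv_cast, pv_cast]
    unfold xv
    rw [show 2 * π * ((k + 1 : ℤ) : ℝ) / N = 2 * π * k / N + δ by rw [hδ]; push_cast; ring]
    set s := 2 * π * (k : ℝ) / N
    obtain ⟨hd0, hd⟩ := TT_step h r s δ hδ0
    have e1 := edge_bound h r s δ (TT h r s) hδ0 ⟨le_rfl, by linarith⟩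
    have e2 := edge_bound h r s δ (TT h r (s + δ)) hδ0 ⟨by linarith, le_rfl⟩
    have l1 := gam_lip r (TT h r s) (TT h r (s + δ))
    rw [abs_of_nonneg hd0] at l1
    rw [hF _ (gam_unit _ _), hF _ (gam_unit _ _)]
    have p1 := h.low _ (gam_unit r (TT h r s))
    have p2 := h.low _ (gam_unit r (TT h r (s + δ)))
    set d := TT h r (s + δ) - TT h r s
    set f1 := φ (gam r (TT h r s))
    set f2 := φ (gam r (TT h r (s + δ)))
    set w := δ + Lφ / m0 ^ 2 * δ ^ 2
    have q1 : (f1 * d) ^ 2 ≤ w ^ 2 := by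
      apply pow_le_pow_left₀ _ e1; exact mul_nonneg (by linarith) hd0
    have q2 : (f2 * d) ^ 2 ≤ w ^ 2 := by
      apply pow_le_pow_left₀ _ e2; exact mul_nonneg (by linarith) hd0
    calc _ ≤ (f1 ^ 2 + f2 ^ 2) * d ^ 2 := by gcongr
      _ = (f1 * d) ^ 2 + (f2 * d) ^ 2 := by ring
      _ ≤ _ := by linarith
  have hs := Finset.sum_le_sum key
  rw [Finset.sum_const, Finset.card_univ, ZMod.card, nsmul_eq_mul] at hs
  have : (N : ℝ) * SE F (pv h N r) ≤ N * (N * (2 * (δ + Lφ / m0 ^ 2 * δ ^ 2) ^ 2)) := by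
    gcongr; exact hs
  refine this.trans (le_of_eq ?_)
  unfold DD
  rw [hδ]
  field_simp

lemma qq_gam (r θ θ' : ℝ) : qq (gam r θ) (gam r θ') =
    ⟨1 + cos (θ' - θ), -(sin (θ' - θ) * sin r), sin (θ' - θ) * cos r, 0⟩ := by
  have := sin_sq_add_cos_sq r
  unfold qq
  ext
  · simp [cos_sub]
    linear_combination sin θ * sin θ' * this
  · simp [sin_sub]; ring
  · simp [sin_sub]; ring
  · simp; ring

lemma Qn_gam (r : ℝ) (θ : ℕ → ℝ) (hθ : ∀ k, 0 ≤ θ (k + 1) - θ k ∧ θ (k + 1) - θ k < π) (n : ℕ) :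
    ∃ ρ > 0, Qn (fun k => gam r (θ k)) n = ⟨ρ * cos ((θ n - θ 0) / 2),
      -(ρ * sin ((θ n - θ 0) / 2) * sin r), ρ * sin ((θ n - θ 0) / 2) * cos r, 0⟩ := by
  induction n with
  | zero => exact ⟨1, one_pos, by ext <;> simp [Qn]⟩
  | succ n ih =>
    obtain ⟨ρ, hρ, hQ⟩ := ih
    obtain ⟨d0, d1⟩ := hθ n
    set d := (θ (n + 1) - θ n) / 2 with hd
    have hc : 0 < cos d := cos_pos_of_mem_Ioo ⟨by linarith [pi_pos], by linarith⟩
    refine ⟨2 * cos d * ρ, by positivity, ?_⟩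
    rw [Qn, hQ, qq_gam]
    have e1 : θ (n + 1) - θ n = 2 * d := by rw [hd]; ring
    set a := (θ n - θ 0) / 2 with ha
    have e2 : (θ (n + 1) - θ 0) / 2 = d + a := by rw [hd, ha]; ring
    rw [e1, e2, cos_two_mul, sin_two_mul, cos_add, sin_add]
    have := sin_sq_add_cos_sq r
    ext
    · refine (Quaternion.re_mul _ _).trans ?_
      simp only
      linear_combination (-2 * sin d * cos d * ρ * sin a) * this
    · refine (Quaternion.imI_mul _ _).trans ?_; simp only; ring
    · refine (Quaternion.imJ_mul _ _).trans ?_; simp only; ring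
    · refine (Quaternion.imK_mul _ _).trans ?_; simp only; ring

lemma Par_pv (h : PhiData φ m0 Lφ) (N : ℕ) [NeZero N] (hN : 2 * π / N < m0 * π) :
    Par (pv h N) := by
  have hm := h.m0_pos
  have hN0 : (0 : ℝ) < N := by exact_mod_cast Nat.pos_of_ne_zero (NeZero.ne N)
  have key : ∀ r, ∃ ρ : ℝ, 0 < ρ ∧ Zp (pv h N r) = ((-ρ : ℝ) : ℂ) := by
    intro r
    let θ : ℕ → ℝ := fun k => TT h r (2 * π * k / N)
    have hθ : ∀ k, 0 ≤ θ (k + 1) - θ k ∧ θ (k + 1) - θ k < π := by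
      intro k
      obtain ⟨d0, d1⟩ := TT_step h r (2 * π * k / N) (2 * π / N) (by positivity)
      have e : 2 * π * ((k + 1 : ℕ) : ℝ) / N = 2 * π * k / N + 2 * π / N := by push_cast; ring
      simp only [θ, e]
      refine ⟨d0, ?_⟩
      have : m0 * (TT h r (2 * π * k / N + 2 * π / N) - TT h r (2 * π * k / N)) < m0 * π :=
        lt_of_le_of_lt d1 hN
      exact lt_of_mul_lt_mul_left this hm.le
    obtain ⟨ρ, hρ, hQ⟩ := Qn_gam r θ hθ N
    have hns : nseq (pv h N r) = fun k => gam r (θ k) := by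
      funext k
      have := pv_cast h N r (k : ℤ)
      simp only [nseq]
      simp only [Int.cast_natCast, xv] at this
      exact this
    have hend : θ N - θ 0 = 2 * π := by
      simp only [θ]
      have := TT_period h r 0
      rw [show 2 * π * (N : ℝ) / N = 0 + 2 * π by field_simp; ring, this]
      simp
    rw [hend, show 2 * π / 2 = π by ring, cos_pi, sin_pi] at hQ
    refine ⟨ρ, hρ, ?_⟩
    unfold Zp
    rw [hns, hQ]
    apply Complex.ext <;> simp
  refine ⟨fun r => Complex.I * ((Real.sqrt (-(Zp (pv h N r)).re) : ℝ) : ℂ), ?_, ?_, ?_⟩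
  · have := Zp_continuous.comp (pv_cont h N)
    refine continuous_const.mul (Complex.continuous_ofReal.comp ?_)
    exact Real.continuous_sqrt.comp (Complex.continuous_re.comp this).neg
  · intro r
    obtain ⟨ρ, hρ, hZ⟩ := key r
    beta_reduce
    rw [hZ, Complex.ofReal_re, neg_neg, mul_pow, Complex.I_sq, ← Complex.ofReal_pow,
      Real.sq_sqrt hρ.le]
    push_cast; ring
  · obtain ⟨ρ, hρ, hZ⟩ := key 0
    obtain ⟨ρ', hρ', hZ'⟩ := key π
    simp only [hZ, hZ', Complex.ofReal_re, neg_neg]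
    have e : Complex.I * ((Real.sqrt ρ : ℝ) : ℂ) * (Complex.I * ((Real.sqrt ρ' : ℝ) : ℂ))
        = ((-(Real.sqrt ρ * Real.sqrt ρ') : ℝ) : ℂ) := by
      push_cast
      linear_combination ((Real.sqrt ρ : ℝ) : ℂ) * ((Real.sqrt ρ' : ℝ) : ℂ) * Complex.I_sq
    rw [e, Complex.ofReal_re]
    have := Real.sqrt_pos.mpr hρ
    have := Real.sqrt_pos.mpr hρ'
    have := mul_pos (Real.sqrt_pos.mpr hρ) (Real.sqrt_pos.mpr hρ')
    linarith

/-- Existence of a closed solution of the geodesic equation of energy at most `4π²`. -/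
theorem exists_geod {F : E3 → ℝ} {G : E3 → E3} {m K : ℝ} (hG : GoodF F G m K)
    (h : PhiData φ m0 Lφ) (hF : ∀ x, ‖x‖ = 1 → F x = φ x ^ 2) :
    ∃ (c v : ℝ → E3) (e : ℝ), GeodEq F G c v e ∧ 0 < e ∧ e ≤ 4 * π ^ 2 ∧
      ∀ t, c (t + 1) = c t := by
  have hm := hG.m_pos
  have hm0 := h.m0_pos
  obtain ⟨c, v, e, h1, h2, h3, h4⟩ := limit_curve hG (DD m0 Lφ) _ (DD_tendsto m0 Lφ) (by
    have t1 : Filter.Tendsto (fun N : ℕ => DD m0 Lφ N / N) Filter.atTop (nhds 0) :=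
      (DD_tendsto m0 Lφ).div_atTop tendsto_natCast_atTop_atTop
    have t2 := tendsto_const_div_atTop_nhds_zero_nat (2 * π)
    filter_upwards [Filter.eventually_gt_atTop 0, t1.eventually (gt_mem_nhds (by positivity : 0 < 8 * m)),
      t2.eventually (gt_mem_nhds (by positivity : 0 < m0 * π))] with N hN hd hs
    have hz : NeZero N := ⟨hN.ne'⟩
    have hNr : (0 : ℝ) < N := by exact_mod_cast hN
    obtain ⟨x, x1, x2, x3, x4⟩ := minimax_crit hG (DD m0 Lφ N / N) hd (pv h N) (pv_cont h N)
      (pv_unit h N) (pv_rev h N) (fun r => by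
        rw [le_div_iff₀ hNr]
        have := SE_pv h hF N r
        linarith) (Par_pv h N hs)
    refine ⟨hz, x, x1, x2, ?_, ?_⟩
    · rw [div_le_iff₀ hNr] at x3; linarith
    · rw [le_div_iff₀ hNr] at x4; linarith)
  exact ⟨c, v, e, h1, by linarith, by linarith, h4⟩

end

section
/-! ### Section Fm: local minimality by calibration -/

def Mcal (m K : ℝ) : ℝ := 2 * ((9 * K ^ 2 / m + 1) / m + K / m + 1)

lemma calib {F : E3 → ℝ} {G : E3 → E3} {m K : ℝ} (hG : GoodF F G m K) (c v w y : E3)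
    (hc : ‖c‖ = 1) (hy : ‖y‖ = 1) (hv : F c * ‖v‖ ^ 2 = 1) (κ : ℝ) (hκ : |κ| ≤ 1) :
    ⟪(‖v‖ ^ 2 / 2) • (G c - ⟪c, G c⟫ • c) - (F c * ‖v‖ ^ 2) • c, y - c⟫ + ⟪F c • v, w - v⟫
      - Mcal m K / 2 * ‖y - c‖ ^ 2 + κ * ⟪y - c, w - v⟫ ≤ F y * ‖w‖ ^ 2 / 2 - 1 / 2 := by
  have hm := hG.m_pos
  have hK := hG.K_ge
  have hFc := hG.lower c hc
  have hFy := hG.lower y hy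
  obtain ⟨a, rfl⟩ : ∃ a, w = v + a := ⟨w - v, by abel⟩
  obtain ⟨η, rfl⟩ : ∃ η, y = c + η := ⟨y - c, by abel⟩
  have ht := hG.taylor c (c + η)
  have hin := inner_unit_left hc hy
  simp only [add_sub_cancel_left] at ht hin ⊢
  have hH2 : ‖η‖ ≤ 2 := by
    have := norm_sub_le (c + η) c
    rw [add_sub_cancel_left, hc, hy] at this; linarith
  have hGη : |⟪G c, η⟫| ≤ K * ‖η‖ := (abs_real_inner_le_norm _ _).trans
    (mul_le_mul_of_nonneg_right (hG.G_le c) (norm_nonneg _))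
  have hcG : |⟪c, G c⟫| ≤ K := (abs_real_inner_le_norm _ _).trans (by
    rw [hc, one_mul]; exact hG.G_le c)
  have hva : |⟪v, a⟫| ≤ ‖v‖ * ‖a‖ := abs_real_inner_le_norm _ _
  have hηa : |⟪η, a⟫| ≤ ‖η‖ * ‖a‖ := abs_real_inner_le_norm _ _
  have hw : ‖v + a‖ ^ 2 = ‖v‖ ^ 2 + 2 * ⟪v, a⟫ + ‖a‖ ^ 2 := norm_add_sq_real v a
  have hV : ‖v‖ ^ 2 ≤ 1 / m := by
    rw [le_div_iff₀ hm]
    nlinarith [sq_nonneg ‖v‖]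
  rw [hw]
  simp only [inner_sub_left, real_inner_smul_left, hin]
  set R := F (c + η) - F c - ⟪G c, η⟫ with hR
  have hH := norm_nonneg η
  have hA := norm_nonneg a
  have hVn := norm_nonneg v
  set H := ‖η‖
  set A := ‖a‖
  set V := ‖v‖
  set g := ⟪G c, η⟫
  set q := ⟪c, G c⟫
  have hdF : |F (c + η) - F c| ≤ 3 * K * H := by
    have : F (c + η) - F c = R + g := by rw [hR]; ring
    rw [this]
    have := abs_add_le R g
    nlinarith [mul_nonneg (by linarith : 0 ≤ K) (mul_nonneg hH (by linarith : 0 ≤ 2 - H))]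
  have b1 : |(F (c + η) - F c) * ⟪v, a⟫| ≤ 3 * K * H * (V * A) := by
    rw [abs_mul]
    exact mul_le_mul hdF hva (abs_nonneg _) (by positivity)
  have b2 : |κ * ⟪η, a⟫| ≤ 1 * (H * A) := by
    rw [abs_mul]
    exact mul_le_mul hκ hηa (abs_nonneg _) (by positivity)
  have b3 : |R * V ^ 2| ≤ K * H ^ 2 * (1 / m) := by
    rw [abs_mul, abs_of_nonneg (sq_nonneg V)]
    exact mul_le_mul ht hV (sq_nonneg _) (by positivity)
  have b4 : |q * V ^ 2| ≤ K * (1 / m) := by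
    rw [abs_mul, abs_of_nonneg (sq_nonneg V)]
    exact mul_le_mul hcG hV (sq_nonneg _) (by positivity)
  have b4' : q * V ^ 2 * H ^ 2 ≤ K * (1 / m) * H ^ 2 :=
    mul_le_mul_of_nonneg_right ((le_abs_self _).trans b4) (sq_nonneg _)
  have b5 : m * A ^ 2 ≤ F (c + η) * A ^ 2 := mul_le_mul_of_nonneg_right hFy (sq_nonneg _)
  have disc : (3 * K * V + 1) * H * A ≤ m * A ^ 2 / 2 + (9 * K ^ 2 / m + 1) / m * H ^ 2 := by
    have h1 : (3 * K * V + 1) ^ 2 ≤ 2 * (9 * K ^ 2 / m + 1) := by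
      have : 9 * K ^ 2 * V ^ 2 ≤ 9 * K ^ 2 * (1 / m) := by gcongr
      rw [mul_one_div] at this
      nlinarith [sq_nonneg (3 * K * V - 1)]
    have h2 : (3 * K * V + 1) * H * A ≤ m * A ^ 2 / 2 + (3 * K * V + 1) ^ 2 * H ^ 2 / (2 * m) := by
      have := sq_nonneg (m * A - (3 * K * V + 1) * H)
      have e : m * A ^ 2 / 2 + (3 * K * V + 1) ^ 2 * H ^ 2 / (2 * m) - (3 * K * V + 1) * H * A
          = (m * A - (3 * K * V + 1) * H) ^ 2 / (2 * m) := by field_simp; ring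
      have : 0 ≤ (m * A - (3 * K * V + 1) * H) ^ 2 / (2 * m) := by positivity
      linarith
    have h3 : (3 * K * V + 1) ^ 2 * H ^ 2 / (2 * m) ≤ (2 * (9 * K ^ 2 / m + 1)) * H ^ 2 / (2 * m) := by
      gcongr
    have e : (2 * (9 * K ^ 2 / m + 1)) * H ^ 2 / (2 * m) = (9 * K ^ 2 / m + 1) / m * H ^ 2 := by
      field_simp
    linarith
  have hM : Mcal m K / 2 * H ^ 2 = (9 * K ^ 2 / m + 1) / m * H ^ 2 + K * (1 / m) * H ^ 2 + H ^ 2 := by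
    unfold Mcal; ring
  rw [hM]
  have e1 : F (c + η) * (V ^ 2 + 2 * ⟪v, a⟫ + A ^ 2) / 2
      = F (c + η) * A ^ 2 / 2 + (F (c + η) - F c) * ⟪v, a⟫ + F c * ⟪v, a⟫ + (F c * V ^ 2) / 2
        + R * V ^ 2 / 2 + g * V ^ 2 / 2 := by rw [hR]; ring
  rw [e1, hv]
  have := neg_abs_le ((F (c + η) - F c) * ⟪v, a⟫)
  have := le_abs_self (κ * ⟪η, a⟫)
  have := neg_abs_le (R * V ^ 2)
  have hH2n := sq_nonneg H
  have hKm : 0 ≤ K * (1 / m) * H ^ 2 := by positivity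
  have : V ^ 2 / 2 * (g - q * -(H ^ 2 / 2)) = g * V ^ 2 / 2 + q * V ^ 2 * H ^ 2 / 4 := by ring
  linarith

lemma min_len {F : E3 → ℝ} {G : E3 → E3} {m K : ℝ} (hG : GoodF F G m K) {c v : ℝ → E3}
    (hg : GeodEq F G c v 1) (t0 s1 s2 : ℝ) (h1 : t0 - 1 / Mcal m K ≤ s1)
    (h2 : s2 ≤ t0 + 1 / Mcal m K) (y : ℝ → E3) (hy : ContDiff ℝ 1 y) (hu : ∀ u, ‖y u‖ = 1)
    (y0 : y 0 = c s1) (y1 : y 1 = c s2) :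
    s2 - s1 ≤ ∫ u in (0 : ℝ)..1, √(F (y u) * ‖deriv y u‖ ^ 2) := by
  have hm := hG.m_pos
  have hK := hG.K_ge
  have hM : 0 < Mcal m K := by unfold Mcal; positivity
  by_contra hcon
  push Not at hcon
  set q : ℝ → ℝ := fun u => √(F (y u) * ‖deriv y u‖ ^ 2) with hq
  have hqc : Continuous q := by
    have h1 : Continuous (deriv y) := hy.continuous_deriv le_rfl
    have h2 : Continuous y := hy.continuous
    have h3 := hG.F_cont
    fun_prop
  set δ := (s2 - s1) - ∫ u in (0 : ℝ)..1, q u with hδ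
  have hδ0 : 0 < δ := by linarith
  set T : ℝ → ℝ := fun u => s1 + ∫ x in (0 : ℝ)..u, (q x + δ) with hT
  have hTd : ∀ u, HasDerivAt T (q u + δ) u := by
    intro u
    have hc : Continuous fun x => q x + δ := by fun_prop
    exact (intervalIntegral.integral_hasDerivAt_right (hc.intervalIntegrable _ _)
      (hc.stronglyMeasurableAtFilter _ _) hc.continuousAt).const_add s1
  have hT0 : T 0 = s1 := by simp [hT]
  have hT1 : T 1 = s2 := by
    simp only [hT]
    rw [intervalIntegral.integral_add (hqc.intervalIntegrable _ _) (by simp)]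
    simp [hδ]
  have hTm : StrictMono T := strictMono_of_deriv_pos (fun u => by
    rw [(hTd u).deriv]; have : 0 ≤ q u := Real.sqrt_nonneg _; linarith)
  set M := Mcal m K with hMdef
  have hyd : ∀ u, HasDerivAt y (deriv y u) u := fun u =>
    (hy.differentiable one_ne_zero u).hasDerivAt
  let S : ℝ → ℝ := fun u => ⟪F (c (T u)) • v (T u), y u - c (T u)⟫
    + (-M * (T u - t0)) / 2 * ⟪y u - c (T u), y u - c (T u)⟫
  let P : ℝ → E3 := fun t => (‖v t‖ ^ 2 / 2) • (G (c t) - ⟪c t, G (c t)⟫ • c t)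
    - (F (c t) * ‖v t‖ ^ 2) • c t
  have hSd : ∀ u, HasDerivAt S ((q u + δ) * ⟪P (T u), y u - c (T u)⟫
      + ⟪F (c (T u)) • v (T u), deriv y u - (q u + δ) • v (T u)⟫
      - M / 2 * (q u + δ) * ‖y u - c (T u)‖ ^ 2
      + (-M * (T u - t0)) * ⟪y u - c (T u), deriv y u - (q u + δ) • v (T u)⟫) u := by
    intro u
    have d1 : HasDerivAt (fun u => F (c (T u)) • v (T u)) ((q u + δ) • P (T u)) u :=
      (hg.ode (T u)).scomp u (hTd u)
    have d2 : HasDerivAt (fun u => c (T u)) ((q u + δ) • v (T u)) u :=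
      (hg.vel (T u)).scomp u (hTd u)
    have d3 := (hyd u).sub d2
    have d4 := d1.inner ℝ d3
    have d5 := d3.inner ℝ d3
    have d6 := ((((hTd u).sub_const t0).const_mul (-M)).div_const 2).mul d5
    have d7 := d4.add d6
    refine d7.congr_deriv ?_
    simp only [Pi.sub_apply]
    rw [real_inner_smul_left (P (T u)), real_inner_comm (y u - c (T u)) (deriv y u - (q u + δ) • v (T u)),
      real_inner_self_eq_norm_sq]
    ring
  have hneg : ∀ u ∈ Set.Ioo (0 : ℝ) 1, (q u + δ) * ⟪P (T u), y u - c (T u)⟫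
      + ⟪F (c (T u)) • v (T u), deriv y u - (q u + δ) • v (T u)⟫
      - M / 2 * (q u + δ) * ‖y u - c (T u)‖ ^ 2
      + (-M * (T u - t0)) * ⟪y u - c (T u), deriv y u - (q u + δ) • v (T u)⟫ < 0 := by
    intro u hu'
    have hq0 : 0 ≤ q u := Real.sqrt_nonneg _
    have hp : 0 < q u + δ := by linarith
    set p := q u + δ with hpdef
    have hκ : |-M * (T u - t0)| ≤ 1 := by
      have a1 := hTm hu'.1
      have a2 := hTm hu'.2
      rw [hT0] at a1
      rw [hT1] at a2
      rw [abs_mul, abs_neg, abs_of_pos hM]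
      have : |T u - t0| ≤ 1 / M := by rw [abs_le]; constructor <;> linarith
      calc M * |T u - t0| ≤ M * (1 / M) := by gcongr
        _ = 1 := by field_simp
    have hcal := calib hG (c (T u)) (v (T u)) (p⁻¹ • deriv y u) (y u) (hg.unit _) (hu u)
      (hg.energy _) (-M * (T u - t0)) hκ
    have hw : deriv y u = p • (p⁻¹ • deriv y u) := by
      rw [smul_smul, mul_inv_cancel₀ hp.ne', one_smul]
    have hFw : F (y u) * ‖p⁻¹ • deriv y u‖ ^ 2 < 1 := by
      have hF0 : 0 ≤ F (y u) * ‖deriv y u‖ ^ 2 :=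
        mul_nonneg (hm.le.trans (hG.lower _ (hu u))) (sq_nonneg _)
      have e : q u ^ 2 = F (y u) * ‖deriv y u‖ ^ 2 := Real.sq_sqrt hF0
      rw [norm_smul, mul_pow, norm_inv, Real.norm_of_nonneg hp.le]
      have : F (y u) * (p⁻¹ ^ 2 * ‖deriv y u‖ ^ 2) = q u ^ 2 / p ^ 2 := by
        rw [e]; field_simp
      rw [this, div_lt_one (by positivity)]
      exact pow_lt_pow_left₀ (by linarith) hq0 two_ne_zero
    rw [hw]
    set w := p⁻¹ • deriv y u
    rw [← smul_sub, real_inner_smul_right, real_inner_smul_right]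
    change ⟪P (T u), y u - c (T u)⟫ + _ - _ + _ ≤ _ at hcal
    have := mul_lt_mul_of_pos_left (lt_of_le_of_lt hcal (by linarith : _ < (0 : ℝ))) hp
    nlinarith
  obtain ⟨u, hu', hd⟩ := exists_hasDerivAt_eq_zero (f := S) (zero_lt_one)
    (fun u _ => (hSd u).continuousAt.continuousWithinAt) (by
      simp only [S]
      rw [hT0, hT1, y0, y1]
      simp) (fun u _ => hSd u)
  exact absurd hd (hneg u hu').ne

lemma geod_v_cont {F : E3 → ℝ} {G : E3 → E3} {m K : ℝ} (hG : GoodF F G m K) {c v : ℝ → E3} {e : ℝ}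
    (hg : GeodEq F G c v e) : Continuous v := by
  have hc : Continuous c := continuous_iff_continuousAt.2 fun t => (hg.vel t).continuousAt
  have h1 : Continuous (fun s => F (c s) • v s) :=
    continuous_iff_continuousAt.2 fun t => (hg.ode t).continuousAt
  have hpos : ∀ t, F (c t) ≠ 0 := fun t =>
    (lt_of_lt_of_le hG.m_pos (hG.lower _ (hg.unit t))).ne'
  have h2 : Continuous (fun s => (F (c s))⁻¹ • (F (c s) • v s)) :=
    ((hG.F_cont.comp hc).inv₀ hpos).smul h1
  convert h2 using 2 with s
  rw [smul_smul, inv_mul_cancel₀ (hpos s), one_smul]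

/-- Unit speed reparametrization. -/
lemma geod_unit {F : E3 → ℝ} {G : E3 → E3} {c v : ℝ → E3} {e : ℝ}
    (hg : GeodEq F G c v e) (he : 0 < e) :
    GeodEq F G (fun s => c (s / √e)) (fun s => (√e)⁻¹ • v (s / √e)) 1 := by
  have hs : 0 < √e := Real.sqrt_pos.2 he
  have hd : ∀ t : ℝ, HasDerivAt (fun s : ℝ => s / √e) ((√e)⁻¹) t := fun t => by
    simpa using (hasDerivAt_id t).div_const (√e)
  refine ⟨fun t => hg.unit _, fun t => (hg.vel _).scomp t (hd t), fun t => ?_, fun t => ?_⟩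
  · have := ((hg.ode (t / √e)).scomp t (hd t)).const_smul ((√e)⁻¹)
    have h2 : HasDerivAt (fun s => F (c (s / √e)) • (√e)⁻¹ • v (s / √e)) _ t :=
      this.congr_of_eventuallyEq (Filter.Eventually.of_forall fun s => by
        simp only [Pi.smul_apply, Function.comp]
        rw [smul_comm])
    refine h2.congr_deriv ?_
    · rw [norm_smul, norm_inv, Real.norm_of_nonneg hs.le]
      module
  · rw [norm_smul, norm_inv, Real.norm_of_nonneg hs.le, mul_pow, inv_pow, Real.sq_sqrt he.le]
    have := hg.energy (t / √e)
    rw [mul_left_comm, this, inv_mul_cancel₀ he.ne']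

end

section
/-! ### Section Gc: closed geodesics in the sense of the statement -/

lemma gspeed_eq (Φ : Sph → ℝ) {F : E3 → ℝ} (hΦ : ∀ x : Sph, F x = Φ x) (c : ℝ → Sph) (t : ℝ) :
    gspeed (confMetric Φ) c t = √(F (c t) * ‖deriv (fun s => (c s : E3)) t‖ ^ 2) := by
  unfold gspeed confMetric cvel
  rw [real_inner_self_eq_norm_sq, hΦ]

lemma closed_of_geod {F : E3 → ℝ} {G : E3 → E3} {m K : ℝ} (hG : GoodF F G m K)
    (Φ : Sph → ℝ) (hΦ : ∀ x : Sph, F x = Φ x) {c v : ℝ → E3} {e : ℝ}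
    (hg0 : GeodEq F G c v e) (he : 0 < e) (hper : ∀ t, c (t + 1) = c t) :
    ∃ c' : ℝ → Sph, IsClosedGeodesic (confMetric Φ) c' (√e) := by
  have hs : 0 < √e := Real.sqrt_pos.2 he
  have hg := geod_unit hg0 he
  have hper' : ∀ s, (fun s => c (s / √e)) (s + √e) = (fun s => c (s / √e)) s := by
    intro s
    simp only
    rw [add_div, div_self hs.ne', hper]
  generalize (fun s => c (s / √e)) = c1 at hg hper'
  generalize (fun s => (√e)⁻¹ • v (s / √e)) = v1 at hg
  let C : ℝ → Sph := fun s => ⟨c1 s, by rw [mem_sphere_zero_iff_norm]; exact hg.unit s⟩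
  have hC : ∀ s, (C s : E3) = c1 s := fun s => rfl
  have hCf : (fun s => (C s : E3)) = c1 := rfl
  have hv := geod_v_cont hG hg
  have hder : deriv c1 = v1 := funext fun t => (hg.vel t).deriv
  have hC1 : ContDiff ℝ 1 c1 := by
    rw [contDiff_one_iff_deriv]
    exact ⟨fun t => (hg.vel t).differentiableAt, by rw [hder]; exact hv⟩
  have hm := hG.m_pos
  have hK := hG.K_ge
  have hM : 0 < Mcal m K := by unfold Mcal; positivity
  refine ⟨C, hs, fun s => Subtype.ext (hper' s), hC1, fun t => ?_, fun t => ?_⟩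
  · rw [gspeed_eq Φ hΦ, hCf, hder, hC, hg.energy t, Real.sqrt_one]
  · refine ⟨1 / Mcal m K, by positivity, fun s1 s2 h1 h12 h2 => ?_⟩
    unfold gdist
    have lb : ∀ L ∈ {L | ∃ c : ℝ → Sph, IsC1Curve c ∧ c 0 = C s1 ∧ c 1 = C s2 ∧
        L = glength (confMetric Φ) c 0 1}, s2 - s1 ≤ L := by
      rintro L ⟨y, hy, y0, y1, rfl⟩
      have := min_len hG hg t s1 s2 h1 h2 (fun u => (y u : E3)) hy
        (fun u => mem_sphere_zero_iff_norm.1 (y u).2) (by rw [y0]) (by rw [y1])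
      unfold glength
      simp only [gspeed_eq Φ hΦ]
      exact this
    have mem : s2 - s1 ∈ {L | ∃ c : ℝ → Sph, IsC1Curve c ∧ c 0 = C s1 ∧ c 1 = C s2 ∧
        L = glength (confMetric Φ) c 0 1} := by
      have hd : ∀ u, HasDerivAt (fun u : ℝ => c1 (s1 + u * (s2 - s1)))
          ((s2 - s1) • v1 (s1 + u * (s2 - s1))) u := by
        intro u
        have : HasDerivAt (fun u : ℝ => s1 + u * (s2 - s1)) (s2 - s1) u := by
          simpa using ((hasDerivAt_id u).mul_const (s2 - s1)).const_add s1
        exact (hg.vel _).scomp u this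
      refine ⟨fun u => C (s1 + u * (s2 - s1)), ?_, by simp, by simp, ?_⟩
      · change ContDiff ℝ 1 (fun u : ℝ => c1 (s1 + u * (s2 - s1)))
        exact hC1.comp (by fun_prop)
      · unfold glength
        have : ∀ u, gspeed (confMetric Φ) (fun u => C (s1 + u * (s2 - s1))) u = s2 - s1 := by
          intro u
          rw [gspeed_eq Φ hΦ]
          change √(F (c1 (s1 + u * (s2 - s1))) *
            ‖deriv (fun u : ℝ => c1 (s1 + u * (s2 - s1))) u‖ ^ 2) = _
          rw [(hd u).deriv, norm_smul, mul_pow, mul_left_comm, hg.energy, mul_one,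
            Real.sqrt_sq (norm_nonneg _), Real.norm_of_nonneg (by linarith)]
        simp [this]
    exact le_antisymm (csInf_le ⟨s2 - s1, lb⟩ mem) (le_csInf ⟨_, mem⟩ lb)

lemma systole_le {g : Sph → E3 → E3 → ℝ} {c : ℝ → Sph} {L : ℝ} (h : IsClosedGeodesic g c L) :
    systole g ≤ L :=
  csInf_le ⟨0, by rintro L ⟨c, hc⟩; exact hc.1.le⟩ ⟨c, h⟩

theorem closed_geod {F : E3 → ℝ} {G : E3 → E3} {m K : ℝ} (hG : GoodF F G m K)
    {φ : E3 → ℝ} {m0 Lφ : ℝ} (h : PhiData φ m0 Lφ) (hF : ∀ x, ‖x‖ = 1 → F x = φ x ^ 2)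
    (Φ : Sph → ℝ) (hΦ : ∀ x : Sph, F x = Φ x) :
    ∃ (c : ℝ → Sph) (L : ℝ), IsClosedGeodesic (confMetric Φ) c L ∧ L ≤ 2 * π := by
  obtain ⟨c, v, e, h1, h2, h3, h4⟩ := exists_geod hG h hF
  obtain ⟨c', hc'⟩ := closed_of_geod hG Φ hΦ h1 h2 h4
  refine ⟨c', √e, hc', ?_⟩
  rw [show 2 * π = √((2 * π) ^ 2) from (Real.sqrt_sq (by positivity)).symm]
  exact Real.sqrt_le_sqrt (by linarith)

end

section
/-! ### Section Hd: arc length measure on great circles -/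

/-- Two orthonormal vectors spanning the plane orthogonal to `u`. -/
structure Frame (u e f : E3) : Prop where
  ne : ‖e‖ = 1
  nf : ‖f‖ = 1
  ef : ⟪e, f⟫ = 0
  ue : ⟪u, e⟫ = 0
  uf : ⟪u, f⟫ = 0
  span : ∀ x, ⟪u, x⟫ = 0 → ∃ α β : ℝ, x = α • e + β • f

variable {u e f : E3}

lemma Frame.norm_sq (h : Frame u e f) (α β : ℝ) : ‖α • e + β • f‖ ^ 2 = α ^ 2 + β ^ 2 := by
  rw [norm_add_sq_real, norm_smul, norm_smul, h.ne, h.nf, real_inner_smul_left,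
    real_inner_smul_right, h.ef]
  simp

def Frame.gm (h : Frame u e f) (θ : ℝ) : Sph := ⟨cos θ • e + sin θ • f, by
  rw [mem_sphere_zero_iff_norm, ← sq_eq_sq₀ (norm_nonneg _) zero_le_one, h.norm_sq]
  simp⟩

lemma Frame.dist_gm (h : Frame u e f) (a b : ℝ) :
    dist (h.gm a) (h.gm b) = 2 * |sin ((a - b) / 2)| := by
  rw [Subtype.dist_eq, dist_eq_norm]
  have e1 : ((h.gm a : E3) - (h.gm b : E3)) = (cos a - cos b) • e + (sin a - sin b) • f := by
    simp only [Frame.gm]; module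
  rw [e1, ← sq_eq_sq₀ (norm_nonneg _) (by positivity), h.norm_sq, mul_pow, sq_abs]
  have h2 : a - b = 2 * ((a - b) / 2) := by ring
  have h3 := cos_sub a b
  rw [h2, cos_two_mul] at h3
  have h4 := sin_sq_add_cos_sq ((a - b) / 2)
  have := sin_sq_add_cos_sq a
  have := sin_sq_add_cos_sq b
  nlinarith

lemma Frame.lip (h : Frame u e f) : LipschitzWith 1 h.gm := by
  refine LipschitzWith.of_dist_le_mul fun a b => ?_
  rw [h.dist_gm, NNReal.coe_one, one_mul, Real.dist_eq]
  have := abs_sin_le_abs (x := (a - b) / 2)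
  rw [abs_div, abs_two] at this
  linarith

lemma Frame.injOn (h : Frame u e f) : Set.InjOn h.gm (Set.Ioc 0 (2 * π)) := by
  intro a ha b hb hab
  have := h.dist_gm a b
  rw [hab, dist_self] at this
  have hs : sin ((a - b) / 2) = 0 := by
    rw [← abs_eq_zero]; linarith
  rw [sin_eq_zero_iff_of_lt_of_lt (by linarith [ha.1, hb.2]) (by linarith [ha.2, hb.1])] at hs
  linarith

lemma Frame.image (h : Frame u e f) (uS : Sph) (hu : (uS : E3) = u) :
    h.gm '' Set.Ioc 0 (2 * π) = greatCircle uS := by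
  ext x
  constructor
  · rintro ⟨θ, -, rfl⟩
    simp [greatCircle, circleAt, Frame.gm, hu, inner_add_right, real_inner_smul_right, h.ue, h.uf]
  · intro hx
    have hx' : ⟪u, (x : E3)⟫ = 0 := by rw [← hu]; exact hx
    obtain ⟨α, β, hαβ⟩ := h.span x hx'
    have hn : α ^ 2 + β ^ 2 = 1 := by
      rw [← h.norm_sq, ← hαβ, mem_sphere_zero_iff_norm.1 x.2]; norm_num
    have hne : (⟨α, β⟩ : ℂ) ≠ 0 := by
      intro h0
      have h1 := congrArg Complex.re h0
      have h2 := congrArg Complex.im h0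
      simp at h1 h2
      rw [h1, h2] at hn; norm_num at hn
    have hnorm : ‖(⟨α, β⟩ : ℂ)‖ = 1 := by
      rw [← sq_eq_sq₀ (norm_nonneg _) zero_le_one, Complex.sq_norm, Complex.normSq_mk]
      linarith
    have hcos := Complex.cos_arg hne
    have hsin := Complex.sin_arg (⟨α, β⟩ : ℂ)
    rw [hnorm, div_one] at hcos hsin
    have hrange := Complex.arg_mem_Ioc (⟨α, β⟩ : ℂ)
    set θ := Complex.arg ⟨α, β⟩
    by_cases hθ : 0 < θ
    · exact ⟨θ, ⟨hθ, by linarith [hrange.2, pi_pos]⟩, Subtype.ext (by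
        simp only [Frame.gm]; rw [hcos, hsin, hαβ])⟩
    · refine ⟨θ + 2 * π, ⟨by linarith [hrange.1, pi_pos], by linarith⟩, Subtype.ext ?_⟩
      simp only [Frame.gm]; rw [cos_add_two_pi, sin_add_two_pi, hcos, hsin, hαβ]

lemma sin_half_lower {η x : ℝ} (h1 : η ≤ 1) (hx : |x| ≤ η) :
    (1 - η) * |x| ≤ 2 * |sin (x / 2)| := by
  wlog hx0 : 0 < x generalizing x
  · rcases eq_or_lt_of_le (not_lt.1 hx0) with h | h
    · simp [h]
    · have := this (x := -x) (by rwa [abs_neg]) (by linarith)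
      rwa [abs_neg, neg_div, sin_neg, abs_neg] at this
  · rw [abs_of_pos hx0] at hx ⊢
    have := sin_gt_sub_cube (x := x / 2) (by linarith)
    have h2 := le_abs_self (sin (x / 2))
    have : x ^ 3 ≤ η * x := by
      have : x ^ 2 ≤ η := by nlinarith
      nlinarith
    nlinarith

lemma Frame.small (h : Frame u e f) {η : ℝ} (h1 : η < 1) (S : Set ℝ)
    (hS : ∀ a ∈ S, ∀ b ∈ S, |a - b| ≤ η) :
    ENNReal.ofReal (1 - η) * volume S ≤ μH[1] (h.gm '' S) := by
  have hp : 0 < 1 - η := by linarith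
  have hinj : Set.InjOn h.gm S := by
    intro a ha b hb hab
    have h2 := h.dist_gm a b
    rw [hab, dist_self] at h2
    have := sin_half_lower h1.le (hS a ha b hb)
    have h3 : |a - b| ≤ 0 := by
      by_contra hc
      push Not at hc
      nlinarith
    have := abs_nonpos_iff.1 h3
    linarith
  let g := Function.invFunOn h.gm S
  have hg : ∀ a ∈ S, g (h.gm a) = a := fun a ha => hinj.leftInvOn_invFunOn ha
  have hl : LipschitzOnWith (Real.toNNReal (1 - η)⁻¹) g (h.gm '' S) := by
    refine LipschitzOnWith.of_dist_le_mul ?_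
    rintro _ ⟨a, ha, rfl⟩ _ ⟨b, hb, rfl⟩
    rw [hg a ha, hg b hb, h.dist_gm, Real.coe_toNNReal _ (by positivity), Real.dist_eq]
    rw [← div_eq_inv_mul, le_div_iff₀ hp]
    linarith [sin_half_lower h1.le (hS a ha b hb)]
  have := hl.hausdorffMeasure_image_le (d := 1) zero_le_one
  have himg : g '' (h.gm '' S) = S := by
    rw [Set.image_image]
    ext a
    constructor
    · rintro ⟨b, hb, rfl⟩; beta_reduce; rwa [hg b hb]
    · intro ha; exact ⟨a, ha, hg a ha⟩
  rw [himg, hausdorffMeasure_real, ENNReal.rpow_one] at this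
  calc ENNReal.ofReal (1 - η) * volume S
      ≤ ENNReal.ofReal (1 - η) * (ENNReal.ofReal (1 - η)⁻¹ * μH[1] (h.gm '' S)) := by
        gcongr; exact this
    _ = μH[1] (h.gm '' S) := by
        rw [← mul_assoc, ← ENNReal.ofReal_mul hp.le, mul_inv_cancel₀ hp.ne', ENNReal.ofReal_one,
          one_mul]

lemma Frame.lower (h : Frame u e f) {η : ℝ} (h0 : 0 < η) (h1 : η < 1) (A : Set ℝ)
    (hA : MeasurableSet A) (hA' : A ⊆ Set.Ioc 0 (2 * π)) :
    ENNReal.ofReal (1 - η) * volume A ≤ μH[1] (h.gm '' A) := by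
  let I : ℤ → Set ℝ := fun k => Set.Ioc (k • η) ((k + 1) • η)
  have hIu : ⋃ k, I k = Set.univ := iUnion_Ioc_zsmul h0
  have hId : Pairwise (Function.onFun Disjoint I) := by
    exact Set.pairwise_disjoint_Ioc_zsmul η
  have hAu : A = ⋃ k, A ∩ I k := by rw [← Set.inter_iUnion, hIu, Set.inter_univ]
  have hm : ∀ k, MeasurableSet (A ∩ I k) := fun k => hA.inter measurableSet_Ioc
  have hv : volume A = ∑' k, volume (A ∩ I k) := by
    conv_lhs => rw [hAu]
    exact measure_iUnion (fun i j hij => (hId hij).mono Set.inter_subset_right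
      Set.inter_subset_right) hm
  have hμ : μH[1] (h.gm '' A) = ∑' k, μH[1] (h.gm '' (A ∩ I k)) := by
    conv_lhs => rw [hAu, Set.image_iUnion]
    refine measure_iUnion (fun i j hij => ?_) (fun k => ?_)
    · refine Set.disjoint_image_image ?_
      intro a ha b hb hab
      have := h.injOn (hA' ha.1) (hA' hb.1) hab
      subst this
      exact Set.disjoint_left.1 (hId hij) ha.2 hb.2
    · exact (hm k).image_of_continuousOn_injOn h.lip.continuous.continuousOn
        (h.injOn.mono (Set.inter_subset_left.trans hA'))
  rw [hv, hμ, ← ENNReal.tsum_mul_left]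
  refine ENNReal.tsum_le_tsum fun k => h.small h1 _ ?_
  rintro a ⟨-, ha⟩ b ⟨-, hb⟩
  simp only [I, Set.mem_Ioc, add_smul, one_smul] at ha hb
  rw [abs_le]
  constructor <;> linarith [ha.1, ha.2, hb.1, hb.2]

lemma Frame.image_measure (h : Frame u e f) (A : Set ℝ)
    (hA : MeasurableSet A) (hA' : A ⊆ Set.Ioc 0 (2 * π)) :
    μH[1] (h.gm '' A) = volume A := by
  apply le_antisymm
  · have := h.lip.hausdorffMeasure_image_le (d := 1) zero_le_one A
    rw [hausdorffMeasure_real] at this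
    simpa using this
  · have hfin : volume A ≠ ⊤ := by
      exact ((measure_mono hA').trans_lt measure_Ioc_lt_top).ne
    have ht : Filter.Tendsto (fun η : ℝ => ENNReal.ofReal (1 - η) * volume A)
        (nhdsWithin 0 (Set.Ioi 0)) (nhds (ENNReal.ofReal (1 - 0) * volume A)) := by
      refine ENNReal.Tendsto.mul_const ?_ (Or.inr hfin)
      refine (ENNReal.tendsto_ofReal ?_)
      exact ((continuous_const.sub continuous_id).tendsto (0 : ℝ)).mono_left nhdsWithin_le_nhds
    rw [sub_zero, ENNReal.ofReal_one, one_mul] at ht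
    refine le_of_tendsto ht ?_
    filter_upwards [Ioo_mem_nhdsGT (zero_lt_one (α := ℝ))] with η hη
    exact h.lower hη.1 hη.2 A hA hA'

lemma Frame.measure_eq (h : Frame u e f) (uS : Sph) (hu : (uS : E3) = u) :
    (μH[1] : Measure Sph).restrict (greatCircle uS)
      = (volume.restrict (Set.Ioc 0 (2 * π))).map h.gm := by
  have hmeas : Measurable h.gm := h.lip.continuous.measurable
  ext B hB
  rw [Measure.restrict_apply hB, Measure.map_apply hmeas hB,
    Measure.restrict_apply (hmeas hB), ← h.image uS hu,
    ← h.image_measure _ ((hmeas hB).inter measurableSet_Ioc) Set.inter_subset_right]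
  congr 1
  ext x
  constructor
  · rintro ⟨hx, θ, hθ, rfl⟩; exact ⟨θ, ⟨hx, hθ⟩, rfl⟩
  · rintro ⟨θ, ⟨hx, hθ⟩, rfl⟩; exact ⟨hx, θ, hθ, rfl⟩

lemma Frame.integral_eq (h : Frame u e f) (uS : Sph) (hu : (uS : E3) = u) (k : Sph → ℝ)
    (hk : Continuous k) :
    ∫ x in greatCircle uS, k x ∂(μH[1] : Measure Sph) = ∫ θ in (0 : ℝ)..(2 * π), k (h.gm θ) := by
  rw [h.measure_eq uS hu, integral_map h.lip.continuous.measurable.aemeasurable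
    hk.aestronglyMeasurable, intervalIntegral.integral_of_le (by positivity)]

lemma frame_exists (uS : Sph) : ∃ e f, Frame (uS : E3) e f := by
  have hu : ‖(uS : E3)‖ = 1 := mem_sphere_zero_iff_norm.1 uS.2
  have hne : (uS : E3) ≠ 0 := by intro h0; rw [h0, norm_zero] at hu; norm_num at hu
  have hfr : Module.finrank ℝ (ℝ ∙ (uS : E3))ᗮ = 2 := by
    exact Submodule.finrank_orthogonal_span_singleton (𝕜 := ℝ) (E := E3) (n := 2) hne
  let b := (stdOrthonormalBasis ℝ (ℝ ∙ (uS : E3))ᗮ).reindex (finCongr hfr)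
  have hort := b.orthonormal
  refine ⟨b 0, b 1, ?_, ?_, ?_, ?_, ?_, ?_⟩
  · exact hort.1 0
  · exact hort.1 1
  · exact hort.2 (by decide : (0 : Fin 2) ≠ 1)
  · exact Submodule.mem_orthogonal_singleton_iff_inner_right.1 (b 0).2
  · exact Submodule.mem_orthogonal_singleton_iff_inner_right.1 (b 1).2
  · intro x hx
    have hx' : x ∈ (ℝ ∙ (uS : E3))ᗮ := Submodule.mem_orthogonal_singleton_iff_inner_right.2 hx
    have := b.sum_repr ⟨x, hx'⟩
    rw [Fin.sum_univ_two] at this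
    have h2 := congrArg Subtype.val this
    exact ⟨_, _, h2.symm⟩

lemma frame_gam (r : ℝ) : Frame !₂[-sin r, cos r, 0] !₂[0, 0, 1] !₂[cos r, sin r, 0] := by
  have := sin_sq_add_cos_sq r
  refine ⟨?_, ?_, ?_, ?_, ?_, ?_⟩
  · simp [EuclideanSpace.norm_eq, Fin.sum_univ_three]
  · simp [EuclideanSpace.norm_eq, Fin.sum_univ_three]
  · simp [inner_E3]
  · simp [inner_E3]
  · simp [inner_E3]; ring
  · intro x hx
    simp [inner_E3] at hx
    refine ⟨x 2, cos r * x 0 + sin r * x 1, ?_⟩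
    ext i
    fin_cases i
    · simp
      linear_combination -x 0 * this - sin r * hx
    · simp
      linear_combination -x 1 * this + cos r * hx
    · simp

lemma gam_eq_gm (r θ : ℝ) : ((frame_gam r).gm θ : E3) = gam r θ := by
  ext i
  fin_cases i <;> simp [Frame.gm]

lemma int_gam (k : E3 → ℝ) (hk : Continuous k) (r : ℝ) (h0 : ∀ u : Sph, lineInt (fun x => k x) u = 0) :
    ∫ θ in (0 : ℝ)..(2 * π), k (gam r θ) = 0 := by
  have hn : ‖(!₂[-sin r, cos r, 0] : E3)‖ = 1 := by
    simp [EuclideanSpace.norm_eq, Fin.sum_univ_three]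
  have := h0 ⟨!₂[-sin r, cos r, 0], by rw [mem_sphere_zero_iff_norm]; exact hn⟩
  unfold lineInt at this
  rw [(frame_gam r).integral_eq _ rfl (fun x => k x) (hk.comp continuous_subtype_val)] at this
  simpa only [gam_eq_gm] using this

lemma circleLen_eq (f : Sph → ℝ) (hf : Continuous f) (t : ℝ) (hpos : ∀ x, 0 < 1 + t * f x) (u : Sph)
    (h0 : lineInt f u = 0) : circleLen (fun x => (1 + t * f x) ^ 2) u 0 = 2 * π := by
  obtain ⟨a, b, h⟩ := frame_exists u
  unfold circleLen
  change ∫ x in greatCircle u, _ ∂_ = _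
  unfold lineInt at h0
  rw [h.integral_eq u rfl f hf] at h0
  have : (fun x => √((1 + t * f x) ^ 2)) = fun x => 1 + t * f x := by
    funext x; exact Real.sqrt_sq (hpos x).le
  rw [this, h.integral_eq u rfl _ (by fun_prop)]
  have hc : Continuous fun θ => f (h.gm θ) := hf.comp h.lip.continuous
  rw [intervalIntegral.integral_add (by simp) ((hc.const_mul t).intervalIntegrable _ _),
    intervalIntegral.integral_const_mul, h0]
  simp

end

section
/-! ### Section Ex: extension of smooth functions on the sphere -/

def puncE3 : TopologicalSpace.Opens E3 := ⟨{0}ᶜ, isOpen_compl_singleton⟩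

lemma smooth_ext (f : Sph → ℝ) (hf : SmoothSph f) :
    ∃ h : E3 → ℝ, ContDiff ℝ (⊤ : ℕ∞) h ∧ HasCompactSupport h ∧ ∀ x : Sph, h x = f x := by
  classical
  let x0 : Sph := ⟨EuclideanSpace.single 0 1, by simp⟩
  let N : E3 → Sph := fun x => if hx : x = 0 then x0 else
    ⟨‖x‖⁻¹ • x, by rw [mem_sphere_zero_iff_norm, norm_smul, norm_inv, norm_norm,
      inv_mul_cancel₀ (norm_ne_zero_iff.2 hx)]⟩
  have hN : ∀ x : E3, x ≠ 0 → ContDiffAt ℝ (⊤ : ℕ∞) (fun x => f (N x)) x := by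
    intro x hx
    let P : puncE3 → E3 := fun y => ‖(y : E3)‖⁻¹ • (y : E3)
    have hP : ContMDiff 𝓘(ℝ, E3) 𝓘(ℝ, E3) (⊤ : ℕ∞) P := by
      intro y
      have hy : (y : E3) ≠ 0 := y.2
      have : ContDiffAt ℝ (⊤ : ℕ∞) (fun z : E3 => ‖z‖⁻¹ • z) y :=
        ((contDiffAt_norm ℝ hy).inv (norm_ne_zero_iff.2 hy)).smul contDiffAt_id
      exact (contMDiffAt_subtype_iff (U := puncE3) (f := fun z : E3 => ‖z‖⁻¹ • z)).2
        this.contMDiffAt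
    have hPs : ∀ y, P y ∈ Metric.sphere (0 : E3) 1 := by
      intro y
      have hy : (y : E3) ≠ 0 := y.2
      rw [mem_sphere_zero_iff_norm, norm_smul, norm_inv, norm_norm,
        inv_mul_cancel₀ (norm_ne_zero_iff.2 hy)]
    have h2 := ContMDiff.codRestrict_sphere (n := 2) hP hPs
    have h3 := hf.comp h2
    have h4 : (f ∘ Set.codRestrict P (Metric.sphere (0 : E3) 1) hPs)
        = fun y : puncE3 => (fun x => f (N x)) y := by
      funext y
      have hy : (y : E3) ≠ 0 := y.2
      simp only [Function.comp]
      congr 1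
      apply Subtype.ext
      simp [N, hy, P]
    rw [h4] at h3
    have h5 := (contMDiffAt_subtype_iff (U := puncE3) (f := fun x => f (N x)) (x := ⟨x, hx⟩)).1
      (h3 ⟨x, hx⟩)
    exact h5.contDiffAt
  let b : ContDiffBump (1 : ℝ) := ⟨1 / 4, 1 / 2, by norm_num, by norm_num⟩
  have hb0 : ∀ s : ℝ, b s ≠ 0 → 1 / 2 < s ∧ s < 3 / 2 := by
    intro s hs
    have : s ∈ Function.support b := hs
    rw [b.support_eq, Metric.mem_ball, Real.dist_eq, abs_lt] at this
    have e : b.rOut = 1 / 2 := rfl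
    rw [e] at this
    constructor <;> linarith [this.1, this.2]
  refine ⟨fun x => b (‖x‖ ^ 2) * f (N x), ?_, ?_, ?_⟩
  · rw [contDiff_iff_contDiffAt]
    intro x
    by_cases hx : x = 0
    · subst hx
      have : (fun x : E3 => b (‖x‖ ^ 2) * f (N x)) =ᶠ[nhds 0] fun _ => 0 := by
        have hc : Filter.Tendsto (fun x : E3 => ‖x‖ ^ 2) (nhds 0) (nhds (‖(0 : E3)‖ ^ 2)) :=
          (continuous_norm.pow 2).tendsto _
        rw [norm_zero] at hc
        filter_upwards [hc.eventually (gt_mem_nhds (by norm_num : (0 : ℝ) ^ 2 < 1 / 2))] with y hy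
        have : b (‖y‖ ^ 2) = 0 := by
          by_contra h
          linarith [(hb0 _ h).1]
        rw [this, zero_mul]
      exact contDiffAt_const.congr_of_eventuallyEq this
    · exact ((b.contDiff.comp (contDiff_norm_sq ℝ)).contDiffAt).mul (hN x hx)
  · refine HasCompactSupport.intro (isCompact_closedBall (0 : E3) 2) fun x hx => ?_
    have : b (‖x‖ ^ 2) = 0 := by
      by_contra h
      apply hx
      rw [mem_closedBall_zero_iff]
      nlinarith [(hb0 _ h).2, norm_nonneg x]
    rw [this, zero_mul]
  · intro x
    have hx : ‖(x : E3)‖ = 1 := mem_sphere_zero_iff_norm.1 x.2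
    have hne : (x : E3) ≠ 0 := by intro h; rw [h, norm_zero] at hx; norm_num at hx
    have hb : b (‖(x : E3)‖ ^ 2) = 1 := by
      rw [hx]
      exact b.one_of_mem_closedBall (by simp [b.rIn_pos.le])
    beta_reduce
    rw [hb, one_mul]
    congr 1
    apply Subtype.ext
    simp [N, hne, hx]

lemma exists_goodF (F : E3 → ℝ) (hF : ContDiff ℝ (⊤ : ℕ∞) F)
    (hs : HasCompactSupport (fun x => F x - 1)) (hpos : ∀ x, ‖x‖ = 1 → 0 < F x) :
    ∃ G m K, GoodF F G m K := by
  have h1 : ContDiff ℝ (⊤ : ℕ∞) (fun x => F x - 1) := hF.sub contDiff_const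
  have hfd : fderiv ℝ F = fderiv ℝ (fun x => F x - 1) := by
    funext x; rw [fderiv_sub_const]
  have hcs : HasCompactSupport (fderiv ℝ F) := by rw [hfd]; exact hs.fderiv ℝ
  have hfs : ContDiff ℝ 1 (fderiv ℝ F) := (contDiff_infty.1 hF 2).fderiv_right (by norm_num)
  obtain ⟨C1, hC1⟩ := hcs.exists_bound_of_continuous hfs.continuous
  obtain ⟨C2, hC2⟩ := ContDiff.lipschitzWith_of_hasCompactSupport hcs hfs one_ne_zero
  have hne : (Metric.sphere (0 : E3) 1).Nonempty := ⟨EuclideanSpace.single 0 1, by simp⟩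
  obtain ⟨a, ha, hamin⟩ := (isCompact_sphere (0 : E3) 1).exists_isMinOn hne hF.continuous.continuousOn
  obtain ⟨b, hb, hbmax⟩ := (isCompact_sphere (0 : E3) 1).exists_isMaxOn hne hF.continuous.continuousOn
  set K := max (max 1 C1) (max C2 (F b)) with hK
  have hK1 : 1 ≤ K := (le_max_left _ _).trans (le_max_left _ _)
  have hKC1 : C1 ≤ K := (le_max_right _ _).trans (le_max_left _ _)
  have hKC2 : (C2 : ℝ) ≤ K := (le_max_left _ _).trans (le_max_right _ _)
  have hKb : F b ≤ K := (le_max_right _ _).trans (le_max_right _ _)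
  let G : E3 → E3 := fun x => (InnerProductSpace.toDual ℝ E3).symm (fderiv ℝ F x)
  have hGin : ∀ x y, ⟪G x, y⟫ = fderiv ℝ F x y := fun x y => by
    simp only [G]; rw [InnerProductSpace.toDual_symm_apply]
  have hlip : ∀ x y, ‖fderiv ℝ F x - fderiv ℝ F y‖ ≤ K * ‖x - y‖ := fun x y => by
    have := hC2.norm_sub_le x y
    exact this.trans (by gcongr)
  have hdiff : ∀ x, HasFDerivAt F (fderiv ℝ F x) x := fun x =>
    (hF.differentiable (by simp) x).hasFDerivAt
  refine ⟨G, F a, K, hpos a (mem_sphere_zero_iff_norm.1 ha), hK1, ?_, ?_, ?_, ?_, ?_, ?_⟩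
  · intro x hx; exact hamin (mem_sphere_zero_iff_norm.2 hx)
  · intro x hx; exact (hbmax (mem_sphere_zero_iff_norm.2 hx) : F x ≤ F b).trans hKb
  · intro x
    simp only [G]
    rw [LinearIsometryEquiv.norm_map]
    exact (hC1 x).trans hKC1
  · intro x y
    simp only [G]
    rw [← map_sub, LinearIsometryEquiv.norm_map]
    exact hlip x y
  · intro x y
    rw [hGin, ← Real.norm_eq_abs]
    have := (convex_segment x y).norm_image_sub_le_of_norm_hasFDerivWithin_le' (𝕜 := ℝ) (f := F)
      (f' := fderiv ℝ F) (φ := fderiv ℝ F x) (C := K * ‖y - x‖)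
      (fun z _ => (hdiff z).hasFDerivWithinAt) (fun z hz => by
        refine (hlip z x).trans ?_
        gcongr
        exact norm_sub_le_of_mem_segment hz)
      (left_mem_segment ℝ x y) (right_mem_segment ℝ x y)
    rw [sq, ← mul_assoc]
    exact this
  · intro x
    refine (hdiff x).congr_fderiv ?_
    ext y
    rw [innerSL_apply_apply, hGin]

lemma exists_phiData (k : E3 → ℝ) (hk : ContDiff ℝ (⊤ : ℕ∞) k) (hs : HasCompactSupport k)
    (t : ℝ) (hpos : ∀ x, ‖x‖ = 1 → 0 < 1 + t * k x)
    (h0 : ∀ u : Sph, lineInt (fun x => k x) u = 0) :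
    ∃ m0 Lφ, PhiData (fun x => 1 + t * k x) m0 Lφ := by
  have hne : (Metric.sphere (0 : E3) 1).Nonempty := ⟨EuclideanSpace.single 0 1, by simp⟩
  have hc := hk.continuous
  have hc' : Continuous fun x => 1 + t * k x := by fun_prop
  obtain ⟨a, ha, hamin⟩ := (isCompact_sphere (0 : E3) 1).exists_isMinOn hne hc'.continuousOn
  obtain ⟨C, hC⟩ := ContDiff.lipschitzWith_of_hasCompactSupport hs hk (by simp)
  refine ⟨1 + t * k a, |t| * C, hpos a (mem_sphere_zero_iff_norm.1 ha), by positivity, ?_, ?_, ?_⟩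
  · intro x hx; exact hamin (mem_sphere_zero_iff_norm.2 hx)
  · intro x y
    have := hC.norm_sub_le x y
    rw [Real.norm_eq_abs] at this
    rw [show 1 + t * k x - (1 + t * k y) = t * (k x - k y) by ring, abs_mul, mul_assoc]
    gcongr
  · intro r
    have hgr : Continuous (fun θ => gam r θ) := by
      simp only [← gam_eq_gm]
      exact continuous_subtype_val.comp (frame_gam r).lip.continuous
    have hg : Continuous fun θ => k (gam r θ) := hc.comp hgr
    rw [intervalIntegral.integral_add (by simp) ((hg.const_mul t).intervalIntegrable _ _),
      intervalIntegral.integral_const_mul, int_gam k hc r h0]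
    simp

theorem main (f : Sph → ℝ) (hf : SmoothSph f)
    (t : ℝ) (hdef : ∀ x, 0 < 1 + t * f x) (hcirc : ∀ u : Sph, lineInt f u = 0) :
      (∀ u : Sph, circleLen (fun x => (1 + t * f x) ^ 2) u 0 = 2 * π) ∧
      (∃ (c : ℝ → Sph) (L : ℝ),
        IsClosedGeodesic (confMetric fun x => (1 + t * f x) ^ 2) c L ∧ L ≤ 2 * π) ∧
      systole (confMetric fun x => (1 + t * f x) ^ 2) ≤ 2 * π := by
  obtain ⟨k, hk, hs, hkf⟩ := smooth_ext f hf
  have hfk : f = fun x : Sph => k x := funext fun x => (hkf x).symm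
  have hfc : Continuous f := by rw [hfk]; exact hk.continuous.comp continuous_subtype_val
  have hpos : ∀ x, ‖x‖ = 1 → 0 < 1 + t * k x := fun x hx => by
    have := hdef ⟨x, mem_sphere_zero_iff_norm.2 hx⟩
    rwa [← hkf] at this
  obtain ⟨m0, Lφ, hphi⟩ := exists_phiData k hk hs t hpos (by rw [← hfk]; exact hcirc)
  obtain ⟨G, m, K, hG⟩ := exists_goodF (fun x => (1 + t * k x) ^ 2)
    ((contDiff_const.add (contDiff_const.mul hk)).pow 2) (by
      refine HasCompactSupport.intro hs.isCompact fun x hx => ?_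
      rw [image_eq_zero_of_notMem_tsupport hx]
      ring) (fun x hx => by have := hpos x hx; positivity)
  obtain ⟨c, L, hc, hL⟩ := closed_geod hG hphi (fun x _ => rfl)
    (fun x => (1 + t * f x) ^ 2) (fun x => by simp only [hkf])
  exact ⟨fun u => circleLen_eq f hfc t hdef u (hcirc u), ⟨c, L, hc, hL⟩, (systole_le hc).trans hL⟩

end

/-- If `f` has mean zero, `g_t = (1+tf)²·g₀` is defined for `|t| < a`, and
`∫_{γ(u)} f dl = 0` for every `u`, then for every `|t| < a` all great circles have
`g_t`-length `2π`, there is a closed geodesic of `g_t` of length at most `2π`, and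
`sys(S², g_t) ≤ 2π`. -/
theorem systole_le_of_balanced_circles (f : Sph → ℝ) (hf : SmoothSph f)
    (hmean : ∫ x, f x ∂(μH[2] : Measure Sph) = 0)
    (a : ℝ) (ha : 0 < a)
    (hdef : ∀ t : ℝ, |t| < a → ∀ x, 0 < 1 + t * f x)
    (hcirc : ∀ u : Sph, lineInt f u = 0) :
    ∀ t : ℝ, |t| < a →
      (∀ u : Sph, circleLen (fun x => (1 + t * f x) ^ 2) u 0 = 2 * π) ∧
      (∃ (c : ℝ → Sph) (L : ℝ),
        IsClosedGeodesic (confMetric fun x => (1 + t * f x) ^ 2) c L ∧ L ≤ 2 * π) ∧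
      systole (confMetric fun x => (1 + t * f x) ^ 2) ≤ 2 * π := by
  intro t ht
  exact main f hf t (hdef t ht) hcirc

end
end

section
/- Let f : S² → ℝ be a smooth function with ∫_{S²} f dv_{g₀} = 0, let g_t = (1+tf)²·g₀ be defined for |t| < a, and suppose there exists u₀ ∈ S² with ∫_{γ(u₀)} f dl < 0. Then there exists α₀ ∈ (0,a) such that for every t ∈ (0,α₀) and every s ∈ [-1,1], the g_t-length of the circle γ(u₀,s) is strictly less than 2π. -/
open scoped Manifold RealInnerProductSpace
open MeasureTheory Real

noncomputable section

lemma norm_comb_sq {b c : E3} (hb : ‖b‖ = 1) (hc : ‖c‖ = 1) (h : ⟪b, c⟫ = (0 : ℝ)) (p q : ℝ) :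
    ‖p • b + q • c‖ ^ 2 = p ^ 2 + q ^ 2 := by
  rw [norm_add_sq_real, norm_smul, norm_smul, inner_smul_left, inner_smul_right, hb, hc, h]
  simp

lemma exists_pair (u : Sph) : ∃ b c : E3, ‖b‖ = 1 ∧ ‖c‖ = 1 ∧ ⟪b, c⟫ = (0 : ℝ) ∧
    ⟪(u : E3), b⟫ = (0 : ℝ) ∧ ⟪(u : E3), c⟫ = (0 : ℝ) ∧
    ∀ x : E3, ⟪(u : E3), x⟫ = (0 : ℝ) → ∃ p q : ℝ, x = p • b + q • c := by
  have hu : (u : E3) ≠ 0 := by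
    intro h
    have h1 : ‖(u : E3)‖ = 1 := mem_sphere_zero_iff_norm.1 u.2
    rw [h] at h1; simp at h1
  have hfin : Module.finrank ℝ (Submodule.span ℝ {(u : E3)})ᗮ = 2 :=
    Submodule.finrank_orthogonal_span_singleton hu
  let B := (stdOrthonormalBasis ℝ (Submodule.span ℝ {(u : E3)})ᗮ).reindex (finCongr hfin)
  refine ⟨B 0, B 1, ?_, ?_, ?_, ?_, ?_, ?_⟩
  · exact B.orthonormal.1 0
  · exact B.orthonormal.1 1
  · exact B.orthonormal.2 (by decide : (0 : Fin 2) ≠ 1)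
  · exact Submodule.mem_orthogonal_singleton_iff_inner_right.1 (B 0).2
  · exact Submodule.mem_orthogonal_singleton_iff_inner_right.1 (B 1).2
  · intro x hx
    have h := B.sum_repr' ⟨x, Submodule.mem_orthogonal_singleton_iff_inner_right.2 hx⟩
    rw [Fin.sum_univ_two] at h
    refine ⟨_, _, (congrArg Subtype.val h).symm⟩

/-- A Lipschitz parametrization of the great circle. -/
lemma exists_param (u : Sph) : ∃ e : ℝ → greatCircle u, LipschitzWith 1 e ∧
    e '' (Set.Icc (-π) π) = Set.univ := by
  obtain ⟨b, c, hb, hc, hbc, hub, huc, hspan⟩ := exists_pair u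
  have hn : ∀ θ : ℝ, ‖cos θ • b + sin θ • c‖ = 1 := by
    intro θ
    have h := norm_comb_sq hb hc hbc (cos θ) (sin θ)
    rw [cos_sq_add_sin_sq] at h
    exact (pow_eq_one_iff_of_nonneg (norm_nonneg _) two_ne_zero).1 h
  have hm : ∀ θ : ℝ, (⟨cos θ • b + sin θ • c, mem_sphere_zero_iff_norm.2 (hn θ)⟩ : Sph)
      ∈ greatCircle u := by
    intro θ
    change ⟪(u : E3), cos θ • b + sin θ • c⟫ = (0 : ℝ)
    rw [inner_add_right, inner_smul_right, inner_smul_right, hub, huc]; simp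
  refine ⟨fun θ => ⟨_, hm θ⟩, ?_, ?_⟩
  · apply LipschitzWith.of_dist_le_mul
    intro x y
    change dist (cos x • b + sin x • c) (cos y • b + sin y • c) ≤ _
    rw [dist_eq_norm, Real.dist_eq]
    have h1 : cos x • b + sin x • c - (cos y • b + sin y • c)
        = (cos x - cos y) • b + (sin x - sin y) • c := by module
    rw [h1, NNReal.coe_one, one_mul]
    apply le_of_sq_le_sq _ (abs_nonneg _)
    rw [norm_comb_sq hb hc hbc, sq_abs]
    have h2 := @Real.one_sub_sq_div_two_le_cos (x - y)
    rw [cos_sub] at h2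
    nlinarith [cos_sq_add_sin_sq x, cos_sq_add_sin_sq y]
  · rw [Set.eq_univ_iff_forall]
    rintro ⟨⟨x, hx⟩, hxu⟩
    obtain ⟨p, q, rfl⟩ := hspan x hxu
    have h1 : p ^ 2 + q ^ 2 = 1 := by
      rw [← norm_comb_sq hb hc hbc, mem_sphere_zero_iff_norm.1 hx]; norm_num
    have hz : ‖(⟨p, q⟩ : ℂ)‖ = 1 := by
      rw [Complex.norm_eq_sqrt_sq_add_sq, h1, Real.sqrt_one]
    have hz0 : (⟨p, q⟩ : ℂ) ≠ 0 := by
      intro h; rw [h] at hz; simp at hz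
    refine ⟨Complex.arg ⟨p, q⟩, ⟨(Complex.neg_pi_lt_arg _).le, Complex.arg_le_pi _⟩, ?_⟩
    apply Subtype.ext
    apply Subtype.ext
    change cos _ • b + sin _ • c = _
    rw [Complex.cos_arg hz0, Complex.sin_arg, hz]
    simp

lemma hausdorff_great_le (u : Sph) :
    (μH[1] : Measure (greatCircle u)) Set.univ ≤ ENNReal.ofReal (2 * π) := by
  obtain ⟨e, he, hs⟩ := exists_param u
  rw [← hs]
  refine (he.hausdorffMeasure_image_le zero_le_one _).trans ?_
  rw [hausdorffMeasure_real, Real.volume_Icc, sub_neg_eq_add, ← two_mul]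
  simp

/-- The similarity from the great circle to the parallel circle at height `sin τ`. -/
def par (u : Sph) (τ : ℝ) (x : greatCircle u) : Sph :=
  ⟨cos τ • (x.1 : E3) + sin τ • (u : E3), by
    rw [mem_sphere_zero_iff_norm]
    have hx : ⟪(u : E3), (x.1 : E3)⟫ = (0 : ℝ) := x.2
    have h := norm_comb_sq (mem_sphere_zero_iff_norm.1 x.1.2) (mem_sphere_zero_iff_norm.1 u.2)
      (by rw [real_inner_comm]; exact hx) (cos τ) (sin τ)
    rw [cos_sq_add_sin_sq] at h
    exact (pow_eq_one_iff_of_nonneg (norm_nonneg _) two_ne_zero).1 h⟩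

lemma par_continuous (u : Sph) : Continuous (fun z : ℝ × greatCircle u => par u z.1 z.2) := by
  apply Continuous.subtype_mk
  fun_prop

lemma par_cont_right (u : Sph) (τ : ℝ) : Continuous (par u τ) := by
  apply Continuous.subtype_mk
  fun_prop

lemma par_cont_left (u : Sph) (x : greatCircle u) : Continuous (fun τ : ℝ => par u τ x) := by
  apply Continuous.subtype_mk
  fun_prop

lemma par_zero (u : Sph) (x : greatCircle u) : par u 0 x = x.1 := by
  apply Subtype.ext
  simp [par]

lemma par_lip (u : Sph) (τ : ℝ) (h : 0 ≤ cos τ) : LipschitzWith (Real.toNNReal (cos τ)) (par u τ) := by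
  apply LipschitzWith.of_dist_le_mul
  intro x y
  change dist (cos τ • (x.1 : E3) + sin τ • (u : E3)) (cos τ • (y.1 : E3) + sin τ • (u : E3)) ≤
    _ * dist (x.1 : E3) (y.1 : E3)
  rw [dist_add_right, dist_smul₀, Real.coe_toNNReal _ h, Real.norm_of_nonneg h]

lemma par_surj (u : Sph) (τ : ℝ) (h : 0 ≤ cos τ) :
    circleAt u (sin τ) ⊆ Set.range (par u τ) := by
  intro x hx
  have hx : ⟪(u : E3), (x : E3)⟫ = sin τ := hx
  have hu1 : ‖(u : E3)‖ = 1 := mem_sphere_zero_iff_norm.1 u.2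
  have hx1 : ‖(x : E3)‖ = 1 := mem_sphere_zero_iff_norm.1 x.2
  have hy : ‖(x : E3) - sin τ • (u : E3)‖ ^ 2 = cos τ ^ 2 := by
    rw [norm_sub_sq_real, norm_smul, inner_smul_right, real_inner_comm, hx, hu1, hx1, mul_one,
      Real.norm_eq_abs, sq_abs]
    linarith [cos_sq_add_sin_sq τ]
  have hy' : ‖(x : E3) - sin τ • (u : E3)‖ = cos τ := by
    exact (pow_left_inj₀ (norm_nonneg _) h two_ne_zero).1 hy
  rcases h.eq_or_lt with h0 | h0
  · obtain ⟨e, -, -⟩ := exists_param u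
    refine ⟨e 0, Subtype.ext ?_⟩
    rw [← h0, norm_eq_zero, sub_eq_zero] at hy'
    change cos τ • _ + sin τ • (u : E3) = x
    rw [← h0, zero_smul, zero_add, hy']
  · refine ⟨⟨⟨(cos τ)⁻¹ • ((x : E3) - sin τ • (u : E3)), ?_⟩, ?_⟩, ?_⟩
    · rw [mem_sphere_zero_iff_norm, norm_smul, hy', norm_inv, Real.norm_of_nonneg h]
      exact inv_mul_cancel₀ h0.ne'
    · change ⟪(u : E3), (cos τ)⁻¹ • ((x : E3) - sin τ • (u : E3))⟫ = (0 : ℝ)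
      rw [inner_smul_right, inner_sub_right, inner_smul_right, hx, real_inner_self_eq_norm_sq, hu1]
      simp
    · apply Subtype.ext
      change cos τ • (cos τ)⁻¹ • ((x : E3) - sin τ • (u : E3)) + sin τ • (u : E3) = x
      rw [smul_inv_smul₀ h0.ne', sub_add_cancel]

lemma measure_par_le (u : Sph) (τ : ℝ) (h : 0 ≤ cos τ) :
    (μH[1] : Measure Sph).restrict (circleAt u (sin τ)) ≤
      Real.toNNReal (cos τ) • (μH[1] : Measure (greatCircle u)).map (par u τ) := by
  rw [Measure.le_iff]
  intro A hA
  have hm : Measurable (par u τ) := (par_lip u τ h).continuous.measurable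
  rw [Measure.restrict_apply hA, Measure.smul_apply, Measure.map_apply hm hA]
  have h1 := (par_lip u τ h).hausdorffMeasure_image_le zero_le_one (par u τ ⁻¹' A)
  rw [ENNReal.rpow_one] at h1
  refine le_trans (measure_mono ?_) h1
  rintro x ⟨hxA, hxc⟩
  obtain ⟨y, rfl⟩ := par_surj u τ h hxc
  exact ⟨y, hxA, rfl⟩

lemma circle_integral_le (u : Sph) (τ : ℝ) (h : 0 ≤ cos τ) (k : Sph → ℝ) (hk : Continuous k)
    (hpos : ∀ x, 0 ≤ k x) :
    ∫ x in circleAt u (sin τ), k x ∂(μH[1] : Measure Sph) ≤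
      cos τ * ∫ x, k (par u τ x) ∂(μH[1] : Measure (greatCircle u)) := by
  have hfin : IsFiniteMeasure (μH[1] : Measure (greatCircle u)) :=
    ⟨(hausdorff_great_le u).trans_lt ENNReal.ofReal_lt_top⟩
  have hm : Measurable (par u τ) := (par_lip u τ h).continuous.measurable
  refine (integral_mono_measure (measure_par_le u τ h) (Filter.Eventually.of_forall hpos) ?_).trans ?_
  · exact hk.integrable_of_hasCompactSupport (HasCompactSupport.of_compactSpace k)
  · rw [integral_smul_nnreal_measure, integral_map hm.aemeasurable hk.aestronglyMeasurable,
      NNReal.smul_def, Real.coe_toNNReal _ h, smul_eq_mul]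

lemma lineInt_eq (f : Sph → ℝ) (hf : Continuous f) (u : Sph) :
    lineInt f u = ∫ x, f (par u 0 x) ∂(μH[1] : Measure (greatCircle u)) := by
  simp_rw [par_zero]
  have h := (isometry_subtype_coe (s := greatCircle u)).map_hausdorffMeasure
    (d := 1) (Or.inl zero_le_one)
  rw [Subtype.range_coe] at h
  rw [lineInt, ← h, integral_map measurable_subtype_coe.aemeasurable hf.aestronglyMeasurable]


/-- If `f` has mean zero, `g_t = (1+tf)²·g₀` is defined for `|t| < a` and
`∫_{γ(u₀)} f dl < 0`, then there is `α₀ ∈ (0, a)` such that for all `t ∈ (0, α₀)` and all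
`s ∈ [-1, 1]`, the `g_t`-length of `γ(u₀, s)` is `< 2π`. -/
theorem circles_short_for_positive_t (f : Sph → ℝ) (hf : SmoothSph f)
    (hmean : ∫ x, f x ∂(μH[2] : Measure Sph) = 0)
    (a : ℝ) (ha : 0 < a)
    (hdef : ∀ t : ℝ, |t| < a → ∀ x, 0 < 1 + t * f x)
    (u₀ : Sph) (hneg : lineInt f u₀ < 0) :
    ∃ α₀ : ℝ, 0 < α₀ ∧ α₀ < a ∧ ∀ t : ℝ, 0 < t → t < α₀ →
      ∀ s ∈ Set.Icc (-1 : ℝ) 1,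
        circleLen (fun x => (1 + t * f x) ^ 2) u₀ s < 2 * π := by
  have hfc : Continuous f := ContMDiff.continuous hf
  have hfin : IsFiniteMeasure (μH[1] : Measure (greatCircle u₀)) :=
    ⟨(hausdorff_great_le u₀).trans_lt ENNReal.ofReal_lt_top⟩
  obtain ⟨C, hC⟩ := isCompact_univ.exists_bound_of_continuousOn (f := f) hfc.continuousOn
  have hC : ∀ x, |f x| ≤ C := fun x => hC x trivial
  have hC0 : 0 ≤ C := (abs_nonneg _).trans (hC u₀)
  obtain ⟨ν, hν⟩ : ∃ ν : Measure (greatCircle u₀), ν = μH[1] := ⟨_, rfl⟩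
  rw [← hν] at hfin
  obtain ⟨M, hM⟩ : ∃ M : ℝ, M = ν.real Set.univ := ⟨_, rfl⟩
  have hM0 : 0 ≤ M := hM ▸ measureReal_nonneg
  have hM2 : M ≤ 2 * π := by
    rw [hM, hν]
    exact ENNReal.toReal_le_of_le_ofReal (by positivity) (hausdorff_great_le u₀)
  let G : ℝ → ℝ := fun τ => ∫ x, f (par u₀ τ x) ∂ν
  have hfint : ∀ τ, Integrable (fun x => f (par u₀ τ x)) ν := fun τ =>
    Integrable.of_bound (hfc.comp (par_cont_right u₀ τ)).aestronglyMeasurable C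
      (Filter.Eventually.of_forall fun x => hC _)
  have hG : Continuous G := by
    refine continuous_of_dominated (bound := fun _ => C) (fun τ => (hfint τ).1)
      (fun τ => Filter.Eventually.of_forall fun x => hC _) (integrable_const C)
      (Filter.Eventually.of_forall fun x => ?_)
    exact hfc.comp (par_cont_left u₀ x)
  have hGC : ∀ τ, G τ ≤ C * M := by
    intro τ
    have h1 : G τ ≤ ∫ _x, C ∂ν :=
      integral_mono (hfint τ) (integrable_const C) fun x => (le_abs_self _).trans (hC _)
    rw [integral_const, smul_eq_mul, mul_comm, ← hM] at h1
    exact h1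
  have hG0 : G 0 < 0 := by
    rw [lineInt_eq f hfc u₀, ← hν] at hneg
    exact hneg
  obtain ⟨δ', hδ', hball⟩ := Metric.eventually_nhds_iff.1 (hG.continuousAt.eventually_lt_const hG0)
  obtain ⟨δ, hδ⟩ : ∃ δ : ℝ, δ = min δ' 1 := ⟨_, rfl⟩
  have hδ0 : 0 < δ := hδ ▸ lt_min hδ' one_pos
  have hδ1 : δ ≤ 1 := hδ ▸ min_le_right _ _
  have hcosδ : cos δ < 1 := by
    rw [← cos_zero]
    exact cos_lt_cos_of_nonneg_of_le_pi le_rfl (by linarith [Real.pi_gt_three]) hδ0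
  have hcosδ0 : 0 ≤ cos δ :=
    cos_nonneg_of_mem_Icc ⟨by linarith [Real.pi_gt_three], by linarith [Real.pi_gt_three]⟩
  have hpos : 0 < (1 - cos δ) / (C + 1) := by
    apply div_pos <;> linarith
  refine ⟨min (a / 2) ((1 - cos δ) / (C + 1)), lt_min (by linarith) hpos,
    (min_le_left _ _).trans_lt (by linarith), ?_⟩
  intro t ht0 ht s hs
  have hta : |t| < a := by
    rw [abs_of_pos ht0]
    linarith [ht.trans_le (min_le_left _ _)]
  have htC : t * (C + 1) < 1 - cos δ :=
    (lt_div_iff₀ (by linarith)).1 (ht.trans_le (min_le_right _ _))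
  have hh := hdef t hta
  let τ := arcsin s
  have hsτ : sin τ = s := sin_arcsin hs.1 hs.2
  have hc0 : 0 ≤ cos τ := cos_arcsin_nonneg s
  have hc1 : cos τ ≤ 1 := cos_le_one τ
  have hτpi : |τ| ≤ π / 2 := abs_le.2 ⟨neg_pi_div_two_le_arcsin s, arcsin_le_pi_div_two s⟩
  have key : circleLen (fun x => (1 + t * f x) ^ 2) u₀ s ≤ cos τ * (M + t * G τ) := by
    have h1 := circle_integral_le u₀ τ hc0 (fun x => 1 + t * f x) (by fun_prop)
      (fun x => (hh x).le)
    rw [← hν, integral_add (integrable_const _) ((hfint τ).const_mul t), integral_const_mul,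
      integral_const, smul_eq_mul, mul_one, hsτ, ← hM] at h1
    have h2 : circleLen (fun x => (1 + t * f x) ^ 2) u₀ s =
        ∫ x in circleAt u₀ s, (1 + t * f x) ∂(μH[1] : Measure Sph) := by
      unfold circleLen
      congr 1
      funext x
      exact Real.sqrt_sq (hh x).le
    rw [h2]
    exact h1
  refine key.trans_lt ?_
  rcases lt_or_ge |τ| δ with hlt | hge
  · have hGτ : G τ < 0 := by
      apply hball
      rw [Real.dist_eq, sub_zero]
      exact hlt.trans_le (hδ ▸ min_le_left _ _)
    have hcp : 0 < cos τ := by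
      rw [← cos_abs]
      exact cos_pos_of_mem_Ioo ⟨by linarith [abs_nonneg τ, Real.pi_gt_three],
        by linarith [Real.pi_gt_three]⟩
    have h1 : cos τ * (t * G τ) < 0 := mul_neg_of_pos_of_neg hcp (mul_neg_of_pos_of_neg ht0 hGτ)
    have h2 : cos τ * M ≤ M := mul_le_of_le_one_left hM0 hc1
    linarith
  · have hcle : cos τ ≤ cos δ := by
      rw [← cos_abs τ]
      exact cos_le_cos_of_nonneg_of_le_pi hδ0.le (by linarith [Real.pi_gt_three]) hge
    have h1 : M + t * G τ ≤ 2 * π * (1 + t * C) := by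
      have h3 : t * G τ ≤ t * (C * M) := mul_le_mul_of_nonneg_left (hGC τ) ht0.le
      have h4 : M * (1 + t * C) ≤ 2 * π * (1 + t * C) :=
        mul_le_mul_of_nonneg_right hM2 (by positivity)
      linarith
    have h2 : cos τ * (M + t * G τ) ≤ cos δ * (2 * π * (1 + t * C)) :=
      (mul_le_mul_of_nonneg_left h1 hc0).trans
        (mul_le_mul_of_nonneg_right hcle (by positivity))
    have h5 : cos δ * (1 + t * C) < 1 := by
      have : cos δ * (t * C) ≤ t * C := mul_le_of_le_one_left (by positivity) hcosδ.le
      nlinarith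
    nlinarith [Real.pi_pos]


end
end
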